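/- arXiv:1609.01058 — 2 statements merged into one kernel-verified Lean document; each statement's English description precedes it below -/
import Mathlib

section
/- Let χ be a primitive Dirichlet character modulo q₀ ≥ 1, let 0 < λ < 1 be irrational, and let m, k be integers with 1 ≤ m ≤ k and gcd(m,k) = 1. Then for every η > 0, the Dirichlet series ∑_{n ≥ 1, n ≡ m (mod k)} χ(n)e(λn)n^{−s} has infinitely many zeros s with 1 < Re s < 1 + η. In particular (taking χ the trivial character mod 1), the series ∑_{n ≥ 1, n ≡ m (mod k)} e(λn)n^{−s} has infinitely many zeros in every such strip. -/
/-!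
For completely multiplicative `ω` with `|ω| ≤ 1` put `G a ω s = ∑ a(n) ω(n) n⁻ˢ`, where
`a(n) = χ(n) e(λn)` on the class `m mod k` and `a(n) = 0` elsewhere. Suppose that `G a 1` has only
finitely many zeros in `1 < Re s < 1 + η`.

*Transfer.* By Kronecker's theorem the twists `n ↦ n⁻ⁱᵗ`, `t → ∞`, approximate every unimodular `ω`;
a zero of `G a ω` on the real segment would produce, by Hurwitz's principle, zeros of `G a 1` with
arbitrarily large imaginary part. So `G a ω σ ≠ 0` for all unimodular `ω` and `1 < σ < 1 + η`
(`torus_ne_zero`). The minimum modulus principle on analytic discs in the space of twists and a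
connectedness argument in `σ` extend this to all `ω` that are unimodular up to some `y` and
bounded by `1` beyond it (`polydisc_ne_zero`). Of the coefficients this uses only `|a(n)| ≤ 1`
and `a ≠ 0`; the oscillation of `e(λn)` enters below.

*Contradiction.* Take disjoint finite sets `U`, `V` of primes `p ≡ m mod k` beyond `y`, let `ω`
vanish at the primes beyond `y` outside `U ∪ V`, and multiply `ω` by `z` on `U` and by `w` on `V`.
This makes `G a ω σ` a holomorphic function `h` of `(z, w)` without zeros in the bidisc. Since
`log |h|` is bounded above by `log ∏ (1 - 1/p)⁻¹ ≤ O(1) + 2 (S_U + S_V)`, where `S_U` and `S_V` are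
the sums of `1/p` over `U` and `V`, the Borel-Carathéodory theorem bounds the second coefficients
of `log h` on the lines `w = ± z`, hence (`mixed_bound`) with the Taylor coefficients of `h`
`|h₁₀ h₀₁| ≤ C |h₁₁| + O(S_U + S_V + 1)`, the constants depending only on `y`.
* By the maximum principle in the common value `u` of `ω` at the primes up to `y`, compared with the
  explicit value at `u = 0`, one can arrange `|h₁₀ h₀₁| ≥ S_U S_V / 4` (`exists_large_linear`).
* The coefficient `h₁₁` is a combination of bilinear sums of `e(λ d p r)` over `p ∈ U`, `r ∈ V`.
  As `λ` is irrational, these are small for suitably chosen `U` and `V` by the Cauchy-Schwarz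
  (type II) estimate, with `S_U` and `S_V` as large as desired by Mertens' theorem in arithmetic
  progressions (`exists_prime_sets`). So `|h₁₁|` is at most a small constant times `S_U S_V`, up
  to `O(1)` (`norm_mixed_le`).

The product `S_U S_V` is then bounded linearly in `S_U` and `S_V`, which fails for large sums.
-/

/-- `e(z) = exp(2πiz)` for real `z`. -/
noncomputable def eTwist (x : ℝ) : ℂ := Complex.exp (2 * Real.pi * Complex.I * x)

namespace TZ

open Filter Topology

/-! ### Twisted Dirichlet series -/

/-- The completely multiplicative function with prescribed values `ω p` at the primes `p`
(the values of `ω` at non-primes play no role). -/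
noncomputable def mext (ω : ℕ → ℂ) (n : ℕ) : ℂ := n.factorization.prod fun p e => ω p ^ e

/-- The Dirichlet series `∑ a(n) ω(n) n⁻ˢ`, where `ω` is extended completely multiplicatively. -/
@[irreducible] noncomputable def G (a : ℕ → ℂ) (ω : ℕ → ℂ) (s : ℂ) : ℂ :=
  ∑' n : ℕ, a n * mext ω n / (n : ℂ) ^ s


lemma mext_one (ω : ℕ → ℂ) : mext ω 1 = 1 := by simp [mext]

lemma mext_mul (ω : ℕ → ℂ) {m n : ℕ} (hm : m ≠ 0) (hn : n ≠ 0) :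
    mext ω (m * n) = mext ω m * mext ω n := by
  unfold mext
  rw [Nat.factorization_mul hm hn]
  exact Finsupp.prod_add_index' (fun _ => pow_zero _) (fun _ _ _ => pow_add _ _ _)

lemma mext_prime (ω : ℕ → ℂ) {p : ℕ} (hp : p.Prime) : mext ω p = ω p := by
  simp [mext, hp.factorization]

lemma norm_mext_le {ω : ℕ → ℂ} (h : ∀ p, ‖ω p‖ ≤ 1) (n : ℕ) : ‖mext ω n‖ ≤ 1 := by
  unfold mext Finsupp.prod
  rw [norm_prod]
  refine Finset.prod_le_one (fun _ _ => norm_nonneg _) (fun p _ => ?_)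
  rw [norm_pow]
  exact pow_le_one₀ (norm_nonneg _) (h p)

lemma norm_mext_eq {ω : ℕ → ℂ} (h : ∀ p, ‖ω p‖ = 1) (n : ℕ) : ‖mext ω n‖ = 1 := by
  unfold mext Finsupp.prod
  rw [norm_prod]
  exact Finset.prod_eq_one fun p _ => by rw [norm_pow, h p, one_pow]

lemma continuous_mext (n : ℕ) : Continuous fun ω : ℕ → ℂ => mext ω n := by
  unfold mext Finsupp.prod
  fun_prop

lemma differentiableOn_mext {ω : ℂ → ℕ → ℂ} {U : Set ℂ}
    (h : ∀ p, DifferentiableOn ℂ (fun z => ω z p) U) (n : ℕ) :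
    DifferentiableOn ℂ (fun z => mext (ω z) n) U := by
  unfold mext Finsupp.prod
  exact DifferentiableOn.fun_finsetProd fun p _ => (h p).pow _

lemma mext_congr {ω ω' : ℕ → ℂ} {n : ℕ} (h : ∀ p, p.Prime → p ∣ n → ω p = ω' p) :
    mext ω n = mext ω' n := by
  unfold mext Finsupp.prod
  refine Finset.prod_congr rfl fun p hp => ?_
  rw [Nat.support_factorization] at hp
  exact congrArg (· ^ _) (h p (Nat.prime_of_mem_primeFactors hp) (Nat.dvd_of_mem_primeFactors hp))

lemma mext_eq_of_mult {ω f : ℕ → ℂ} (h1 : f 1 = 1)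
    (hf : ∀ m n, m ≠ 0 → n ≠ 0 → f (m * n) = f m * f n)
    (hp : ∀ p, p.Prime → f p = ω p) {n : ℕ} (hn : n ≠ 0) : mext ω n = f n := by
  induction n using Nat.recOnMul with
  | zero => exact absurd rfl hn
  | one => rw [mext_one, h1]
  | prime p hpp => rw [mext_prime _ hpp, hp p hpp]
  | mul a b ha hb =>
    have ha0 : a ≠ 0 := fun h => hn (by simp [h])
    have hb0 : b ≠ 0 := fun h => hn (by simp [h])
    rw [mext_mul _ ha0 hb0, hf _ _ ha0 hb0, ha ha0, hb hb0]

lemma norm_term_le {a : ℕ → ℂ} (ha : ∀ n, ‖a n‖ ≤ 1) (ha0 : a 0 = 0) {c : ℝ}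
    {s : ℂ} (hs : c ≤ s.re) {x : ℂ} (hx : ‖x‖ ≤ 1) (n : ℕ) :
    ‖a n * x / (n : ℂ) ^ s‖ ≤ 1 / (n : ℝ) ^ c := by
  rcases Nat.eq_zero_or_pos n with rfl | hn
  · simp only [ha0, zero_mul, zero_div, norm_zero]; positivity
  · rw [norm_div, norm_mul, Complex.norm_natCast_cpow_of_pos hn]
    have h1 : (1 : ℝ) ≤ n := by exact_mod_cast hn
    have h2 : (n : ℝ) ^ c ≤ (n : ℝ) ^ s.re := Real.rpow_le_rpow_of_exponent_le h1 hs
    have h3 : 0 < (n : ℝ) ^ c := by positivity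
    gcongr
    exact mul_le_one₀ (ha n) (norm_nonneg _) hx

lemma continuous_term {a : ℕ → ℂ} (ha0 : a 0 = 0) (n : ℕ) :
    Continuous fun x : (ℕ → ℂ) × ℂ => a n * mext x.1 n / (n : ℂ) ^ x.2 := by
  rcases Nat.eq_zero_or_pos n with rfl | hn
  · simp only [ha0, zero_mul, zero_div]; exact continuous_const
  · have hn' : (n : ℂ) ≠ 0 := by exact_mod_cast hn.ne'
    have h1 : Continuous fun x : (ℕ → ℂ) × ℂ => (n : ℂ) ^ x.2 :=
      continuous_snd.const_cpow (Or.inl hn')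
    refine (continuous_const.mul ((continuous_mext n).comp continuous_fst)).div h1 fun x => ?_
    simp [Complex.cpow_eq_zero_iff, hn']

lemma summable_rpow {c : ℝ} (hc : 1 < c) : Summable fun n : ℕ => 1 / (n : ℝ) ^ c :=
  Real.summable_one_div_nat_rpow.mpr hc

/-- Joint continuity of the twisted Dirichlet series in the twist (bounded by `1`, with the product
topology) and the exponent. -/
lemma continuousOn_G {a : ℕ → ℂ} (ha : ∀ n, ‖a n‖ ≤ 1) (ha0 : a 0 = 0) {c : ℝ} (hc : 1 < c) :
    ContinuousOn (fun x : (ℕ → ℂ) × ℂ => G a x.1 x.2)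
      {x | (∀ p, ‖x.1 p‖ ≤ 1) ∧ c ≤ x.2.re} := by
  unfold G
  refine continuousOn_tsum (fun n => (continuous_term ha0 n).continuousOn)
    (summable_rpow hc) fun n x hx => norm_term_le ha ha0 hx.2 (norm_mext_le hx.1 n) n

lemma differentiableOn_term {a : ℕ → ℂ} (ha0 : a 0 = 0) {ω : ℂ → ℕ → ℂ} {S : ℂ → ℂ}
    {U : Set ℂ} (h : ∀ p, DifferentiableOn ℂ (fun z => ω z p) U) (hS : DifferentiableOn ℂ S U)
    (n : ℕ) : DifferentiableOn ℂ (fun z => a n * mext (ω z) n / (n : ℂ) ^ S z) U := by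
  rcases Nat.eq_zero_or_pos n with rfl | hn
  · simp only [ha0, zero_mul, zero_div]; exact differentiableOn_const _
  · have hn' : (n : ℂ) ≠ 0 := by exact_mod_cast hn.ne'
    refine ((differentiableOn_const _).mul (differentiableOn_mext h n)).div
      (hS.const_cpow (Or.inl hn')) fun x _ => ?_
    simp [Complex.cpow_eq_zero_iff, hn']

/-- Holomorphic dependence of the twisted Dirichlet series on a holomorphic family of twists and
exponents. -/
lemma differentiableOn_G {a : ℕ → ℂ} (ha : ∀ n, ‖a n‖ ≤ 1) (ha0 : a 0 = 0) {c : ℝ} (hc : 1 < c)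
    {ω : ℂ → ℕ → ℂ} {S : ℂ → ℂ} {U : Set ℂ} (hU : IsOpen U)
    (h : ∀ p, DifferentiableOn ℂ (fun z => ω z p) U) (hS : DifferentiableOn ℂ S U)
    (hω : ∀ z ∈ U, ∀ p, ‖ω z p‖ ≤ 1) (hSc : ∀ z ∈ U, c ≤ (S z).re) :
    DifferentiableOn ℂ (fun z => G a (ω z) (S z)) U := by
  unfold G
  exact Complex.differentiableOn_tsum_of_summable_norm (summable_rpow hc)
    (fun n => differentiableOn_term ha0 h hS n) hU
    fun n z hz => norm_term_le ha ha0 (hSc z hz) (norm_mext_le (hω z hz) n) n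

/-! ### Kronecker's theorem for logarithms of primes -/

open MeasureTheory in
/-- Haar probability measure on the torus. -/
noncomputable def haarT (d : Type*) [Fintype d] : Measure (UnitAddTorus d) :=
  Measure.pi fun _ => (AddCircle.haarAddCircle : Measure UnitAddCircle)

open MeasureTheory in
instance (d : Type*) [Fintype d] : IsProbabilityMeasure (haarT d) := by
  unfold haarT; infer_instance

open MeasureTheory in
instance (d : Type*) [Fintype d] : Measure.IsOpenPosMeasure (haarT d) := by
  unfold haarT; infer_instance

/-- The linear flow on the torus with velocity `c`. -/
noncomputable def flow {d : Type*} (c : d → ℝ) (t : ℝ) : UnitAddTorus d :=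
  fun i => ((t * c i : ℝ) : UnitAddCircle)

lemma continuous_flow {d : Type*} (c : d → ℝ) : Continuous (flow c) := by
  refine continuous_pi fun i => ?_
  exact (AddCircle.continuous_mk' 1).comp (by fun_prop)

lemma mFourier_flow {d : Type*} [Fintype d] (c : d → ℝ) (n : d → ℤ) (t : ℝ) :
    UnitAddTorus.mFourier n (flow c t) =
      Complex.exp ((2 * Real.pi * Complex.I * (∑ i, n i * c i : ℝ)) * t) := by
  simp only [UnitAddTorus.mFourier, flow, ContinuousMap.coe_mk, fourier_coe_apply]
  rw [← Complex.exp_sum]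
  congr 1
  push_cast
  rw [Finset.mul_sum, Finset.sum_mul]
  refine Finset.sum_congr rfl fun i _ => ?_
  ring

open MeasureTheory in
lemma integral_mFourier {d : Type*} [Fintype d] (n : d → ℤ) :
    ∫ x, UnitAddTorus.mFourier n x ∂(haarT d) = if n = 0 then 1 else 0 := by
  split_ifs with h
  · subst h
    simp [UnitAddTorus.mFourier_zero]
  · obtain ⟨i, hi⟩ := Function.ne_iff.mp h
    simp only [UnitAddTorus.mFourier, ContinuousMap.coe_mk]
    unfold haarT
    rw [MeasureTheory.integral_fintype_prod_eq_prod (𝕜 := ℂ)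
      (f := fun (i : d) (y : UnitAddCircle) => (fourier (n i) y : ℂ))]
    refine Finset.prod_eq_zero (Finset.mem_univ i) ?_
    exact integral_eq_zero_of_add_right_eq_neg (μ := AddCircle.haarAddCircle)
      (fourier_add_half_inv_index hi one_pos)

/-- Time average along the flow up to time `X`. -/
noncomputable def mean {d : Type*} [Fintype d] (c : d → ℝ) (g : C(UnitAddTorus d, ℂ)) (X : ℝ) : ℂ :=
  (X : ℂ)⁻¹ * ∫ t in (0 : ℝ)..X, g (flow c t)

lemma intervalIntegrable_flow {d : Type*} [Fintype d] (c : d → ℝ) (g : C(UnitAddTorus d, ℂ))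
    (a b : ℝ) : IntervalIntegrable (fun t => g (flow c t)) MeasureTheory.volume a b :=
  (g.continuous.comp (continuous_flow c)).intervalIntegrable _ _

lemma mean_mFourier {d : Type*} [Fintype d] (c : d → ℝ)
    (hc : ∀ n : d → ℤ, n ≠ 0 → (∑ i, n i * c i : ℝ) ≠ 0) (n : d → ℤ) :
    Tendsto (mean c (UnitAddTorus.mFourier n)) atTop
      (𝓝 (∫ x, UnitAddTorus.mFourier n x ∂(haarT d))) := by
  rw [integral_mFourier]
  split_ifs with h
  · subst h
    refine tendsto_const_nhds.congr' ?_
    filter_upwards [eventually_gt_atTop 0] with X hX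
    have : (X : ℂ) ≠ 0 := by exact_mod_cast hX.ne'
    simp [mean, UnitAddTorus.mFourier_zero, this]
  · have hn := hc n h
    set b : ℂ := 2 * Real.pi * Complex.I * (∑ i, n i * c i : ℝ) with hb
    have hb0 : b ≠ 0 := by
      rw [hb]
      have : ((∑ i, n i * c i : ℝ) : ℂ) ≠ 0 := by exact_mod_cast hn
      have hpi : (Real.pi : ℂ) ≠ 0 := by exact_mod_cast Real.pi_ne_zero
      exact mul_ne_zero (mul_ne_zero (mul_ne_zero two_ne_zero hpi) Complex.I_ne_zero) this
    rw [tendsto_zero_iff_norm_tendsto_zero]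
    have hlim : Tendsto (fun X : ℝ => (2 / ‖b‖) * X⁻¹) atTop (𝓝 0) := by
      simpa using tendsto_inv_atTop_zero.const_mul (2 / ‖b‖)
    refine squeeze_zero' (Eventually.of_forall fun _ => norm_nonneg _) ?_ hlim
    filter_upwards [eventually_gt_atTop 0] with X hX
    have hbt : ∀ t : ℝ, ‖Complex.exp (b * t)‖ = 1 := by
      intro t
      rw [Complex.norm_exp, hb]
      simp
    have : mean c (UnitAddTorus.mFourier n) X
        = (X : ℂ)⁻¹ * ((Complex.exp (b * X) - Complex.exp (b * (0:ℝ))) / b) := by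
      unfold mean
      rw [← integral_exp_mul_complex hb0]
      simp only [mFourier_flow, ← hb]
    rw [this, norm_mul, norm_inv, norm_div, Complex.norm_real, Real.norm_eq_abs, abs_of_pos hX,
      mul_comm]
    gcongr
    refine (norm_sub_le _ _).trans ?_
    rw [hbt, hbt]; norm_num

lemma norm_mean_sub_le {d : Type*} [Fintype d] (c : d → ℝ) (g h : C(UnitAddTorus d, ℂ)) {X : ℝ}
    (hX : 0 < X) : ‖mean c g X - mean c h X‖ ≤ ‖g - h‖ := by
  unfold mean
  rw [← mul_sub, ← intervalIntegral.integral_sub (intervalIntegrable_flow c g _ _)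
    (intervalIntegrable_flow c h _ _), norm_mul, norm_inv, Complex.norm_real, Real.norm_eq_abs,
    abs_of_pos hX]
  have := intervalIntegral.norm_integral_le_of_norm_le_const (a := 0) (b := X) (C := ‖g - h‖)
    (f := fun t => g (flow c t) - h (flow c t)) fun t _ => (g - h).norm_coe_le_norm _
  rw [sub_zero, abs_of_pos hX] at this
  rw [inv_mul_le_iff₀ hX]
  linarith

/-- Weyl equidistribution of a totally irrational linear flow. -/
lemma mean_tendsto {d : Type*} [Fintype d] (c : d → ℝ)
    (hc : ∀ n : d → ℤ, n ≠ 0 → (∑ i, n i * c i : ℝ) ≠ 0) (g : C(UnitAddTorus d, ℂ)) :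
    Tendsto (mean c g) atTop (𝓝 (∫ x, g x ∂(haarT d))) := by
  have h_int : ∀ g : C(UnitAddTorus d, ℂ), MeasureTheory.Integrable g (haarT d) := fun g =>
    g.continuous.integrable_of_hasCompactSupport (HasCompactSupport.of_compactSpace _)
  have hspan : ∀ P ∈ Submodule.span ℂ (Set.range (UnitAddTorus.mFourier (d := d))),
      Tendsto (mean c P) atTop (𝓝 (∫ x, P x ∂(haarT d))) := by
    intro P hP
    induction hP using Submodule.span_induction with
    | mem x hx => obtain ⟨n, rfl⟩ := hx; exact mean_mFourier c hc n
    | zero =>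
      have e : mean c (0 : C(UnitAddTorus d, ℂ)) = fun _ => 0 := by
        funext X
        simp [mean]
      have e2 : ∫ z, (0 : C(UnitAddTorus d, ℂ)) z ∂(haarT d) = 0 := by simp
      rw [e, e2]
      exact tendsto_const_nhds
    | add x y _ _ hx hy =>
      have e : mean c (x + y) = fun X => mean c x X + mean c y X := by
        funext X
        unfold mean
        rw [← mul_add, ← intervalIntegral.integral_add (intervalIntegrable_flow c x _ _)
          (intervalIntegrable_flow c y _ _)]
        rfl
      have e2 : ∫ z, (x + y) z ∂(haarT d) = ∫ z, x z ∂(haarT d) + ∫ z, y z ∂(haarT d) :=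
        MeasureTheory.integral_add (h_int x) (h_int y)
      rw [e, e2]
      exact hx.add hy
    | smul a x _ hx =>
      have e : mean c (a • x) = fun X => a * mean c x X := by
        funext X
        unfold mean
        simp only [ContinuousMap.smul_apply, smul_eq_mul]
        rw [intervalIntegral.integral_const_mul]
        ring
      have e2 : ∫ z, (a • x) z ∂(haarT d) = a * ∫ z, x z ∂(haarT d) :=
        MeasureTheory.integral_const_mul _ _
      rw [e, e2]
      exact hx.const_mul a
  rw [Metric.tendsto_atTop]
  intro ε hε
  have hg : g ∈ closure (Submodule.span ℂ (Set.range (UnitAddTorus.mFourier (d := d))) :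
      Set C(UnitAddTorus d, ℂ)) := by
    have := UnitAddTorus.span_mFourier_closure_eq_top (d := d)
    rw [← Submodule.topologicalClosure_coe, this]
    trivial
  obtain ⟨P, hP, hgP⟩ := Metric.mem_closure_iff.mp hg (ε / 3) (by positivity)
  obtain ⟨N, hN⟩ := Metric.tendsto_atTop.mp (hspan P hP) (ε / 3) (by positivity)
  refine ⟨max N 1, fun X hX => ?_⟩
  have hX0 : 0 < X := lt_of_lt_of_le one_pos ((le_max_right _ _).trans hX)
  have h1 := norm_mean_sub_le c g P hX0
  rw [dist_eq_norm] at hgP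
  have h2 := hN X ((le_max_left _ _).trans hX)
  have h3 : dist (∫ x, P x ∂(haarT d)) (∫ x, g x ∂(haarT d)) ≤ ‖g - P‖ := by
    rw [dist_eq_norm, ← MeasureTheory.integral_sub (h_int P) (h_int g)]
    have := MeasureTheory.norm_integral_le_of_norm_le_const (μ := haarT d) (C := ‖g - P‖)
      (f := fun a => P a - g a) (Eventually.of_forall fun a => by
        rw [← norm_neg, neg_sub]; exact (g - P).norm_coe_le_norm a)
    simpa using this
  have h4 : dist (mean c g X) (mean c P X) ≤ ‖g - P‖ := by rwa [dist_eq_norm]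
  calc dist (mean c g X) (∫ x, g x ∂(haarT d))
      ≤ dist (mean c g X) (mean c P X) + dist (mean c P X) (∫ x, P x ∂(haarT d))
        + dist (∫ x, P x ∂(haarT d)) (∫ x, g x ∂(haarT d)) := dist_triangle4 _ _ _ _
    _ < ε := by linarith

/-- The logarithms of distinct primes are linearly independent over `ℤ`. -/
lemma log_prime_indep (I : Finset ℕ) (hI : ∀ p ∈ I, p.Prime) (n : I → ℤ) (hn : n ≠ 0) :
    (∑ i, n i * Real.log (i : ℕ)) ≠ 0 := by
  intro h
  apply hn
  have hpos : ∀ i : I, (0 : ℝ) < ((i : ℕ) : ℝ) := fun i => by exact_mod_cast (hI i i.2).pos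
  have h1 : ∏ i : I, (((i : ℕ) : ℝ) ^ (n i)) = 1 := by
    rw [← Real.exp_log (Finset.prod_pos fun i _ => zpow_pos (hpos i) (n i)), Real.log_prod
      (fun i _ => (zpow_pos (hpos i) (n i)).ne')]
    simp only [Real.log_zpow, h, Real.exp_zero]
  have h2 : ∏ i : I, (((i : ℕ) : ℚ) ^ (n i)) = 1 := by
    apply Rat.cast_injective (α := ℝ)
    push_cast
    exact h1
  funext j
  have hj := hI j j.2
  have : Fact (j : ℕ).Prime := ⟨hj⟩
  have hprod : ∀ s : Finset I, padicValRat (j : ℕ) (∏ i ∈ s, (((i : ℕ) : ℚ) ^ (n i)))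
      = ∑ i ∈ s, if i = j then n i else 0 := by
    intro s
    induction s using Finset.induction_on with
    | empty => simp
    | insert i s his ih =>
      have hne : ∀ i : I, ((i : ℕ) : ℚ) ^ (n i) ≠ 0 := fun i =>
        zpow_ne_zero _ (by exact_mod_cast (hI i i.2).ne_zero)
      rw [Finset.prod_insert his, Finset.sum_insert his, padicValRat.mul (hne i)
        (Finset.prod_ne_zero_iff.mpr fun i _ => hne i), ih]
      congr 1
      rw [padicValRat.zpow]
      split_ifs with hij
      · subst hij
        rw [padicValRat.self hj.one_lt, mul_one]
      · rw [padicValRat.of_nat, padicValNat_primes (q := (i : ℕ)) (hq := ⟨hI i i.2⟩)]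
        · simp
        · exact fun h => hij (Subtype.ext h.symm)
  have := hprod Finset.univ
  rw [h2, padicValRat.one] at this
  simpa using this.symm

/-- Kronecker's theorem for the logarithms of the primes. -/
lemma kronecker (I : Finset ℕ) (hI : ∀ p ∈ I, p.Prime) (ω : ℕ → ℂ) (hω : ∀ p, ‖ω p‖ = 1)
    {ε : ℝ} (hε : 0 < ε) (T : ℝ) :
    ∃ t : ℝ, T < t ∧ ∀ p ∈ I, ‖(p : ℂ) ^ (-(t * Complex.I)) - ω p‖ < ε := by
  by_contra! hcon
  set c : I → ℝ := fun i => -(Real.log (i : ℕ)) / (2 * Real.pi) with hc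
  have hcind : ∀ n : I → ℤ, n ≠ 0 → (∑ i, n i * c i : ℝ) ≠ 0 := by
    intro n hn h
    apply log_prime_indep I hI n hn
    have : ∑ i, (n i : ℝ) * c i = -(∑ i, n i * Real.log (i : ℕ)) / (2 * Real.pi) := by
      rw [← Finset.sum_neg_distrib, Finset.sum_div]
      refine Finset.sum_congr rfl fun i _ => ?_
      rw [hc]; ring
    rw [this, div_eq_zero_iff] at h
    rcases h with h | h
    · linarith
    · exact absurd h (by positivity)
  have hflow : ∀ (t : ℝ) (i : I), (fourier 1 (flow c t i) : ℂ)
      = ((i : ℕ) : ℂ) ^ (-(t * Complex.I)) := by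
    intro t i
    have h0 : ((i : ℕ) : ℂ) ≠ 0 := by exact_mod_cast (hI i i.2).ne_zero
    simp only [flow]
    rw [fourier_coe_apply, Complex.cpow_def_of_ne_zero h0, ← Complex.natCast_log]
    congr 1
    simp only [hc]
    have hpi : (Real.pi : ℂ) ≠ 0 := by exact_mod_cast Real.pi_ne_zero
    push_cast
    field_simp
  -- a bump function around the target point
  set gr : UnitAddTorus I → ℝ := fun x => max 0 (ε - ∑ i, ‖(fourier 1 (x i) : ℂ) - ω i‖) with hgr
  have hgrc : Continuous gr := by
    rw [hgr]; fun_prop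
  let g : C(UnitAddTorus I, ℂ) := ⟨fun x => (gr x : ℂ), by fun_prop⟩
  have hzero : ∀ t, T < t → g (flow c t) = 0 := by
    intro t ht
    obtain ⟨p, hp, hpe⟩ := hcon t ht
    have : ε ≤ ∑ i : I, ‖(fourier 1 (flow c t i) : ℂ) - ω i‖ := by
      refine hpe.trans ?_
      rw [← hflow t ⟨p, hp⟩]
      exact Finset.single_le_sum (f := fun i : I => ‖(fourier 1 (flow c t i) : ℂ) - ω i‖)
        (fun _ _ => norm_nonneg _) (Finset.mem_univ (⟨p, hp⟩ : I))
    show ((gr (flow c t) : ℝ) : ℂ) = 0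
    rw [hgr]
    simp only [Complex.ofReal_eq_zero]
    exact max_eq_left (by linarith)
  have hlim0 : Tendsto (mean c g) atTop (𝓝 0) := by
    have hl : Tendsto (fun X : ℝ => (X : ℂ)⁻¹ * ∫ t in (0 : ℝ)..T, g (flow c t)) atTop (𝓝 0) := by
      have h1 : Tendsto (fun X : ℝ => ((X⁻¹ : ℝ) : ℂ)) atTop (𝓝 ((0 : ℝ) : ℂ)) :=
        (Complex.continuous_ofReal.tendsto 0).comp tendsto_inv_atTop_zero
      simpa using h1.mul_const (∫ t in (0 : ℝ)..T, g (flow c t))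
    refine hl.congr' ?_
    filter_upwards [eventually_ge_atTop T] with X hX
    unfold mean
    rw [← intervalIntegral.integral_add_adjacent_intervals (intervalIntegrable_flow c g 0 T)
      (intervalIntegrable_flow c g T X)]
    have : ∫ t in T..X, g (flow c t) = 0 := by
      rw [intervalIntegral.integral_of_le hX]
      exact MeasureTheory.setIntegral_eq_zero_of_forall_eq_zero fun t ht => hzero t ht.1
    rw [this, add_zero]
  have h_int := tendsto_nhds_unique (mean_tendsto c hcind g) hlim0
  have hsurj : ∀ i : I, ∃ y : UnitAddCircle, (fourier 1 y : ℂ) = ω i := by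
    intro i
    refine ⟨((Complex.arg (ω i) / (2 * Real.pi) : ℝ) : UnitAddCircle), ?_⟩
    rw [fourier_coe_apply]
    have hpi : (Real.pi : ℂ) ≠ 0 := by exact_mod_cast Real.pi_ne_zero
    have := Complex.norm_mul_exp_arg_mul_I (ω i)
    rw [hω, Complex.ofReal_one, one_mul] at this
    rw [← this]
    congr 1
    rw [this]
    push_cast
    field_simp
  choose x0 hx0 using hsurj
  have hpos : 0 < ∫ x, gr x ∂(haarT I) := by
    refine hgrc.integral_pos_of_hasCompactSupport_nonneg_nonzero (x := x0)
      (HasCompactSupport.of_compactSpace _) (fun x => le_max_left _ _) ?_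
    have : gr x0 = ε := by
      rw [hgr]
      simp only [hx0, sub_self, norm_zero, Finset.sum_const_zero, sub_zero]
      exact max_eq_right hε.le
    rw [this]; exact hε.ne'
  have : ∫ x, g x ∂(haarT I) = ((∫ x, gr x ∂(haarT I) : ℝ) : ℂ) := integral_ofReal
  rw [this] at h_int
  exact hpos.ne' (by exact_mod_cast h_int)

/-! ### Complex analysis -/

/-- Minimum modulus principle on a disc for a function without zeros there. -/
lemma min_modulus {f : ℂ → ℂ} {c : ℂ} {r δ : ℝ} (hr : 0 < r) (hδ : 0 < δ)
    (hf : DiffContOnCl ℂ f (Metric.ball c r)) (h0 : ∀ z ∈ Metric.ball c r, f z ≠ 0)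
    (hb : ∀ z ∈ Metric.sphere c r, δ ≤ ‖f z‖) : δ ≤ ‖f c‖ := by
  have hne : ∀ z ∈ closure (Metric.ball c r), f z ≠ 0 := by
    intro z hz
    rw [closure_ball c hr.ne', ← Metric.ball_union_sphere] at hz
    rcases hz with hz | hz
    · exact h0 z hz
    · intro h
      have := hb z hz
      rw [h, norm_zero] at this
      linarith
  have hinv : DiffContOnCl ℂ (fun z => (f z)⁻¹) (Metric.ball c r) := hf.inv hne
  have := Complex.norm_le_of_forall_mem_frontier_norm_le (C := δ⁻¹) Metric.isBounded_ball hinv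
    (fun z hz => by
      rw [frontier_ball c hr.ne'] at hz
      rw [norm_inv]
      exact inv_anti₀ hδ (hb z hz)) (z := c) (subset_closure (Metric.mem_ball_self hr))
  rw [norm_inv] at this
  have hc : 0 < ‖f c‖ := norm_pos_iff.mpr (h0 c (Metric.mem_ball_self hr))
  exact (inv_le_inv₀ hc hδ).mp this

/-- A zero-free function on the unit disc has `f = exp g`, and the second Taylor coefficient of
`g` is controlled by `max Re g` (Borel-Carathéodory and Cauchy). -/
lemma second_log_coeff {H : ℂ → ℂ} {M C : ℝ} (hH : DifferentiableOn ℂ H (Metric.ball 0 1))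
    (h0 : ∀ z ∈ Metric.ball (0 : ℂ) 1, H z ≠ 0) (hM : ∀ z ∈ Metric.ball (0 : ℂ) 1, ‖H z‖ ≤ M)
    (hM1 : 1 ≤ M) (hC : ‖H 0‖ ≤ C) :
    ‖H 0 * deriv (deriv H) 0 - (deriv H 0) ^ 2‖ ≤ 16 * (C ^ 2 * (Real.log M + 1) + C) := by
  have hB : IsOpen (Metric.ball (0 : ℂ) 1) := Metric.isOpen_ball
  have m0 : (0 : ℂ) ∈ Metric.ball (0 : ℂ) 1 := Metric.mem_ball_self one_pos
  have hH' : DifferentiableOn ℂ (deriv H) (Metric.ball 0 1) := hH.deriv hB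
  have hquot : DifferentiableOn ℂ (fun z => deriv H z / H z) (Metric.ball 0 1) := hH'.div hH h0
  obtain ⟨g, hg0, hg⟩ := hquot.isExactOn_ball.with_val_at 0 0
  -- `H = H 0 * exp g`
  have hexp : ∀ z ∈ Metric.ball (0 : ℂ) 1, H z = H 0 * Complex.exp (g z) := by
    have hd : ∀ z ∈ Metric.ball (0 : ℂ) 1,
        HasDerivAt (fun z => H z * Complex.exp (-(g z))) 0 z := by
      intro z hz
      have h1 : HasDerivAt H (deriv H z) z :=
        (hH.differentiableAt (hB.mem_nhds hz)).hasDerivAt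
      have h2 := h1.mul (hg z hz).fun_neg.cexp
      refine h2.congr_deriv ?_
      have hz0 := h0 z hz
      have e : H z * (deriv H z / H z) = deriv H z := by field_simp
      linear_combination (-Complex.exp (-(g z))) * e
    intro z hz
    have hc := hB.is_const_of_deriv_eq_zero (convex_ball (0:ℂ) 1).isPreconnected
      (f := fun z => H z * Complex.exp (-(g z)))
      (fun z hz => (hd z hz).differentiableAt.differentiableWithinAt)
      (fun z hz => (hd z hz).deriv) hz m0
    simp only [hg0, neg_zero, Complex.exp_zero, mul_one] at hc
    rw [← hc, mul_assoc, ← Complex.exp_add]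
    simp
  set x := ‖H 0‖ with hx
  have hxpos : 0 < x := norm_pos_iff.mpr (h0 0 m0)
  have hxM : x ≤ M := hM 0 m0
  set L : ℝ := Real.log M - Real.log x + 1 with hL
  have hLpos : 0 < L := by
    have := Real.log_le_log hxpos hxM
    rw [hL]; linarith
  have hgd : DifferentiableOn ℂ g (Metric.ball 0 1) := fun z hz =>
    (hg z hz).differentiableAt.differentiableWithinAt
  have hre : Set.MapsTo g (Metric.ball 0 1) {z | z.re ≤ L} := by
    intro z hz
    have h1 := hM z hz
    rw [hexp z hz, norm_mul, Complex.norm_exp] at h1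
    have h2 : Real.log (x * Real.exp (g z).re) ≤ Real.log M :=
      Real.log_le_log (by positivity) h1
    rw [Real.log_mul hxpos.ne' (Real.exp_pos _).ne', Real.log_exp] at h2
    show (g z).re ≤ L
    rw [hL]; linarith
  have hbd : ∀ z ∈ Metric.sphere (0 : ℂ) (1/2), ‖g z‖ ≤ 2 * L := by
    intro z hz
    have hz' : ‖z‖ = 1/2 := by simpa using hz
    have := Complex.borelCaratheodory_zero hLpos hgd hre one_pos
      (z := z) (by rw [mem_ball_zero_iff, hz']; norm_num) hg0
    rw [hz'] at this
    exact this.trans (le_of_eq (by ring))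
  have hcauchy := Complex.norm_iteratedDeriv_le_of_forall_mem_sphere_norm_le (n := 2)
    (c := (0 : ℂ)) (R := 1/2) (C := 2 * L) (f := g) (by norm_num)
    ((hgd.mono (by
      rw [closure_ball _ (by norm_num)]
      exact Metric.closedBall_subset_ball (by norm_num))).diffContOnCl) hbd
  have hg'' : iteratedDeriv 2 g 0 = deriv (deriv H) 0 / H 0 - (deriv H 0) ^ 2 / (H 0) ^ 2 := by
    rw [iteratedDeriv_succ, iteratedDeriv_one]
    have he : deriv g =ᶠ[nhds 0] fun z => deriv H z / H z := by
      filter_upwards [hB.mem_nhds m0] with z hz using (hg z hz).deriv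
    rw [he.deriv_eq]
    have h1 : HasDerivAt H (deriv H 0) 0 := (hH.differentiableAt (hB.mem_nhds m0)).hasDerivAt
    have h2 : HasDerivAt (deriv H) (deriv (deriv H) 0) 0 :=
      (hH'.differentiableAt (hB.mem_nhds m0)).hasDerivAt
    have hne := h0 0 m0
    rw [(h2.fun_div h1 hne).deriv]
    field_simp
  have hne := h0 0 m0
  have hid : H 0 * deriv (deriv H) 0 - (deriv H 0) ^ 2 = (H 0) ^ 2 * iteratedDeriv 2 g 0 := by
    rw [hg'']; field_simp
  rw [hid, norm_mul, norm_pow, ← hx]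
  have h16 : ‖iteratedDeriv 2 g 0‖ ≤ 16 * L := by
    refine hcauchy.trans (le_of_eq ?_)
    norm_num [Nat.factorial]; ring
  have hlogx : -Real.log x ≤ 1 / x := by
    rw [← Real.log_inv, one_div]
    linarith [Real.log_le_sub_one_of_pos (inv_pos.mpr hxpos)]
  have hlogM : 0 ≤ Real.log M := Real.log_nonneg hM1
  calc x ^ 2 * ‖iteratedDeriv 2 g 0‖ ≤ x ^ 2 * (16 * L) := by gcongr
    _ = 16 * (x ^ 2 * (Real.log M + 1) + x ^ 2 * (-Real.log x)) := by rw [hL]; ring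
    _ ≤ 16 * (x ^ 2 * (Real.log M + 1) + x ^ 2 * (1 / x)) := by gcongr
    _ = 16 * (x ^ 2 * (Real.log M + 1) + x) := by field_simp
    _ ≤ 16 * (C ^ 2 * (Real.log M + 1) + C) := by gcongr

/-! ### Nonvanishing on the torus and on the polydisc -/

lemma norm_G_sub_le {a : ℕ → ℂ} (ha : ∀ n, ‖a n‖ ≤ 1) (ha0 : a 0 = 0) {c : ℝ} (hc : 1 < c)
    {ω ω' : ℕ → ℂ} (hω : ∀ p, ‖ω p‖ ≤ 1) (hω' : ∀ p, ‖ω' p‖ ≤ 1) {s : ℂ} (hs : c ≤ s.re) :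
    ‖G a ω s - G a ω' s‖ ≤ ∑' n : ℕ, ‖mext ω n - mext ω' n‖ / (n : ℝ) ^ c := by
  have h1 : Summable fun n : ℕ => a n * mext ω n / (n : ℂ) ^ s :=
    Summable.of_norm_bounded (summable_rpow hc)
      fun n => norm_term_le ha ha0 hs (norm_mext_le hω n) n
  have h2 : Summable fun n : ℕ => a n * mext ω' n / (n : ℂ) ^ s :=
    Summable.of_norm_bounded (summable_rpow hc)
      fun n => norm_term_le ha ha0 hs (norm_mext_le hω' n) n
  have h3 : Summable fun n : ℕ => ‖mext ω n - mext ω' n‖ / (n : ℝ) ^ c := by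
    refine Summable.of_nonneg_of_le (fun n => by positivity) (fun n => ?_)
      ((summable_rpow hc).mul_left 2)
    rw [mul_one_div]
    gcongr
    exact (norm_sub_le _ _).trans (by linarith [norm_mext_le hω n, norm_mext_le hω' n])
  unfold G
  rw [← h1.tsum_sub h2]
  refine tsum_of_norm_bounded h3.hasSum fun n => ?_
  rcases Nat.eq_zero_or_pos n with rfl | hn
  · simp only [ha0, zero_mul, zero_div, sub_zero, norm_zero]; positivity
  · rw [← sub_div, ← mul_sub, norm_div, norm_mul, Complex.norm_natCast_cpow_of_pos hn]
    have h1 : (1 : ℝ) ≤ n := by exact_mod_cast hn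
    have h2 : (n : ℝ) ^ c ≤ (n : ℝ) ^ s.re := Real.rpow_le_rpow_of_exponent_le h1 hs
    have h3 : 0 < (n : ℝ) ^ c := by positivity
    gcongr
    exact mul_le_of_le_one_left (norm_nonneg _) (ha n)

lemma differentiableOn_G_right {a : ℕ → ℂ} (ha : ∀ n, ‖a n‖ ≤ 1) (ha0 : a 0 = 0)
    {ω : ℕ → ℂ} (hω : ∀ p, ‖ω p‖ ≤ 1) :
    DifferentiableOn ℂ (G a ω) {s | 1 < s.re} := by
  intro s hs
  have hs' : 1 < s.re := hs
  have hU : IsOpen {z : ℂ | (1 + s.re) / 2 < z.re} :=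
    isOpen_lt continuous_const Complex.continuous_re
  have := differentiableOn_G (a := a) ha ha0 (c := (1 + s.re) / 2) (by linarith)
    (ω := fun _ => ω) (S := fun z => z) hU
    (fun p => differentiableOn_const _) differentiableOn_id (fun _ _ => hω) (fun z hz => hz.le)
  exact (this.differentiableAt (hU.mem_nhds (by
    show (1 + s.re) / 2 < s.re
    linarith))).differentiableWithinAt

/-- A twist by a unimodular `ω` of a nonzero coefficient sequence does not vanish identically near
any point. -/
lemma G_not_eventually_zero {a : ℕ → ℂ} (ha : ∀ n, ‖a n‖ ≤ 1) (ha0 : a 0 = 0)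
    (hne : ∃ n, a n ≠ 0) {ω : ℕ → ℂ} (hω : ∀ p, ‖ω p‖ = 1) {s : ℂ} (hs : 1 < s.re)
    (h : ∀ᶠ z in 𝓝 s, G a ω z = 0) : False := by
  have hU : IsOpen {s : ℂ | 1 < s.re} := isOpen_lt continuous_const Complex.continuous_re
  have han : AnalyticOnNhd ℂ (G a ω) {s : ℂ | 1 < s.re} :=
    (differentiableOn_G_right ha ha0 fun p => (hω p).le).analyticOnNhd hU
  have hz : Set.EqOn (G a ω) 0 {s : ℂ | 1 < s.re} :=
    han.eqOn_zero_of_preconnected_of_eventuallyEq_zero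
      (convex_halfSpace_re_gt 1).isPreconnected hs h
  set f : ℕ → ℂ := fun n => a n * mext ω n with hf
  have hG : ∀ z, G a ω z = LSeries f z := by
    intro z
    unfold G LSeries
    refine tsum_congr fun n => ?_
    rw [LSeries.term_def]
    split_ifs with h0
    · simp [h0, ha0]
    · rfl
  have hev : (fun x : ℝ => LSeries f x) =ᶠ[atTop] 0 := by
    filter_upwards [eventually_gt_atTop 1] with x hx
    rw [← hG]
    exact hz (by simpa using hx)
  rw [LSeries_eventually_eq_zero_iff'] at hev
  rcases hev with h0 | h0
  · obtain ⟨n, hn⟩ := hne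
    have hn0 : n ≠ 0 := fun h => hn (h ▸ ha0)
    have h2 := h0 n hn0
    have h1 := norm_mext_eq hω n
    rcases mul_eq_zero.mp h2 with h3 | h3
    · exact hn h3
    · rw [h3, norm_zero] at h1; exact zero_ne_one h1
  · have : LSeries.abscissaOfAbsConv f ≤ (1 : ℝ) := by
      refine LSeries.abscissaOfAbsConv_le_of_forall_lt_LSeriesSummable fun y hy => ?_
      have := Summable.of_norm_bounded (summable_rpow hy) (f := fun n : ℕ =>
        a n * mext ω n / (n : ℂ) ^ (y : ℂ))
        fun n => norm_term_le ha ha0 (by simp) (norm_mext_le (fun p => (hω p).le) n) n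
      refine this.congr fun n => ?_
      rw [LSeries.term_def]
      split_ifs with h0
      · simp [h0, ha0]
      · rfl
    rw [h0] at this
    exact EReal.coe_ne_top _ (top_le_iff.mp this)

lemma mext_vertical {t : ℝ} {ω : ℕ → ℂ}
    (h : ∀ p : ℕ, p.Prime → ω p = (p : ℂ) ^ (-(t * Complex.I))) {n : ℕ} (hn : n ≠ 0) :
    mext ω n = (n : ℂ) ^ (-(t * Complex.I)) :=
  mext_eq_of_mult (f := fun n : ℕ => (n : ℂ) ^ (-(t * Complex.I))) (by simp)
    (fun m n _ _ => by push_cast; exact Complex.natCast_mul_natCast_cpow m n _)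
    (fun p hp => (h p hp).symm) hn

/-- If the untwisted series has only finitely many zeros in the strip `1 < Re s < 1 + η`, then no
unimodular twist of it vanishes on the real segment `(1, 1 + η)`: by Kronecker's theorem vertical
translates approximate every twist, and Hurwitz's principle carries a zero over. -/
lemma torus_ne_zero {a : ℕ → ℂ} (ha : ∀ n, ‖a n‖ ≤ 1) (ha0 : a 0 = 0)
    (hne : ∃ n, a n ≠ 0) {η : ℝ}
    (hfin : {s : ℂ | 1 < s.re ∧ s.re < 1 + η ∧ G a (fun _ => 1) s = 0}.Finite)
    {ω : ℕ → ℂ} (hω : ∀ p, ‖ω p‖ = 1) {σ : ℝ} (h1 : 1 < σ) (h2 : σ < 1 + η) :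
    G a ω σ ≠ 0 := by
  intro hzero
  set f := G a ω with hf
  have hU : IsOpen {s : ℂ | 1 < s.re} := isOpen_lt continuous_const Complex.continuous_re
  have hd := differentiableOn_G_right ha ha0 fun p => (hω p).le
  have han : AnalyticAt ℂ f σ := hd.analyticAt (hU.mem_nhds (by simpa using h1))
  rcases han.eventually_eq_zero_or_eventually_ne_zero with h | h
  · exact G_not_eventually_zero ha ha0 hne hω (by simpa using h1) h
  rw [eventually_nhdsWithin_iff, Metric.eventually_nhds_iff] at h
  obtain ⟨ε, hε, h⟩ := h
  set r := min (ε / 2) (min ((σ - 1) / 2) ((1 + η - σ) / 2)) with hr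
  have hr0 : 0 < r := by
    have : 0 < σ - 1 := by linarith
    have : 0 < 1 + η - σ := by linarith
    positivity
  have hrε : r ≤ ε / 2 := min_le_left _ _
  have hr1 : r ≤ (σ - 1) / 2 := (min_le_right _ _).trans (min_le_left _ _)
  have hr2 : r ≤ (1 + η - σ) / 2 := (min_le_right _ _).trans (min_le_right _ _)
  set c := (1 + σ) / 2 with hc
  have hc1 : 1 < c := by rw [hc]; linarith
  have hball : ∀ s ∈ Metric.closedBall (σ : ℂ) r, c ≤ s.re ∧ s.re < 1 + η ∧ -r ≤ s.im := by
    intro s hs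
    rw [Metric.mem_closedBall, dist_eq_norm] at hs
    have h3 := (Complex.abs_re_le_norm (s - σ)).trans hs
    have h4 := (Complex.abs_im_le_norm (s - σ)).trans hs
    rw [Complex.sub_re, Complex.ofReal_re, abs_le] at h3
    rw [Complex.sub_im, Complex.ofReal_im, abs_le] at h4
    refine ⟨by rw [hc]; linarith, by linarith, by linarith⟩
  obtain ⟨s0, hs0, hmin⟩ := (isCompact_sphere (σ : ℂ) r).exists_isMinOn
    (NormedSpace.sphere_nonempty.mpr hr0.le)
    (f := fun s => ‖f s‖) ((hd.continuousOn.mono fun s hs => by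
      have := (hball s (Metric.sphere_subset_closedBall hs)).1
      show 1 < s.re
      linarith).norm)
  set δ := ‖f s0‖ with hδ
  have hδ0 : 0 < δ := by
    rw [hδ, norm_pos_iff]
    have hs0' : dist s0 σ = r := hs0
    refine h (by linarith) ?_
    intro h5
    rw [Set.mem_singleton_iff] at h5
    rw [h5, dist_self] at hs0'
    exact hr0.ne hs0'
  -- vertical translates approximating `ω`
  have hkr : ∀ j : ℕ, ∃ t : ℝ, (j : ℝ) < t ∧ ∀ p ∈ (Finset.range j).filter Nat.Prime,
      ‖(p : ℂ) ^ (-(t * Complex.I)) - ω p‖ < 1 / ((j : ℝ) + 1) := fun j =>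
    kronecker _ (fun p hp => (Finset.mem_filter.mp hp).2) ω hω (by positivity) _
  choose t ht1 ht2 using hkr
  set W : ℕ → ℕ → ℂ := fun j p => if p.Prime then (p : ℂ) ^ (-(t j * Complex.I)) else ω p with hW
  have hWn : ∀ j p, ‖W j p‖ = 1 := by
    intro j p
    simp only [hW]
    split_ifs with hp
    · rw [Complex.norm_natCast_cpow_of_pos hp.pos]; simp
    · exact hω p
  have hWlim : Tendsto W atTop (𝓝 ω) := by
    rw [tendsto_pi_nhds]
    intro p
    by_cases hp : p.Prime
    · rw [tendsto_iff_norm_sub_tendsto_zero]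
      refine squeeze_zero' (Eventually.of_forall fun _ => norm_nonneg _) ?_
        (tendsto_one_div_add_atTop_nhds_zero_nat (𝕜 := ℝ))
      filter_upwards [eventually_gt_atTop p] with j hj
      simp only [hW, if_pos hp]
      exact (ht2 j p (by simp [hj, hp])).le
    · simp only [hW, if_neg hp]; exact tendsto_const_nhds
  have hE : Tendsto (fun j => ∑' n : ℕ, ‖mext (W j) n - mext ω n‖ / (n : ℝ) ^ c) atTop (𝓝 0) := by
    have := tendsto_tsum_of_dominated_convergence (𝓕 := atTop)
      (f := fun j (n : ℕ) => ‖mext (W j) n - mext ω n‖ / (n : ℝ) ^ c) (g := fun _ => 0)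
      (bound := fun n : ℕ => 2 * (1 / (n : ℝ) ^ c)) ((summable_rpow hc1).mul_left 2)
      (fun n => by
        have h3 : Tendsto (fun j => mext (W j) n) atTop (𝓝 (mext ω n)) :=
          ((continuous_mext n).tendsto ω).comp hWlim
        have h4 := (tendsto_iff_norm_sub_tendsto_zero.mp h3).div_const ((n : ℝ) ^ c)
        simpa using h4)
      (Eventually.of_forall fun j n => by
        rw [Real.norm_of_nonneg (by positivity), mul_one_div]
        gcongr
        refine (norm_sub_le _ _).trans ?_
        rw [norm_mext_eq (hWn j), norm_mext_eq hω]; norm_num)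
    simpa using this
  obtain ⟨B, hB⟩ : ∃ B : ℝ, ∀ s ∈ {s : ℂ | 1 < s.re ∧ s.re < 1 + η ∧ G a (fun _ => 1) s = 0},
      s.im ≤ B := by
    obtain ⟨B, hB⟩ := (hfin.image Complex.im).bddAbove
    exact ⟨B, fun s hs => hB ⟨s, hs, rfl⟩⟩
  obtain ⟨j, hj1, hj2⟩ := ((hE.eventually_lt_const (show (0 : ℝ) < δ / 3 by positivity)).and
    (eventually_gt_atTop ⌈B + r⌉₊)).exists
  have hj3 : B + r < t j := by
    have h5 : (⌈B + r⌉₊ : ℝ) < j := by exact_mod_cast hj2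
    linarith [Nat.le_ceil (B + r), ht1 j]
  have hclose : ∀ s ∈ Metric.closedBall (σ : ℂ) r, ‖G a (W j) s - f s‖ < δ / 3 := fun s hs =>
    (norm_G_sub_le ha ha0 hc1 (fun p => (hWn j p).le) (fun p => (hω p).le)
      (hball s hs).1).trans_lt hj1
  have hshift : ∀ s : ℂ, G a (W j) s = G a (fun _ => 1) (s + t j * Complex.I) := by
    intro s
    unfold G
    refine tsum_congr fun n => ?_
    rcases Nat.eq_zero_or_pos n with rfl | hn
    · simp [ha0]
    · have hn' : (n : ℂ) ≠ 0 := by exact_mod_cast hn.ne'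
      have e1 : mext (fun _ => 1) n = 1 :=
        mext_eq_of_mult (f := fun _ => 1) rfl (by simp) (by simp) hn.ne'
      rw [mext_vertical (t := t j) (fun p hp => by simp only [hW, if_pos hp]) hn.ne', e1,
        Complex.cpow_add _ _ hn', Complex.cpow_neg]
      field_simp
  have hnz : ∀ s ∈ Metric.ball (σ : ℂ) r, G a (W j) s ≠ 0 := by
    intro s hs h0
    obtain ⟨b1, b2, b3⟩ := hball s (Metric.ball_subset_closedBall hs)
    have := hB (s + t j * Complex.I) ⟨by simp; linarith, by simpa using b2, by rw [← hshift, h0]⟩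
    simp at this
    linarith
  have hmm := min_modulus (f := G a (W j)) (c := σ) (r := r) (δ := 2 * δ / 3) hr0 (by positivity)
    ((((differentiableOn_G_right ha ha0 fun p => (hWn j p).le)).mono fun s hs => by
      rw [closure_ball _ hr0.ne'] at hs
      have := (hball s hs).1
      show 1 < s.re
      linarith).diffContOnCl) hnz (fun s hs => by
      have h5 := hclose s (Metric.sphere_subset_closedBall hs)
      have h6 : δ ≤ ‖f s‖ := hmin hs
      have h7 := norm_sub_norm_le (f s) (G a (W j) s)
      rw [norm_sub_rev] at h7
      linarith)
  have h8 := hclose σ (Metric.mem_closedBall_self hr0.le)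
  rw [hzero, sub_zero] at h8
  linarith

/-- The polydisc of twists that are unimodular at all arguments up to `y`. -/
def polydisc (y : ℕ) : Set (ℕ → ℂ) := {ω | ∀ p, ‖ω p‖ ≤ 1 ∧ (p ≤ y → ‖ω p‖ = 1)}

lemma isCompact_polydisc (y : ℕ) : IsCompact (polydisc y) := by
  have h : polydisc y = Set.univ.pi fun p : ℕ =>
      if p ≤ y then Metric.sphere (0 : ℂ) 1 else Metric.closedBall 0 1 := by
    ext ω
    simp only [polydisc, Set.mem_pi, Set.mem_univ, forall_true_left, Set.mem_ofPred_eq]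
    refine forall_congr' fun p => ?_
    split_ifs with hp
    · simp only [hp, forall_true_left, mem_sphere_zero_iff_norm]
      exact ⟨fun h => h.2, fun h => ⟨h.le, h⟩⟩
    · simp [hp]
  rw [h]
  refine isCompact_univ_pi fun p => ?_
  split_ifs
  · exact isCompact_sphere _ _
  · exact isCompact_closedBall _ _

lemma isCompact_torus : IsCompact {ω : ℕ → ℂ | ∀ p, ‖ω p‖ = 1} := by
  have h : {ω : ℕ → ℂ | ∀ p, ‖ω p‖ = 1} = Set.univ.pi fun _ : ℕ => Metric.sphere (0 : ℂ) 1 := by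
    ext ω
    simp
  rw [h]
  exact isCompact_univ_pi fun p => isCompact_sphere _ _

lemma continuousOn_G_real {a : ℕ → ℂ} (ha : ∀ n, ‖a n‖ ≤ 1) (ha0 : a 0 = 0) {c : ℝ} (hc : 1 < c) :
    ContinuousOn (fun x : (ℕ → ℂ) × ℝ => G a x.1 (x.2 : ℂ))
      {x | (∀ p, ‖x.1 p‖ ≤ 1) ∧ c ≤ x.2} := by
  have h : Continuous fun x : (ℕ → ℂ) × ℝ => (x.1, (x.2 : ℂ)) := by fun_prop
  exact ContinuousOn.comp (g := fun x : (ℕ → ℂ) × ℂ => G a x.1 x.2) (continuousOn_G ha ha0 hc)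
    h.continuousOn fun x hx => ⟨hx.1, by simpa using hx.2⟩

/-- Compactness: nonvanishing on the torus over a compact interval is uniform. -/
lemma torus_lower_bound {a : ℕ → ℂ} (ha : ∀ n, ‖a n‖ ≤ 1) (ha0 : a 0 = 0) {σ1 σ0 : ℝ}
    (h1 : 1 < σ1) (h01 : σ1 ≤ σ0)
    (h : ∀ ω : ℕ → ℂ, (∀ p, ‖ω p‖ = 1) → ∀ σ ∈ Set.Icc σ1 σ0, G a ω (σ : ℝ) ≠ 0) :
    ∃ δ > 0, ∀ ω : ℕ → ℂ, (∀ p, ‖ω p‖ = 1) → ∀ σ ∈ Set.Icc σ1 σ0, δ ≤ ‖G a ω (σ : ℝ)‖ := by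
  obtain ⟨x, hx, hmin⟩ := (isCompact_torus.prod (isCompact_Icc (a := σ1) (b := σ0))).exists_isMinOn
    ⟨(fun _ => 1, σ1), by simp [h01]⟩ (((continuousOn_G_real ha ha0 h1).mono (by
      rintro ⟨ω, σ⟩ ⟨hω, hσ⟩
      exact ⟨fun p => (hω p).le, hσ.1⟩)).norm)
  exact ⟨‖G a x.1 (x.2 : ℂ)‖, norm_pos_iff.mpr (h _ hx.1 _ hx.2),
    fun ω hω σ hσ => hmin (Set.mk_mem_prod hω hσ)⟩

/-- The identity showing that `z ↦ (z + w) / (1 + w̄ z)` preserves the unit disc and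
its boundary. -/
lemma mobius_identity (z w : ℂ) :
    ‖1 + (starRingEnd ℂ) w * z‖ ^ 2 - ‖z + w‖ ^ 2 = (1 - ‖z‖ ^ 2) * (1 - ‖w‖ ^ 2) := by
  simp only [← Complex.normSq_eq_norm_sq, Complex.normSq_apply]
  simp
  ring

/-- On the polydisc a nonvanishing twisted series satisfies the lower bound it satisfies on the
torus: every point of the polydisc is the centre of an analytic disc whose boundary lies in the
torus. -/
lemma polydisc_lower_bound {a : ℕ → ℂ} (ha : ∀ n, ‖a n‖ ≤ 1) (ha0 : a 0 = 0) {σ δ : ℝ}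
    (h1 : 1 < σ) (hδ : 0 < δ) {y : ℕ}
    (hT : ∀ ω : ℕ → ℂ, (∀ p, ‖ω p‖ = 1) → δ ≤ ‖G a ω (σ : ℝ)‖)
    (h : ∀ ω ∈ polydisc y, G a ω (σ : ℝ) ≠ 0) : ∀ ω ∈ polydisc y, δ ≤ ‖G a ω (σ : ℝ)‖ := by
  intro ω hω
  -- the analytic disc through `ω` given by disc automorphisms in the non-unimodular coordinates
  set W : ℂ → ℕ → ℂ := fun z p => if ‖ω p‖ < 1 then
    (z + ω p) / (1 + (starRingEnd ℂ) (ω p) * z) else ω p with hW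
  have hden : ∀ p, ‖ω p‖ < 1 → ∀ z : ℂ, ‖z‖ ≤ 1 → 1 + (starRingEnd ℂ) (ω p) * z ≠ 0 := by
    intro p hp z hz h0
    have : ‖(starRingEnd ℂ) (ω p) * z‖ < 1 := by
      rw [norm_mul, RCLike.norm_conj]
      exact (mul_le_of_le_one_right (norm_nonneg _) hz).trans_lt hp
    rw [eq_neg_of_add_eq_zero_right h0] at this
    simp at this
  have hWle : ∀ z : ℂ, ‖z‖ ≤ 1 → ∀ p, ‖W z p‖ ≤ 1 := by
    intro z hz p
    simp only [hW]
    split_ifs with hp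
    · rw [norm_div]
      refine div_le_one_of_le₀ ?_ (norm_nonneg _)
      refine le_of_sq_le_sq ?_ (norm_nonneg _)
      have e := mobius_identity z (ω p)
      have : 0 ≤ (1 - ‖z‖ ^ 2) * (1 - ‖ω p‖ ^ 2) :=
        mul_nonneg (by nlinarith [norm_nonneg z]) (by nlinarith [norm_nonneg (ω p)])
      linarith
    · exact (hω p).1
  have hWeq : ∀ z : ℂ, ‖z‖ = 1 → ∀ p, ‖W z p‖ = 1 := by
    intro z hz p
    simp only [hW]
    split_ifs with hp
    · rw [norm_div, div_eq_one_iff_eq (norm_ne_zero_iff.mpr (hden p hp z hz.le))]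
      have e := mobius_identity z (ω p)
      rw [hz] at e
      have e2 : ‖z + ω p‖ ^ 2 = ‖1 + (starRingEnd ℂ) (ω p) * z‖ ^ 2 := by linarith
      exact (pow_left_inj₀ (norm_nonneg _) (norm_nonneg _) two_ne_zero).mp e2
    · exact le_antisymm (hω p).1 (not_lt.mp hp)
  have hWD : ∀ z : ℂ, ‖z‖ ≤ 1 → W z ∈ polydisc y := by
    intro z hz p
    refine ⟨hWle z hz p, fun hp => ?_⟩
    have := (hω p).2 hp
    simp only [hW, this, lt_irrefl, if_false]
  have hd : DiffContOnCl ℂ (fun z => G a (W z) (σ : ℝ)) (Metric.ball 0 1) := by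
    constructor
    · refine differentiableOn_G ha ha0 h1 Metric.isOpen_ball (fun p => ?_)
        (differentiableOn_const _) (fun z hz => hWle z (mem_ball_zero_iff.mp hz).le)
        (fun z _ => by simp)
      simp only [hW]
      split_ifs with hp
      · exact (differentiableOn_id.add_const _).fun_div
          ((differentiableOn_const _).add (differentiableOn_id.const_mul _))
          fun z hz => hden p hp z (mem_ball_zero_iff.mp hz).le
      · exact differentiableOn_const _
    · rw [closure_ball _ one_ne_zero]
      have hc : ContinuousOn (fun z => (W z, σ)) (Metric.closedBall (0 : ℂ) 1) := by
        refine ContinuousOn.prodMk (continuousOn_pi.mpr fun p => ?_) continuousOn_const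
        simp only [hW]
        split_ifs with hp
        · exact (continuousOn_id.add continuousOn_const).div
            (continuousOn_const.add (continuousOn_const.mul continuousOn_id))
            fun z hz => hden p hp z (mem_closedBall_zero_iff.mp hz)
        · exact continuousOn_const
      exact (continuousOn_G_real ha ha0 h1).comp hc fun z hz =>
        ⟨hWle z (mem_closedBall_zero_iff.mp hz), le_rfl⟩
  have hmm := min_modulus one_pos hδ hd
    (fun z hz => h _ (hWD z (mem_ball_zero_iff.mp hz).le))
    (fun z hz => hT _ (hWeq z (mem_sphere_zero_iff_norm.mp hz)))
  have hW0 : W 0 = ω := by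
    funext p
    simp only [hW]
    split_ifs <;> simp
  rwa [hW0] at hmm

/-- Nonvanishing on the torus for all `σ` in `(1, σ0]` propagates to the polydisc. The threshold
`y` comes from absolute convergence at `σ0`; smaller exponents are reached by connectedness. -/
lemma polydisc_ne_zero {a : ℕ → ℂ} (ha : ∀ n, ‖a n‖ ≤ 1) (ha0 : a 0 = 0) {σ0 : ℝ}
    (h0 : 1 < σ0)
    (h : ∀ ω : ℕ → ℂ, (∀ p, ‖ω p‖ = 1) → ∀ σ ∈ Set.Ioc 1 σ0, G a ω (σ : ℝ) ≠ 0) (y₁ : ℕ) :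
    ∃ y ≥ y₁, ∀ ω ∈ polydisc y, ∀ σ ∈ Set.Ioc 1 σ0, G a ω (σ : ℝ) ≠ 0 := by
  obtain ⟨δ, hδ, hδT⟩ := torus_lower_bound ha ha0 h0 le_rfl
    (fun ω hω σ hσ => h ω hω σ ⟨h0.trans_le hσ.1, hσ.2⟩)
  have ht : Tendsto (fun N : ℕ => ∑' n : ℕ, 2 * (1 / ((n + N : ℕ) : ℝ) ^ σ0)) atTop (𝓝 0) :=
    tendsto_sum_nat_add fun n : ℕ => 2 * (1 / (n : ℝ) ^ σ0)
  obtain ⟨y, hy1, hy2⟩ := ((ht.eventually_lt_const hδ).and (eventually_ge_atTop (y₁ + 1))).exists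
  have hsum2 : Summable fun n : ℕ => 2 * (1 / (n : ℝ) ^ σ0) := (summable_rpow h0).mul_left 2
  -- at `σ0`, replacing `ω` by `1` beyond `y` moves the value by less than the torus bound `δ`
  have hbase : ∀ ω ∈ polydisc y, G a ω (σ0 : ℝ) ≠ 0 := by
    intro ω hω hz
    set ω' : ℕ → ℂ := fun p => if p ≤ y then ω p else 1 with hω'
    have hn' : ∀ p, ‖ω' p‖ = 1 := by
      intro p
      simp only [hω']
      split_ifs with hp
      · exact (hω p).2 hp
      · simp
    have h1 := hδT ω' hn' σ0 ⟨le_rfl, le_rfl⟩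
    have h2 := norm_G_sub_le ha ha0 h0 (ω := ω') (ω' := ω) (fun p => (hn' p).le)
      (fun p => (hω p).1) (s := (σ0 : ℂ)) (by simp)
    rw [hz, sub_zero] at h2
    have hle : ∀ n : ℕ, ‖mext ω' n - mext ω n‖ / (n : ℝ) ^ σ0 ≤ 2 * (1 / (n : ℝ) ^ σ0) := by
      intro n
      rw [mul_one_div]
      gcongr
      exact (norm_sub_le _ _).trans (by
        linarith [norm_mext_le (fun p => (hn' p).le) n, norm_mext_le (fun p => (hω p).1) n])
    have hs : Summable fun n : ℕ => ‖mext ω' n - mext ω n‖ / (n : ℝ) ^ σ0 :=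
      Summable.of_nonneg_of_le (fun n => by positivity) hle hsum2
    have h3 : ∑' n : ℕ, ‖mext ω' n - mext ω n‖ / (n : ℝ) ^ σ0
        = ∑' n : ℕ, ‖mext ω' (n + y) - mext ω (n + y)‖ / ((n + y : ℕ) : ℝ) ^ σ0 := by
      rw [← hs.sum_add_tsum_nat_add y]
      rw [Finset.sum_eq_zero, zero_add]
      intro n hn
      rw [Finset.mem_range] at hn
      rcases Nat.eq_zero_or_pos n with rfl | hn0
      · simp [mext]
      · have : mext ω' n = mext ω n := mext_congr fun p _ hpn => by
          have := Nat.le_of_dvd hn0 hpn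
          simp only [hω']
          rw [if_pos (by omega)]
        simp [this]
    have h4 : ∑' n : ℕ, ‖mext ω' (n + y) - mext ω (n + y)‖ / ((n + y : ℕ) : ℝ) ^ σ0
        ≤ ∑' n : ℕ, 2 * (1 / ((n + y : ℕ) : ℝ) ^ σ0) :=
      ((summable_nat_add_iff y).mpr hs).tsum_le_tsum (fun n => hle (n + y))
        ((summable_nat_add_iff y).mpr hsum2)
    linarith
  refine ⟨y, by omega, fun ω hω σ hσ => ?_⟩
  obtain ⟨δ', hδ', hδT'⟩ := torus_lower_bound ha ha0 hσ.1 hσ.2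
    (fun ω hω τ hτ => h ω hω τ ⟨hσ.1.trans_le hτ.1, hτ.2⟩)
  have hcont : ContinuousOn (fun x : (ℕ → ℂ) × ℝ => G a x.1 (x.2 : ℂ))
      (polydisc y ×ˢ Set.Icc σ σ0) := (continuousOn_G_real ha ha0 hσ.1).mono (by
    rintro ⟨w, τ⟩ ⟨hw, hτ⟩
    exact ⟨fun p => (hw p).1, hτ.1⟩)
  have hK := (isCompact_polydisc y).prod (isCompact_Icc (a := σ) (b := σ0))
  have hA : IsClosed (Prod.snd '' ((polydisc y ×ˢ Set.Icc σ σ0) ∩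
      (fun x : (ℕ → ℂ) × ℝ => G a x.1 (x.2 : ℂ)) ⁻¹' {0})) := by
    have h5 := hcont.preimage_isClosed_of_isClosed hK.isClosed (isClosed_singleton (x := (0 : ℂ)))
    exact ((hK.of_isClosed_subset h5 Set.inter_subset_left).image continuous_snd).isClosed
  have hB : IsClosed (⋂ w ∈ polydisc y, (Set.Icc σ σ0 ∩
      (fun τ : ℝ => ‖G a w (τ : ℂ)‖) ⁻¹' (Set.Ici δ'))) := by
    refine isClosed_biInter fun w hw => ?_
    refine ContinuousOn.preimage_isClosed_of_isClosed ?_ isClosed_Icc isClosed_Ici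
    exact (hcont.comp (f := fun τ : ℝ => (w, τ)) (by fun_prop) fun τ hτ => ⟨hw, hτ⟩).norm
  -- `[σ, σ0]` is covered by the closed sets of exponents where some twist vanishes, and where all
  -- twists obey the torus bound `δ'`; these are disjoint, so only one of them can be nonempty
  have hpre := isPreconnected_closed_iff.mp (isPreconnected_Icc (a := σ) (b := σ0)) _ _ hA hB
    (by
      intro τ hτ
      by_cases hex : ∃ w ∈ polydisc y, G a w (τ : ℂ) = 0
      · left
        obtain ⟨w, hw, hw0⟩ := hex
        exact ⟨(w, τ), ⟨⟨hw, hτ⟩, hw0⟩, rfl⟩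
      · right
        push Not at hex
        refine Set.mem_iInter₂.mpr fun w hw => ⟨hτ, ?_⟩
        exact polydisc_lower_bound ha ha0 (hσ.1.trans_le hτ.1) hδ'
          (fun w hw => hδT' w hw τ hτ) hex w hw)
  intro hz
  have h1 := hpre ⟨σ, ⟨le_rfl, hσ.2⟩, ⟨(ω, σ), ⟨⟨hω, le_rfl, hσ.2⟩, hz⟩, rfl⟩⟩
    ⟨σ0, ⟨hσ.2, le_rfl⟩, by
      refine Set.mem_iInter₂.mpr fun w hw => ⟨⟨hσ.2, le_rfl⟩, ?_⟩
      exact polydisc_lower_bound ha ha0 h0 hδ'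
          (fun w hw => hδT' w hw σ0 ⟨hσ.2, le_rfl⟩) hbase w hw⟩
  obtain ⟨τ, hτ, ⟨⟨⟨w, τ'⟩, ⟨⟨hw, _⟩, hw0⟩, rfl⟩, hBτ⟩⟩ := h1
  have h6 := (Set.mem_iInter₂.mp hBτ w hw).2
  have h7 : G a w (τ' : ℂ) = 0 := hw0
  simp only [Set.mem_preimage, Set.mem_Ici, h7, norm_zero] at h6
  linarith

/-! ### Mertens' theorem in arithmetic progressions -/

open ArithmeticFunction.vonMangoldt in
/-- The prime part of the Dirichlet series of `Λ` on a residue class equals its polar part up to a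
bounded error. -/
lemma prime_residue_asymp {q : ℕ} [NeZero q] {a : ZMod q} (ha : IsUnit a) :
    ∃ b : ℝ, 0 ≤ b ∧ ∀ ε ∈ Set.Ioc (0 : ℝ) 1,
      (Summable fun n : ℕ => (if n.Prime then residueClass a n else 0) / (n : ℝ) ^ (1 + ε)) ∧
      |∑' n : ℕ, (if n.Prime then residueClass a n else 0) / (n : ℝ) ^ (1 + ε)
        - (q.totient : ℝ)⁻¹ / ε| ≤ b := by
  have H {x : ℝ} (hx : 1 < x) :
      ∑' n, residueClass a n / (n : ℝ) ^ x =
        (LFunctionResidueClassAux a x).re + (q.totient : ℝ)⁻¹ / (x - 1) := by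
    refine Complex.ofReal_injective ?_
    simp only [Complex.ofReal_tsum, Complex.ofReal_div, Complex.ofReal_cpow (Nat.cast_nonneg _),
      Complex.ofReal_natCast, Complex.ofReal_add, Complex.ofReal_inv, Complex.ofReal_sub,
      Complex.ofReal_one]
    simp_rw [← LFunctionResidueClassAux_real ha hx,
      eqOn_LFunctionResidueClassAux ha <| Set.mem_ofPred.mpr (Complex.ofReal_re x ▸ hx),
      sub_add_cancel, LSeries, LSeries.term]
    refine tsum_congr fun n ↦ ?_
    split_ifs with hn
    · simp only [hn, residueClass_apply_zero, Complex.ofReal_zero, zero_div]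
    · rfl
  have hcont : ContinuousOn (fun x : ℝ ↦ (LFunctionResidueClassAux a x).re) (Set.Icc 1 2) :=
    Complex.continuous_re.continuousOn.comp (t := Set.univ)
      (continuousOn_LFunctionResidueClassAux a) (fun ⦃x⦄ a ↦ trivial)
      |>.comp Complex.continuous_ofReal.continuousOn fun x hx ↦ by
        simpa only [Set.mem_ofPred_eq, Complex.ofReal_re] using hx.1
  obtain ⟨C, hC⟩ := isCompact_Icc.exists_bound_of_continuousOn hcont
  have hnp := summable_residueClass_non_primes_div a
  have hC0 : 0 ≤ C := (norm_nonneg _).trans (hC 1 (by norm_num))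
  have hterm : ∀ n : ℕ, 0 ≤ (if n.Prime then 0 else residueClass a n) := fun n => by
    split_ifs; exacts [le_rfl, residueClass_nonneg a n]
  refine ⟨C + ∑' n : ℕ, (if n.Prime then 0 else residueClass a n) / n,
    add_nonneg hC0 (tsum_nonneg fun n => div_nonneg (hterm n) n.cast_nonneg), fun ε hε => ?_⟩
  have hx : 1 < 1 + ε := by linarith [hε.1]
  have hall : Summable fun n : ℕ => residueClass a n / (n : ℝ) ^ (1 + ε) :=
    LSeries.summable_real_of_abscissaOfAbsConv_lt <|
        (abscissaOfAbsConv_residueClass_le_one a).trans_lt <| mod_cast hx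
  have hle : ∀ n : ℕ, (if n.Prime then 0 else residueClass a n) / (n : ℝ) ^ (1 + ε)
      ≤ (if n.Prime then 0 else residueClass a n) / n := by
    intro n
    rcases n.eq_zero_or_pos with rfl | hn
    · simp
    · refine div_le_div_of_nonneg_left (hterm n) (mod_cast hn) ?_
      conv_lhs => rw [← Real.rpow_one n]
      exact Real.rpow_le_rpow_of_exponent_le (by exact_mod_cast hn) hx.le
  have hnp' : Summable fun n : ℕ =>
      (if n.Prime then 0 else residueClass a n) / (n : ℝ) ^ (1 + ε) :=
    Summable.of_nonneg_of_le (fun n => div_nonneg (hterm n) (by positivity)) hle hnp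
  have hsplit : ∀ n : ℕ, (if n.Prime then residueClass a n else 0) / (n : ℝ) ^ (1 + ε)
      = residueClass a n / (n : ℝ) ^ (1 + ε)
        - (if n.Prime then 0 else residueClass a n) / (n : ℝ) ^ (1 + ε) := by
    intro n
    split_ifs <;> simp
  have hs : Summable fun n : ℕ =>
      (if n.Prime then residueClass a n else 0) / (n : ℝ) ^ (1 + ε) :=
    (hall.sub hnp').congr fun n => (hsplit n).symm
  refine ⟨hs, ?_⟩
  rw [tsum_congr hsplit, hall.tsum_sub hnp', H hx, add_sub_cancel_left]
  have h1 := hC (1 + ε) ⟨by linarith [hε.1], by linarith [hε.2]⟩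
  rw [Real.norm_eq_abs] at h1
  have h2 := hnp'.tsum_le_tsum hle hnp
  have h3 : 0 ≤ ∑' n : ℕ, (if n.Prime then 0 else residueClass a n) / (n : ℝ) ^ (1 + ε) :=
    tsum_nonneg fun n => div_nonneg (hterm n) (by positivity)
  rw [abs_le] at h1 ⊢
  constructor <;> linarith

/-- The primes in `(X, Y]` lying in the residue class `a`. -/
def primesIn {q : ℕ} (a : ZMod q) (X Y : ℕ) : Finset ℕ :=
  (Finset.Ioc X Y).filter fun p => p.Prime ∧ (p : ZMod q) = a

open ArithmeticFunction.vonMangoldt in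
/-- One step of Mertens' theorem in arithmetic progressions: a lower bound for the primes in a
window, by comparing the Dirichlet series of `Λ` at three exponents close to `1`. -/
lemma mertens_step {q : ℕ} [NeZero q] {a : ZMod q} (ha : IsUnit a) :
    ∃ c > 0, ∃ X₀ : ℕ, 2 ≤ X₀ ∧ ∀ X ≥ X₀, c ≤ ∑ p ∈ primesIn a X (X ^ 36), 1 / (p : ℝ) := by
  obtain ⟨b, hb, hW⟩ := prime_residue_asymp ha
  set α : ℝ := (q.totient : ℝ)⁻¹ with hα
  have hα0 : 0 < α := inv_pos.mpr (mod_cast q.totient_pos.mpr (NeZero.pos q))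
  refine ⟨α / 36, by positivity, ⌈Real.exp (10 * b / α)⌉₊ + 3, by omega, fun X hX => ?_⟩
  have hX3 : (3 : ℝ) ≤ X := by exact_mod_cast (by omega : 3 ≤ X)
  have hX0 : (0 : ℝ) < X := by linarith
  set l := Real.log X with hl
  have hl1 : 1 ≤ l := by
    rw [hl, Real.le_log_iff_exp_le hX0]
    linarith [Real.exp_one_lt_d9]
  have hlb : 10 * b / α ≤ l := by
    rw [hl, Real.le_log_iff_exp_le hX0]
    have h1 : (⌈Real.exp (10 * b / α)⌉₊ : ℝ) ≤ X := by exact_mod_cast (by omega)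
    exact (Nat.le_ceil _).trans h1
  rw [div_le_iff₀ hα0] at hlb
  set g : ℕ → ℝ := fun n => if n.Prime then residueClass a n else 0 with hg
  have hg0 : ∀ n, 0 ≤ g n := fun n => by
    simp only [hg]; split_ifs; exacts [residueClass_nonneg a n, le_rfl]
  have hε1 : 1 / l ∈ Set.Ioc (0 : ℝ) 1 := ⟨by positivity, by rw [div_le_one₀ (by linarith)]; exact hl1⟩
  have hε2 : 1 / (6 * l) ∈ Set.Ioc (0 : ℝ) 1 :=
    ⟨by positivity, by rw [div_le_one₀ (by linarith)]; linarith⟩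
  have hε3 : 1 / (12 * l) ∈ Set.Ioc (0 : ℝ) 1 :=
    ⟨by positivity, by rw [div_le_one₀ (by linarith)]; linarith⟩
  obtain ⟨s1, w1⟩ := hW _ hε1
  obtain ⟨s2, w2⟩ := hW _ hε2
  obtain ⟨s3, w3⟩ := hW _ hε3
  have hX1 : (1 : ℕ) ≤ X := by omega
  -- With `l = log X`, for `n ≤ X` changing the exponent to `1 + 1 / l` costs a factor at most `3`,
  -- and for `n > X ^ 36` changing it to `1 + 1 / (12 l)` gains a factor `e ^ 3 > 8`. The polar parts
  -- of the three series are `6`, `1` and `12` times `α l`, and `6 - 3 - 12 / 8 > 0`.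
  have hkey : ∀ n : ℕ, g n / (n : ℝ) ^ (1 + 1 / (6 * l)) ≤ 3 * (g n / (n : ℝ) ^ (1 + 1 / l))
      + (1 / 8) * (g n / (n : ℝ) ^ (1 + 1 / (12 * l)))
      + (if n ∈ Finset.Ioc X (X ^ 36) then g n / n else 0) := by
    intro n
    rcases n.eq_zero_or_pos with rfl | hn
    · simp [hg]
    have hn0 : (0 : ℝ) < n := by exact_mod_cast hn
    have hn1 : (1 : ℝ) ≤ n := by exact_mod_cast hn
    have p1 : 0 ≤ 3 * (g n / (n : ℝ) ^ (1 + 1 / l)) := by have := hg0 n; positivity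
    have p2 : 0 ≤ (1 / 8) * (g n / (n : ℝ) ^ (1 + 1 / (12 * l))) := by
      have := hg0 n; positivity
    have p3 : (0 : ℝ) ≤ (if n ∈ Finset.Ioc X (X ^ 36) then g n / n else 0) := by
      have := hg0 n; split_ifs <;> positivity
    have hlogn : 0 ≤ Real.log n := Real.log_nonneg hn1
    rcases le_or_gt n X with h | h
    · have : g n / (n : ℝ) ^ (1 + 1 / (6 * l)) ≤ 3 * (g n / (n : ℝ) ^ (1 + 1 / l)) := by
        have e1 : (n : ℝ) ^ (1 + 1 / l) ≤ 3 * (n : ℝ) ^ (1 + 1 / (6 * l)) := by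
          have e2 : (n : ℝ) ^ (1 / l) ≤ 3 := by
            calc (n : ℝ) ^ (1 / l) ≤ (X : ℝ) ^ (1 / l) := by gcongr
              _ = Real.exp 1 := by
                rw [Real.rpow_def_of_pos hX0, ← hl, mul_one_div, div_self (by linarith)]
              _ ≤ 3 := by linarith [Real.exp_one_lt_d9]
          have e3 : (n : ℝ) ≤ (n : ℝ) ^ (1 + 1 / (6 * l)) := by
            conv_lhs => rw [← Real.rpow_one n]
            exact Real.rpow_le_rpow_of_exponent_le hn1 (by linarith [hε2.1])
          rw [Real.rpow_add hn0, Real.rpow_one]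
          nlinarith
        rw [← mul_div_assoc, div_le_div_iff₀ (by positivity) (by positivity)]
        nlinarith [hg0 n]
      linarith
    · rcases le_or_gt n (X ^ 36) with h' | h'
      · have : g n / (n : ℝ) ^ (1 + 1 / (6 * l)) ≤ g n / n := by
          refine div_le_div_of_nonneg_left (hg0 n) hn0 ?_
          conv_lhs => rw [← Real.rpow_one n]
          exact Real.rpow_le_rpow_of_exponent_le hn1 (by linarith [hε2.1])
        rw [if_pos (Finset.mem_Ioc.mpr ⟨h, h'⟩)]
        linarith
      · have : g n / (n : ℝ) ^ (1 + 1 / (6 * l))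
            ≤ (1 / 8) * (g n / (n : ℝ) ^ (1 + 1 / (12 * l))) := by
          have e1 : 8 * (n : ℝ) ^ (1 + 1 / (12 * l)) ≤ (n : ℝ) ^ (1 + 1 / (6 * l)) := by
            have e2 : (8 : ℝ) ≤ (n : ℝ) ^ (1 / (12 * l)) := by
              have h36 : (X : ℝ) ^ 36 ≤ n := by exact_mod_cast h'.le
              calc (8 : ℝ) ≤ Real.exp 1 ^ 3 := by
                    have := Real.add_one_le_exp (1 : ℝ)
                    have h2 : (2 : ℝ) ≤ Real.exp 1 := by linarith
                    calc (8 : ℝ) = 2 ^ 3 := by norm_num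
                      _ ≤ _ := by gcongr
                _ = ((X : ℝ) ^ 36) ^ (1 / (12 * l)) := by
                    rw [← Real.exp_nat_mul, Real.rpow_def_of_pos (by positivity), Real.log_pow,
                      ← hl]
                    congr 1
                    have : l ≠ 0 := by linarith
                    push_cast
                    field_simp
                    norm_num
                _ ≤ (n : ℝ) ^ (1 / (12 * l)) := by gcongr
            have e3 : (1 + 1 / (6 * l) : ℝ) = (1 + 1 / (12 * l)) + 1 / (12 * l) := by
              have : l ≠ 0 := by linarith
              field_simp; ring
            rw [e3, Real.rpow_add hn0 (1 + 1 / (12 * l))]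
            have : 0 < (n : ℝ) ^ (1 + 1 / (12 * l)) := by positivity
            nlinarith
          rw [← mul_div_assoc, div_le_div_iff₀ (by positivity) (by positivity)]
          nlinarith [hg0 n]
        linarith
  have hfs : HasSum (fun n : ℕ => if n ∈ Finset.Ioc X (X ^ 36) then g n / n else 0)
      (∑ n ∈ Finset.Ioc X (X ^ 36), g n / n) := by
    have e : ∑ n ∈ Finset.Ioc X (X ^ 36), g n / n = ∑ n ∈ Finset.Ioc X (X ^ 36),
        (if n ∈ Finset.Ioc X (X ^ 36) then g n / n else 0) :=
      Finset.sum_congr rfl fun n hn => (if_pos hn).symm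
    rw [e]
    exact hasSum_sum_of_ne_finset_zero (fun n hn => if_neg hn)
  have hineq := hasSum_le hkey s2.hasSum
    (((s1.hasSum.mul_left 3).add (s3.hasSum.mul_left (1 / 8))).add hfs)
  have hS : ∑ n ∈ Finset.Ioc X (X ^ 36), g n / n
      ≤ 36 * l * ∑ p ∈ primesIn a X (X ^ 36), 1 / (p : ℝ) := by
    rw [primesIn, Finset.sum_filter, Finset.mul_sum]
    refine Finset.sum_le_sum fun n hn => ?_
    rw [Finset.mem_Ioc] at hn
    have hn0 : (0 : ℝ) < n := by exact_mod_cast (by omega : 0 < n)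
    simp only [hg, residueClass, Set.indicator_apply, Set.mem_ofPred_eq]
    by_cases hp : n.Prime
    · by_cases hna : (n : ZMod q) = a
      · rw [if_pos hp, if_pos hna, if_pos ⟨hp, hna⟩,
          ArithmeticFunction.vonMangoldt_apply_prime hp, mul_one_div]
        gcongr
        have : (n : ℝ) ≤ (X : ℝ) ^ 36 := by exact_mod_cast hn.2
        have := Real.log_le_log hn0 this
        rw [Real.log_pow] at this
        exact_mod_cast this
      · simp [hp, hna]
    · simp [hp]
  rw [abs_le] at w1 w2 w3
  have f1 : α / (1 / l) = α * l := by field_simp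
  have f2 : α / (1 / (6 * l)) = 6 * (α * l) := by field_simp
  have f3 : α / (1 / (12 * l)) = 12 * (α * l) := by field_simp
  rw [f1] at w1
  rw [f2] at w2
  rw [f3] at w3
  have hfin : α * l ≤ 36 * l * ∑ p ∈ primesIn a X (X ^ 36), 1 / (p : ℝ) := by
    linarith [w1.2, w2.1, w3.2]
  rw [div_le_iff₀ (by norm_num)]
  nlinarith

/-- Mertens' theorem in arithmetic progressions: a window `(X, X ^ κ]` of bounded logarithmic
length captures an arbitrarily large reciprocal sum of primes. -/
lemma mertens_ap {q : ℕ} [NeZero q] {a : ZMod q} (ha : IsUnit a) (R : ℝ) :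
    ∃ κ : ℕ, 1 ≤ κ ∧ ∃ X₀ : ℕ, ∀ X ≥ X₀, R ≤ ∑ p ∈ primesIn a X (X ^ κ), 1 / (p : ℝ) := by
  obtain ⟨c, hc, X₀, hX₀, h⟩ := mertens_step ha
  have key : ∀ j : ℕ, ∀ X ≥ X₀, j * c ≤ ∑ p ∈ primesIn a X (X ^ 36 ^ j), 1 / (p : ℝ) := by
    intro j
    induction j with
    | zero => intro X _; simp [primesIn]
    | succ j ih =>
      intro X hX
      have hX1 : 1 ≤ X := by omega
      have h1 : X ≤ X ^ 36 ^ j := Nat.le_self_pow (by positivity) X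
      have h2 : X ^ 36 ^ j ≤ X ^ 36 ^ (j + 1) :=
        Nat.pow_le_pow_right hX1 (Nat.pow_le_pow_right (by norm_num) (by omega))
      have h3 := ih X hX
      have h4 := h (X ^ 36 ^ j) (hX.le.trans h1)
      rw [← pow_mul, ← pow_succ] at h4
      have e : ∑ p ∈ primesIn a X (X ^ 36 ^ (j + 1)), 1 / (p : ℝ)
          = ∑ p ∈ primesIn a X (X ^ 36 ^ j), 1 / (p : ℝ)
            + ∑ p ∈ primesIn a (X ^ 36 ^ j) (X ^ 36 ^ (j + 1)), 1 / (p : ℝ) := by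
        unfold primesIn
        rw [← Finset.Ioc_union_Ioc_eq_Ioc h1 h2, Finset.filter_union, Finset.sum_union]
        exact Finset.disjoint_filter_filter (Finset.Ioc_disjoint_Ioc_of_le le_rfl)
      rw [e]
      push_cast
      linarith
  refine ⟨36 ^ ⌈R / c⌉₊, Nat.one_le_pow _ _ (by norm_num), X₀, fun X hX => ?_⟩
  refine le_trans ?_ (key _ X hX)
  rw [← div_le_iff₀ hc]
  exact Nat.le_ceil _

/-! ### Bilinear exponential sums over primes -/

lemma norm_eTwist (x : ℝ) : ‖eTwist x‖ = 1 := by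
  unfold eTwist
  rw [show (2 * Real.pi * Complex.I * x : ℂ) = ((2 * Real.pi * x : ℝ) : ℂ) * Complex.I by
    push_cast; ring]
  exact Complex.norm_exp_ofReal_mul_I _

lemma eTwist_add (x y : ℝ) : eTwist (x + y) = eTwist x * eTwist y := by
  unfold eTwist
  rw [← Complex.exp_add]
  congr 1
  push_cast
  ring

lemma eTwist_mul_nat (x : ℝ) (n : ℕ) : eTwist (x * n) = eTwist x ^ n := by
  unfold eTwist
  rw [← Complex.exp_nat_mul]
  congr 1
  push_cast
  ring

lemma eTwist_neg (x : ℝ) : eTwist (-x) = (starRingEnd ℂ) (eTwist x) := by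
  unfold eTwist
  rw [← Complex.exp_conj]
  congr 1
  rw [map_mul, map_mul, map_mul, Complex.conj_I, Complex.conj_ofReal, Complex.conj_ofReal,
    show (2 : ℂ) = ((2 : ℝ) : ℂ) by norm_num, Complex.conj_ofReal]
  push_cast
  ring

lemma eTwist_int (n : ℤ) : eTwist n = 1 := by
  unfold eTwist
  rw [Complex.exp_eq_one_iff]
  exact ⟨n, by push_cast; ring⟩

/-- `|1 - e(x)|` dominates four times the distance from `x` to the nearest integer. -/
lemma norm_one_sub_eTwist_ge (x : ℝ) : 4 * |x - round x| ≤ ‖1 - eTwist x‖ := by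
  set y := x - round x with hy
  have hxy : eTwist x = eTwist y := by
    have : x = y + (round x : ℤ) := by rw [hy]; ring
    calc eTwist x = eTwist (y + (round x : ℤ)) := by rw [← this]
      _ = eTwist y := by rw [eTwist_add, eTwist_int, mul_one]
  have hyl : |y| ≤ 1 / 2 := abs_sub_round x
  have h1 := Complex.norm_exp_I_mul_ofReal_sub_one (2 * Real.pi * y)
  have h2 : eTwist y = Complex.exp (Complex.I * ((2 * Real.pi * y : ℝ) : ℂ)) := by
    unfold eTwist
    congr 1
    push_cast
    ring
  rw [hxy, norm_sub_rev, h2, h1, norm_mul, Real.norm_eq_abs, Real.norm_eq_abs,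
    abs_of_pos (by norm_num : (0 : ℝ) < 2)]
  have hpi := Real.pi_pos
  have h3 := Real.mul_abs_le_abs_sin (x := 2 * Real.pi * y / 2) (by
    rw [show 2 * Real.pi * y / 2 = Real.pi * y by ring, abs_mul, abs_of_pos hpi]
    nlinarith)
  rw [show 2 * Real.pi * y / 2 = Real.pi * y by ring, abs_mul, abs_of_pos hpi] at h3
  rw [show 2 * Real.pi * y / 2 = Real.pi * y by ring]
  have h4 : 2 / Real.pi * (Real.pi * |y|) = 2 * |y| := by field_simp
  linarith

/-- Partial summation for the twisted harmonic sum. -/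
lemma twisted_harmonic {ζ : ℂ} (hζ : ‖ζ‖ = 1) {M : ℕ} (hM : 1 ≤ M) (M' : ℕ) :
    ‖1 - ζ‖ * ‖∑ m ∈ Finset.Ioc M M', ζ ^ m / m‖ ≤ 2 / M := by
  have hM0 : (0 : ℝ) < M := by exact_mod_cast hM
  rcases lt_or_ge M' M with h | h
  · rw [Finset.Ioc_eq_empty (by omega), Finset.sum_empty, norm_zero, mul_zero]
    positivity
  have key : ∀ N ≥ M, ‖(1 - ζ) * ∑ m ∈ Finset.Ioc M N, ζ ^ m / m + ζ ^ (N + 1) / N‖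
      ≤ 2 / M - 1 / N := by
    intro N hN
    induction N, hN using Nat.le_induction with
    | base =>
      simp only [Finset.Ioc_self, Finset.sum_empty, mul_zero, zero_add, norm_div, norm_pow, hζ,
        one_pow, Complex.norm_natCast]
      rw [← sub_div]
      norm_num
    | succ N hN ih =>
      have hN0 : (0 : ℝ) < N := by exact_mod_cast (by omega : 0 < N)
      have hNc : (N : ℂ) ≠ 0 := by exact_mod_cast hN0.ne'
      have hNc1 : (N : ℂ) + 1 ≠ 0 := by exact_mod_cast (Nat.succ_ne_zero N)
      have e : (1 - ζ) * ∑ m ∈ Finset.Ioc M (N + 1), ζ ^ m / m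
            + ζ ^ (N + 1 + 1) / ((N + 1 : ℕ) : ℂ)
          = ((1 - ζ) * ∑ m ∈ Finset.Ioc M N, ζ ^ m / m + ζ ^ (N + 1) / N)
            + ζ ^ (N + 1) * ((1 / ((N : ℝ) + 1) - 1 / N : ℝ) : ℂ) := by
        rw [← Finset.insert_Ioc_right_eq_Ioc_add_one (by omega : M ≤ N),
          Finset.sum_insert (by simp)]
        push_cast
        field_simp
        ring
      rw [e]
      refine (norm_add_le _ _).trans ?_
      have h1 : ‖ζ ^ (N + 1) * ((1 / ((N : ℝ) + 1) - 1 / N : ℝ) : ℂ)‖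
          = 1 / N - 1 / ((N : ℝ) + 1) := by
        rw [norm_mul, norm_pow, hζ, one_pow, one_mul, Complex.norm_real, Real.norm_eq_abs,
          abs_sub_comm, abs_of_nonneg]
        rw [sub_nonneg]
        gcongr
        linarith
      rw [h1]
      push_cast
      linarith
  have h1 := key M' h
  have h2 : ‖ζ ^ (M' + 1) / (M' : ℂ)‖ = 1 / M' := by
    rw [norm_div, norm_pow, hζ, one_pow, Complex.norm_natCast]
  rw [← norm_mul]
  have h3 := norm_sub_le ((1 - ζ) * ∑ m ∈ Finset.Ioc M M', ζ ^ m / m + ζ ^ (M' + 1) / M')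
    (ζ ^ (M' + 1) / M')
  rw [add_sub_cancel_right, h2] at h3
  linarith

lemma harmonic_le_log {M : ℕ} (hM : 1 ≤ M) (N : ℕ) (hN : M ≤ N) :
    ∑ m ∈ Finset.Ioc M N, 1 / (m : ℝ) ≤ Real.log N - Real.log M := by
  induction N, hN using Nat.le_induction with
  | base => simp
  | succ N hN ih =>
    have hN0 : (0 : ℝ) < N := by exact_mod_cast (by omega : 0 < N)
    rw [← Finset.insert_Ioc_right_eq_Ioc_add_one (by omega : M ≤ N), Finset.sum_insert (by simp)]
    have h1 := Real.one_sub_inv_le_log_of_pos (x := ((N + 1 : ℕ) : ℝ) / N) (by positivity)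
    rw [Real.log_div (by positivity) hN0.ne'] at h1
    have h2 : 1 - (((N + 1 : ℕ) : ℝ) / N)⁻¹ = 1 / ((N + 1 : ℕ) : ℝ) := by
      push_cast
      field_simp
      ring
    rw [h2] at h1
    linarith

/-- Type II estimate by the Cauchy-Schwarz inequality, the longer variable being extended to all
integers. -/
lemma bilinear_bound {U V : Finset ℕ} {M M' : ℕ} (hV : V ⊆ Finset.Ioc M M') {x D : ℝ}
    {α β : ℕ → ℂ} (hα : ∀ p ∈ U, ‖α p‖ ≤ 1 / p) (hβ : ∀ p ∈ V, ‖β p‖ ≤ 1 / p) (hD : 0 ≤ D)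
    (hoff : ∀ p ∈ U, ∀ p' ∈ U, p ≠ p' →
      ‖∑ m ∈ Finset.Ioc M M', eTwist (x * (p - p')) ^ m / m‖ ≤ D) :
    ‖∑ p ∈ U, ∑ r ∈ V, α p * β r * eTwist (x * p * r)‖ ^ 2 ≤
      (∑ m ∈ Finset.Ioc M M', 1 / (m : ℝ)) * ((∑ m ∈ Finset.Ioc M M', 1 / (m : ℝ)) *
        ∑ p ∈ U, 1 / (p : ℝ) ^ 2 + D * (∑ p ∈ U, 1 / (p : ℝ)) ^ 2) := by
  set L := ∑ m ∈ Finset.Ioc M M', 1 / (m : ℝ) with hL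
  have hL0 : 0 ≤ L := Finset.sum_nonneg fun _ _ => by positivity
  set A : ℕ → ℂ := fun m => ∑ p ∈ U, α p * eTwist (x * p) ^ m with hA
  have e1 : ∑ p ∈ U, ∑ r ∈ V, α p * β r * eTwist (x * p * r) = ∑ r ∈ V, β r * A r := by
    rw [Finset.sum_comm]
    refine Finset.sum_congr rfl fun r _ => ?_
    rw [hA, Finset.mul_sum]
    refine Finset.sum_congr rfl fun p _ => ?_
    rw [eTwist_mul_nat]
    ring
  have h1 : ‖∑ r ∈ V, β r * A r‖ ≤ ∑ r ∈ V, 1 / (r : ℝ) * ‖A r‖ := by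
    refine (norm_sum_le _ _).trans (Finset.sum_le_sum fun r hr => ?_)
    rw [norm_mul]
    exact mul_le_mul_of_nonneg_right (hβ r hr) (norm_nonneg _)
  have h2 : (∑ r ∈ V, 1 / (r : ℝ) * ‖A r‖) ^ 2
      ≤ (∑ r ∈ V, 1 / (r : ℝ)) * ∑ r ∈ V, 1 / (r : ℝ) * ‖A r‖ ^ 2 := by
    refine Finset.sum_sq_le_sum_mul_sum_of_sq_le_mul _ (fun _ _ => by positivity)
      (fun _ _ => by positivity) fun r _ => le_of_eq ?_
    ring
  have h3 : (∑ r ∈ V, 1 / (r : ℝ)) ≤ L :=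
    Finset.sum_le_sum_of_subset_of_nonneg hV fun _ _ _ => by positivity
  have h4 : ∑ r ∈ V, 1 / (r : ℝ) * ‖A r‖ ^ 2
      ≤ ∑ m ∈ Finset.Ioc M M', 1 / (m : ℝ) * ‖A m‖ ^ 2 :=
    Finset.sum_le_sum_of_subset_of_nonneg hV fun _ _ _ => by positivity
  -- open the square and interchange summations
  have e2 : ((∑ m ∈ Finset.Ioc M M', 1 / (m : ℝ) * ‖A m‖ ^ 2 : ℝ) : ℂ)
      = ∑ p ∈ U, ∑ p' ∈ U, α p * (starRingEnd ℂ) (α p')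
        * ∑ m ∈ Finset.Ioc M M', eTwist (x * (p - p')) ^ m / m := by
    have e3 : ∀ m : ℕ, ((1 / (m : ℝ) * ‖A m‖ ^ 2 : ℝ) : ℂ) = ∑ p ∈ U, ∑ p' ∈ U,
        α p * (starRingEnd ℂ) (α p') * (eTwist (x * (p - p')) ^ m / m) := by
      intro m
      push_cast
      rw [← Complex.mul_conj', hA, map_sum, Finset.sum_mul_sum, Finset.mul_sum]
      refine Finset.sum_congr rfl fun p _ => ?_
      rw [Finset.mul_sum]
      refine Finset.sum_congr rfl fun p' _ => ?_
      rw [mul_sub, sub_eq_add_neg, eTwist_add, eTwist_neg, map_mul, map_pow, mul_pow]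
      ring
    rw [Complex.ofReal_sum, Finset.sum_congr rfl fun m _ => e3 m, Finset.sum_comm]
    refine Finset.sum_congr rfl fun p _ => ?_
    rw [Finset.sum_comm]
    refine Finset.sum_congr rfl fun p' _ => ?_
    rw [Finset.mul_sum]
  have h5 : ∑ m ∈ Finset.Ioc M M', 1 / (m : ℝ) * ‖A m‖ ^ 2
      ≤ L * ∑ p ∈ U, 1 / (p : ℝ) ^ 2 + D * (∑ p ∈ U, 1 / (p : ℝ)) ^ 2 := by
    have h6 : ∑ m ∈ Finset.Ioc M M', 1 / (m : ℝ) * ‖A m‖ ^ 2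
        = ‖((∑ m ∈ Finset.Ioc M M', 1 / (m : ℝ) * ‖A m‖ ^ 2 : ℝ) : ℂ)‖ := by
      rw [Complex.norm_real, Real.norm_of_nonneg (Finset.sum_nonneg fun _ _ => by positivity)]
    have e4 : L * ∑ p ∈ U, 1 / (p : ℝ) ^ 2 + D * (∑ p ∈ U, 1 / (p : ℝ)) ^ 2
        = ∑ p ∈ U, (L * (1 / (p : ℝ) ^ 2) + D * ∑ p' ∈ U, 1 / (p : ℝ) * (1 / (p' : ℝ))) := by
      rw [Finset.sum_add_distrib, ← Finset.mul_sum, ← Finset.mul_sum,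
        pow_two (∑ p ∈ U, 1 / (p : ℝ)), ← Finset.sum_mul_sum]
    rw [h6, e2, e4]
    refine (norm_sum_le _ _).trans (Finset.sum_le_sum fun p hp => ?_)
    have h7 : L * (1 / (p : ℝ) ^ 2) = ∑ p' ∈ U, if p = p' then L * (1 / (p : ℝ) ^ 2) else 0 := by
      rw [Finset.sum_ite_eq, if_pos hp]
    rw [h7, Finset.mul_sum, ← Finset.sum_add_distrib]
    refine (norm_sum_le _ _).trans (Finset.sum_le_sum fun p' hp' => ?_)
    rw [norm_mul, norm_mul, RCLike.norm_conj]
    have h8 : ‖α p‖ * ‖α p'‖ ≤ 1 / p * (1 / p') :=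
      mul_le_mul (hα p hp) (hα p' hp') (norm_nonneg _) (by positivity)
    have h8' : (0 : ℝ) ≤ 1 / p * (1 / p') := by positivity
    split_ifs with h
    · subst h
      have h9 : ‖∑ m ∈ Finset.Ioc M M', eTwist (x * (p - p)) ^ m / m‖ ≤ L := by
        refine (norm_sum_le _ _).trans (le_of_eq (Finset.sum_congr rfl fun m _ => ?_))
        rw [norm_div, norm_pow, norm_eTwist, one_pow, Complex.norm_natCast]
      calc _ ≤ 1 / (p : ℝ) * (1 / p) * L := mul_le_mul h8 h9 (norm_nonneg _) h8'
        _ = L * (1 / (p : ℝ) ^ 2) := by ring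
        _ ≤ _ := le_add_of_nonneg_right (mul_nonneg hD h8')
    · rw [zero_add, mul_comm D]
      exact mul_le_mul h8 (hoff p hp p' hp' h) (norm_nonneg _) h8'
  rw [e1]
  calc ‖∑ r ∈ V, β r * A r‖ ^ 2 ≤ (∑ r ∈ V, 1 / (r : ℝ) * ‖A r‖) ^ 2 := by gcongr
    _ ≤ _ := h2
    _ ≤ L * ∑ m ∈ Finset.Ioc M M', 1 / (m : ℝ) * ‖A m‖ ^ 2 :=
      mul_le_mul h3 h4 (Finset.sum_nonneg fun _ _ => by positivity) hL0
    _ ≤ _ := by gcongr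

/-- Dirichlet approximation with arbitrarily large denominator. -/
lemma exists_good_rat {lam : ℝ} (h : Irrational lam) (Q : ℕ) :
    ∃ r : ℚ, Q < r.den ∧ |lam - r| < 1 / (r.den : ℝ) ^ 2 := by
  have h1 := h.eventually_forall_le_dist_cast_rat_of_den_le Q
  rw [Metric.eventually_nhds_iff] at h1
  obtain ⟨ε, hε, h1⟩ := h1
  obtain ⟨n, hn⟩ := exists_nat_one_div_lt (show 0 < ε / 2 by positivity)
  obtain ⟨r, hr1, hr2⟩ := Real.exists_rat_abs_sub_le_and_den_le lam (n := n + 1) (by omega)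
  have hd : (1 : ℝ) ≤ r.den := by exact_mod_cast r.pos
  refine ⟨r, ?_, ?_⟩
  · by_contra! hle
    have h2 := h1 (y := ε / 2) (by
      rw [Real.dist_eq, sub_zero, abs_of_pos (by positivity)]; linarith) r hle
    rw [Real.dist_eq] at h2
    have h3 : 1 / ((((n + 1 : ℕ) : ℝ) + 1) * r.den) ≤ 1 / ((n : ℝ) + 1) := by
      gcongr
      push_cast
      nlinarith
    linarith
  · refine hr1.trans_lt ?_
    have : (r.den : ℝ) ≤ ((n + 1 : ℕ) : ℝ) := by exact_mod_cast hr2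
    gcongr
    nlinarith

/-- If `r` approximates `λ` well and `h` is small compared with the denominator of `r`, then `λ h`
is not close to an integer, because `r h` is not an integer. -/
lemma rat_dist {lam : ℝ} {r : ℚ} (hr : |lam - r| < 1 / (r.den : ℝ) ^ 2) {h : ℤ} (h0 : h ≠ 0)
    (hh : 2 * |(h : ℝ)| < r.den) : 2 / (r.den : ℝ) ≤ ‖1 - eTwist (lam * h)‖ := by
  refine le_trans ?_ (norm_one_sub_eTwist_ge _)
  set j := round (lam * h) with hj
  have hd : (0 : ℝ) < r.den := by exact_mod_cast r.pos
  have h1 : 1 / (r.den : ℝ) ≤ |(r : ℝ) * h - j| := by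
    have hne : r.num * h - j * r.den ≠ 0 := by
      intro h2
      have h3 : (r.den : ℤ) ∣ r.num * h := ⟨j, by linarith⟩
      have h4 : (r.den : ℤ) ∣ h := by
        refine IsCoprime.dvd_of_dvd_mul_left ?_ h3
        exact (Int.isCoprime_iff_gcd_eq_one.mpr (by simpa [Int.gcd] using r.reduced)).symm
      have h5 := Int.le_of_dvd (abs_pos.mpr h0) ((dvd_abs _ _).mpr h4)
      have h6 : (r.den : ℝ) ≤ |(h : ℝ)| := by exact_mod_cast h5
      linarith [abs_nonneg (h : ℝ)]
    have h2 : (1 : ℝ) ≤ |((r.num * h - j * r.den : ℤ) : ℝ)| := by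
      exact_mod_cast Int.one_le_abs hne
    have h3 : (r : ℝ) * h - j = ((r.num * h - j * r.den : ℤ) : ℝ) / r.den := by
      have : (r : ℝ) = r.num / r.den := by exact_mod_cast (Rat.num_div_den r).symm
      rw [this]
      push_cast
      field_simp
    rw [h3, abs_div, abs_of_pos hd]
    gcongr
  have h2 : |lam * h - r * h| ≤ 1 / (2 * (r.den : ℝ)) := by
    rw [← sub_mul, abs_mul]
    calc |lam - r| * |(h : ℝ)| ≤ 1 / (r.den : ℝ) ^ 2 * (r.den / 2) := by
          gcongr
          linarith
      _ = _ := by field_simp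
  have h3 : |(r : ℝ) * h - j| ≤ |lam * h - r * h| + |lam * h - j| := by
    rw [abs_sub_comm (lam * h) (r * h)]
    exact abs_sub_le _ _ _
  have h4 : 1 / (2 * (r.den : ℝ)) = (1 / r.den) / 2 := by field_simp
  rw [show 2 / (r.den : ℝ) = 2 * (1 / r.den) by ring]
  linarith

/-- Two disjoint finite sets of large primes in a given residue class, with large reciprocal sums,
such that every bilinear form in `e(λ n p₁ p₂)` (for boundedly many `n`) is tiny. The ranges are
dictated by a rational approximation `b / q` of `λ`: the first set lies below `q ^ (1 / 4)`, the
second one above `q ^ 2`. -/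
lemma exists_prime_sets {lam : ℝ} (hirr : Irrational lam) {k : ℕ} [NeZero k] {a : ZMod k}
    (ha : IsUnit a) (N y : ℕ) (R : ℝ) {δ : ℝ} (hδ : 0 < δ) :
    ∃ U V : Finset ℕ, (∀ p ∈ U, p.Prime ∧ (p : ZMod k) = a ∧ y < p) ∧
      (∀ p ∈ V, p.Prime ∧ (p : ZMod k) = a ∧ y < p) ∧ Disjoint U V ∧
      R ≤ ∑ p ∈ U, 1 / (p : ℝ) ∧ R ≤ ∑ p ∈ V, 1 / (p : ℝ) ∧
      ∀ n : ℕ, 1 ≤ n → n ≤ N → ∀ α β : ℕ → ℂ, (∀ p ∈ U, ‖α p‖ ≤ 1 / p) →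
        (∀ p ∈ V, ‖β p‖ ≤ 1 / p) →
        ‖∑ p ∈ U, ∑ r ∈ V, α p * β r * eTwist (lam * n * p * r)‖ ≤ δ := by
  obtain ⟨κ, hκ, X₀, hX₀⟩ := mertens_ap ha R
  have hκ0 : (0 : ℝ) < κ := by exact_mod_cast hκ
  set c : ℝ := δ ^ 2 / (2 * (16 * (κ : ℝ) ^ 2) ^ 3) with hc
  have hc0 : 0 < c := by positivity
  have hlog := (Real.isLittleO_pow_log_id_atTop (n := 3)).bound hc0
  obtain ⟨X₁, hX₁⟩ := (hlog.and (eventually_ge_atTop 0)).exists_forall_of_atTop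
  set Xm := X₀ + ⌈X₁⌉₊ + 2 * N + y + 2 with hXm
  obtain ⟨r, hrQ, hr⟩ := exists_good_rat hirr (Xm ^ (4 * κ))
  set q := r.den with hq
  -- `X` is about `q ^ (1 / (4 κ))`, so that differences of elements of `(X, X ^ κ]` are `< q / 2`
  -- even after multiplication by `n ≤ N`
  set X := Nat.nthRoot (4 * κ) q with hX
  have h4κ : 4 * κ ≠ 0 := by omega
  have hXq : X ^ (4 * κ) ≤ q := Nat.pow_nthRoot_le (Or.inl h4κ)
  have hqX : q < (X + 1) ^ (4 * κ) := Nat.lt_pow_nthRoot_add_one h4κ q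
  have hXmX : Xm ≤ X := by
    have := lt_of_pow_lt_pow_left₀ _ (by omega) (hrQ.trans hqX)
    omega
  have hX2 : 2 ≤ X := by omega
  have hκX : X ^ κ ≤ X ^ (4 * κ) := Nat.pow_le_pow_right (by omega) (by omega)
  have hXκq : X ^ κ ≤ q := hκX.trans hXq
  have hXleq : X ≤ q := (Nat.le_self_pow (by omega) X).trans hXκq
  have hqq : q ≤ q ^ 2 := Nat.le_self_pow two_ne_zero q
  have hq1 : 1 ≤ q := r.pos
  have hqR : (1 : ℝ) ≤ q := by exact_mod_cast hq1
  have hXR : (2 : ℝ) ≤ X := by exact_mod_cast hX2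
  refine ⟨primesIn a X (X ^ κ), primesIn a (q ^ 2) ((q ^ 2) ^ κ), ?_, ?_, ?_, hX₀ X (by omega),
    hX₀ (q ^ 2) (by omega), ?_⟩
  · intro p hp
    simp only [primesIn, Finset.mem_filter, Finset.mem_Ioc] at hp
    exact ⟨hp.2.1, hp.2.2, by omega⟩
  · intro p hp
    simp only [primesIn, Finset.mem_filter, Finset.mem_Ioc] at hp
    exact ⟨hp.2.1, hp.2.2, by omega⟩
  · rw [Finset.disjoint_left]
    intro p hp hp'
    simp only [primesIn, Finset.mem_filter, Finset.mem_Ioc] at hp hp'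
    omega
  intro n hn1 hnN α β hα hβ
  have hoff : ∀ p ∈ primesIn a X (X ^ κ), ∀ p' ∈ primesIn a X (X ^ κ), p ≠ p' →
      ‖∑ m ∈ Finset.Ioc (q ^ 2) ((q ^ 2) ^ κ), eTwist (lam * n * (p - p')) ^ m / m‖
        ≤ 1 / (q : ℝ) := by
    intro p hp p' hp' hne
    simp only [primesIn, Finset.mem_filter, Finset.mem_Ioc] at hp hp'
    have hh0 : (n : ℤ) * ((p : ℤ) - p') ≠ 0 :=
      mul_ne_zero (by omega) (sub_ne_zero.mpr (by exact_mod_cast hne))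
    have hh : 2 * |(((n : ℤ) * ((p : ℤ) - p') : ℤ) : ℝ)| < q := by
      have e1 : |((p : ℝ) - p')| ≤ (X : ℝ) ^ κ := by
        have e2 : (p : ℝ) ≤ (X : ℝ) ^ κ := by exact_mod_cast hp.1.2
        have e3 : (p' : ℝ) ≤ (X : ℝ) ^ κ := by exact_mod_cast hp'.1.2
        rw [abs_le]
        constructor <;> linarith [Nat.cast_nonneg (α := ℝ) p,
          Nat.cast_nonneg (α := ℝ) p']
      have e2 : 2 * N * X ^ κ < q := by
        calc 2 * N * X ^ κ < X * X ^ κ := by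
              apply Nat.mul_lt_mul_of_pos_right (by omega) (by positivity)
          _ = X ^ (κ + 1) := by ring
          _ ≤ X ^ (4 * κ) := Nat.pow_le_pow_right (by omega) (by omega)
          _ ≤ q := hXq
      have e3 : 2 * (N : ℝ) * (X : ℝ) ^ κ < q := by exact_mod_cast e2
      have e4 : (n : ℝ) ≤ N := by exact_mod_cast hnN
      push_cast
      rw [abs_mul, abs_of_nonneg (Nat.cast_nonneg (α := ℝ) n)]
      calc 2 * ((n : ℝ) * |(p : ℝ) - p'|) ≤ 2 * (N * (X : ℝ) ^ κ) := by gcongr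
        _ < q := by linarith
    have h1 := rat_dist hr hh0 hh
    have h2 := twisted_harmonic (ζ := eTwist (lam * n * (p - p'))) (norm_eTwist _)
      (M := q ^ 2) (by omega) ((q ^ 2) ^ κ)
    have e5 : lam * (((n : ℤ) * ((p : ℤ) - p') : ℤ) : ℝ) = lam * n * (p - p') := by
      push_cast; ring
    rw [e5] at h1
    set S := ‖∑ m ∈ Finset.Ioc (q ^ 2) ((q ^ 2) ^ κ), eTwist (lam * n * (p - p')) ^ m / m‖
    have h3 : 2 / (q : ℝ) * S ≤ 2 / ((q ^ 2 : ℕ) : ℝ) :=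
      (mul_le_mul_of_nonneg_right h1 (norm_nonneg _)).trans h2
    push_cast at h3
    have h4 : 2 / (q : ℝ) ^ 2 = 2 / (q : ℝ) * (1 / q) := by field_simp
    rw [h4] at h3
    exact le_of_mul_le_mul_left h3 (by positivity)
  have hsub : primesIn a (q ^ 2) ((q ^ 2) ^ κ) ⊆ Finset.Ioc (q ^ 2) ((q ^ 2) ^ κ) :=
    Finset.filter_subset _ _
  have hmain := bilinear_bound hsub hα hβ (by positivity) hoff
  set L := ∑ m ∈ Finset.Ioc (q ^ 2) ((q ^ 2) ^ κ), 1 / (m : ℝ) with hL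
  set B : ℝ := 2 * κ * Real.log q with hB
  have hlogX : 0 < Real.log X := Real.log_pos (by linarith)
  have hlogXq : Real.log X ≤ Real.log q := Real.log_le_log (by linarith) (by exact_mod_cast hXleq)
  have hB0 : 0 ≤ B := by
    have : 0 ≤ Real.log q := by linarith
    positivity
  have hLB : L ≤ B := by
    have := harmonic_le_log (M := q ^ 2) (by omega) ((q ^ 2) ^ κ)
      (Nat.le_self_pow (by omega) _)
    push_cast at this
    rw [Real.log_pow, Real.log_pow] at this
    push_cast at this
    have h0 : 0 ≤ Real.log q := by linarith
    rw [hB]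
    linarith
  have hL0 : 0 ≤ L := Finset.sum_nonneg fun _ _ => by positivity
  have hU : ∑ p ∈ primesIn a X (X ^ κ), 1 / (p : ℝ) ≤ B := by
    have h1 : ∑ p ∈ primesIn a X (X ^ κ), 1 / (p : ℝ) ≤ ∑ p ∈ Finset.Ioc X (X ^ κ), 1 / (p : ℝ) :=
      Finset.sum_le_sum_of_subset_of_nonneg (Finset.filter_subset _ _) fun _ _ _ => by positivity
    have h2 := harmonic_le_log (M := X) (by omega) (X ^ κ) (Nat.le_self_pow (by omega) _)
    push_cast at h2
    rw [Real.log_pow] at h2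
    have h3 : κ * Real.log X ≤ κ * Real.log q := by gcongr
    have h0 : 0 ≤ κ * Real.log q := by
      have : 0 ≤ Real.log q := by linarith
      positivity
    rw [hB]
    linarith
  have hU0 : 0 ≤ ∑ p ∈ primesIn a X (X ^ κ), 1 / (p : ℝ) :=
    Finset.sum_nonneg fun _ _ => by positivity
  have hU2 : ∑ p ∈ primesIn a X (X ^ κ), 1 / (p : ℝ) ^ 2 ≤ B / X := by
    calc ∑ p ∈ primesIn a X (X ^ κ), 1 / (p : ℝ) ^ 2
        ≤ ∑ p ∈ primesIn a X (X ^ κ), 1 / (p : ℝ) * (1 / X) := by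
          refine Finset.sum_le_sum fun p hp => ?_
          simp only [primesIn, Finset.mem_filter, Finset.mem_Ioc] at hp
          have : (X : ℝ) ≤ p := by exact_mod_cast hp.1.1.le
          rw [pow_two, ← one_div_mul_one_div]
          gcongr
      _ = (∑ p ∈ primesIn a X (X ^ κ), 1 / (p : ℝ)) * (1 / X) := by rw [Finset.sum_mul]
      _ ≤ B * (1 / X) := by gcongr
      _ = B / X := by ring
  have hBX : B ≤ 16 * (κ : ℝ) ^ 2 * Real.log X := by
    have h1 : (q : ℝ) ≤ ((X : ℝ) ^ 2) ^ (4 * κ) := by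
      have h2 : (q : ℝ) ≤ ((X : ℝ) + 1) ^ (4 * κ) := by exact_mod_cast hqX.le
      refine h2.trans ?_
      gcongr
      nlinarith
    have h2 := Real.log_le_log (by linarith) h1
    rw [Real.log_pow, Real.log_pow] at h2
    push_cast at h2
    rw [hB]
    nlinarith
  have hlogc : Real.log X ^ 3 ≤ c * X := by
    have h1 : X₁ ≤ X := (Nat.le_ceil X₁).trans (by exact_mod_cast (by omega : ⌈X₁⌉₊ ≤ X))
    have h2 := (hX₁ X h1).1
    rw [Real.norm_of_nonneg (by positivity), id, Real.norm_of_nonneg (by positivity)] at h2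
    exact h2
  have hfinal : ‖∑ p ∈ primesIn a X (X ^ κ), ∑ r ∈ primesIn a (q ^ 2) ((q ^ 2) ^ κ),
      α p * β r * eTwist (lam * n * p * r)‖ ^ 2 ≤ δ ^ 2 := by
    refine hmain.trans ?_
    calc L * (L * ∑ p ∈ primesIn a X (X ^ κ), 1 / (p : ℝ) ^ 2
          + 1 / (q : ℝ) * (∑ p ∈ primesIn a X (X ^ κ), 1 / (p : ℝ)) ^ 2)
        ≤ B * (B * (B / X) + 1 / (X : ℝ) * B ^ 2) := by
          gcongr
      _ = 2 * (B ^ 3 / X) := by ring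
      _ ≤ 2 * ((16 * (κ : ℝ) ^ 2 * Real.log X) ^ 3 / X) := by gcongr
      _ = 2 * (16 * (κ : ℝ) ^ 2) ^ 3 * (Real.log X ^ 3) / X := by ring
      _ ≤ 2 * (16 * (κ : ℝ) ^ 2) ^ 3 * (c * X) / X := by gcongr
      _ = δ ^ 2 := by
        rw [hc]
        field_simp
  exact (pow_le_pow_iff_left₀ (norm_nonneg _) hδ.le two_ne_zero).mp hfinal

/-! ### Second order Taylor coefficients -/

/-- Taylor coefficients of order at most two of a power series whose monomials are indexed with
repetition. -/
lemma power_derivs {c : ℕ → ℂ} {b : ℕ → ℝ} (hb : Summable b) (hc : ∀ n, ‖c n‖ ≤ b n)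
    (e : ℕ → ℕ) :
    DifferentiableOn ℂ (fun z : ℂ => ∑' n, c n * z ^ e n) (Metric.ball 0 1) ∧
    deriv (fun z : ℂ => ∑' n, c n * z ^ e n) 0 = ∑' n, (if e n = 1 then c n else 0) ∧
    deriv (deriv (fun z : ℂ => ∑' n, c n * z ^ e n)) 0 = ∑' n, (if e n = 2 then 2 * c n else 0) := by
  have hd : ∀ (n : ℕ) (U : Set ℂ), DifferentiableOn ℂ (fun z : ℂ => c n * z ^ e n) U := by
    intro n U
    fun_prop
  have hbd : ∀ n, ∀ z ∈ Metric.ball (0 : ℂ) 1, ‖c n * z ^ e n‖ ≤ b n := by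
    intro n z hz
    rw [mem_ball_zero_iff] at hz
    rw [norm_mul, norm_pow]
    exact (mul_le_of_le_one_right (norm_nonneg _) (pow_le_one₀ (norm_nonneg _) hz.le)).trans (hc n)
  have hder : ∀ (n : ℕ) (z : ℂ), deriv (fun z : ℂ => c n * z ^ e n) z
      = c n * (e n * z ^ (e n - 1)) := by
    intro n z
    simp
  have h1 : ∀ z ∈ Metric.ball (0 : ℂ) 1, deriv (fun z : ℂ => ∑' n, c n * z ^ e n) z
      = ∑' n, c n * (e n * z ^ (e n - 1)) := by
    intro z hz
    have := Complex.hasSum_deriv_of_summable_norm hb (fun n => hd n _) Metric.isOpen_ball hbd hz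
    rw [← this.tsum_eq]
    exact tsum_congr fun n => hder n z
  have m0 : (0 : ℂ) ∈ Metric.ball (0 : ℂ) 1 := Metric.mem_ball_self one_pos
  have m0' : (0 : ℂ) ∈ Metric.ball (0 : ℂ) (1 / 2) := Metric.mem_ball_self (by norm_num)
  refine ⟨Complex.differentiableOn_tsum_of_summable_norm hb (fun n => hd n _) Metric.isOpen_ball
    hbd, ?_, ?_⟩
  · rw [h1 0 m0]
    refine tsum_congr fun n => ?_
    rcases e n with _ | _ | j
    · simp
    · simp
    · simp
  · have hev : deriv (fun z : ℂ => ∑' n, c n * z ^ e n)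
        =ᶠ[𝓝 0] fun z => ∑' n, c n * (e n * z ^ (e n - 1)) := by
      filter_upwards [Metric.isOpen_ball.mem_nhds m0] with z hz using h1 z hz
    rw [hev.deriv_eq]
    have hbd2 : ∀ n, ∀ z ∈ Metric.ball (0 : ℂ) (1 / 2), ‖c n * (e n * z ^ (e n - 1))‖ ≤ b n := by
      intro n z hz
      rw [mem_ball_zero_iff] at hz
      rw [norm_mul]
      refine (mul_le_of_le_one_right (norm_nonneg _) ?_).trans (hc n)
      rw [norm_mul, norm_pow, Complex.norm_natCast]
      rcases e n with _ | j
      · simp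
      · rw [Nat.add_sub_cancel]
        have h2 : ‖z‖ ^ j ≤ (1 / 2) ^ j := pow_le_pow_left₀ (norm_nonneg _) hz.le _
        have h3 : ((j + 1 : ℕ) : ℝ) ≤ 2 ^ j := by
          exact_mod_cast Nat.lt_two_pow_self (n := j)
        calc ((j + 1 : ℕ) : ℝ) * ‖z‖ ^ j ≤ 2 ^ j * (1 / 2) ^ j := by gcongr
          _ = 1 := by rw [← mul_pow]; norm_num
    have := Complex.hasSum_deriv_of_summable_norm hb (F := fun n z => c n * (e n * z ^ (e n - 1)))
      (fun n => by fun_prop) Metric.isOpen_ball hbd2 m0'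
    rw [← this.tsum_eq]
    refine tsum_congr fun n => ?_
    rcases e n with _ | _ | _ | j
    · simp
    · simp
    · simp
      ring
    · simp

/-- Number of prime factors of `n` belonging to `U`, counted with multiplicity. -/
noncomputable def deg (U : Finset ℕ) (n : ℕ) : ℕ := ∑ p ∈ U, n.factorization p

lemma deg_one (U : Finset ℕ) : deg U 1 = 0 := by simp [deg]

lemma deg_mul (U : Finset ℕ) {m n : ℕ} (hm : m ≠ 0) (hn : n ≠ 0) :
    deg U (m * n) = deg U m + deg U n := by
  simp [deg, Nat.factorization_mul hm hn, Finset.sum_add_distrib]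

lemma deg_prime (U : Finset ℕ) {p : ℕ} (hp : p.Prime) : deg U p = if p ∈ U then 1 else 0 := by
  unfold deg
  rw [hp.factorization]
  simp only [Finsupp.single_apply]
  rw [Finset.sum_ite_eq]

/-- The coefficients supported on the integers with `i` prime factors in `U` and `j` in `V`. -/
noncomputable def cut (U V : Finset ℕ) (i j : ℕ) (a : ℕ → ℂ) (n : ℕ) : ℂ :=
  if deg U n = i ∧ deg V n = j then a n else 0

lemma norm_cut_le {U V : Finset ℕ} {i j : ℕ} {a : ℕ → ℂ} (ha : ∀ n, ‖a n‖ ≤ 1) (n : ℕ) :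
    ‖cut U V i j a n‖ ≤ 1 := by
  unfold cut
  split_ifs
  · exact ha n
  · simp

lemma cut_zero {U V : Finset ℕ} {i j : ℕ} {a : ℕ → ℂ} (ha0 : a 0 = 0) :
    cut U V i j a 0 = 0 := by
  simp [cut, ha0]

/-- Multiply a twist by `z` at the primes of `U` and by `w` at the primes of `V`. -/
noncomputable def scale (U V : Finset ℕ) (z w : ℂ) (ω : ℕ → ℂ) (p : ℕ) : ℂ :=
  if p ∈ U then z * ω p else if p ∈ V then w * ω p else ω p

lemma mext_scale {U V : Finset ℕ} (hUV : Disjoint U V) (z w : ℂ) (ω : ℕ → ℂ) {n : ℕ}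
    (hn : n ≠ 0) : mext (scale U V z w ω) n = z ^ deg U n * w ^ deg V n * mext ω n := by
  refine mext_eq_of_mult (f := fun n => z ^ deg U n * w ^ deg V n * mext ω n) ?_ ?_ ?_ hn
  · simp [deg_one, mext_one]
  · intro m n hm hn
    simp only [deg_mul _ hm hn, mext_mul _ hm hn]
    ring
  · intro p hp
    simp only [deg_prime _ hp, mext_prime _ hp, scale]
    by_cases h : p ∈ U
    · have h' : p ∉ V := Finset.disjoint_left.mp hUV h
      simp [h, h']
    · by_cases h' : p ∈ V <;> simp [h, h']

lemma norm_scale_le {U V : Finset ℕ} {z w : ℂ} (hz : ‖z‖ ≤ 1) (hw : ‖w‖ ≤ 1) {ω : ℕ → ℂ}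
    (hω : ∀ p, ‖ω p‖ ≤ 1) (p : ℕ) : ‖scale U V z w ω p‖ ≤ 1 := by
  unfold scale
  split_ifs
  · rw [norm_mul]; exact mul_le_one₀ hz (norm_nonneg _) (hω p)
  · rw [norm_mul]; exact mul_le_one₀ hw (norm_nonneg _) (hω p)
  · exact hω p

/-- If the series does not vanish when the twist is shrunk at `U ∪ V`, then the mixed coefficient
controls the product of the two linear ones. This compares the second logarithmic coefficients
along the lines `w = z` and `w = -z`. -/
lemma mixed_bound {a : ℕ → ℂ} (ha : ∀ n, ‖a n‖ ≤ 1) (ha0 : a 0 = 0) {σ : ℝ} (hσ : 1 < σ)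
    {U V : Finset ℕ} (hUV : Disjoint U V) {ω : ℕ → ℂ} (hω : ∀ p, ‖ω p‖ ≤ 1) {M C : ℝ}
    (hM1 : 1 ≤ M)
    (hne : ∀ z w : ℂ, ‖z‖ ≤ 1 → ‖w‖ ≤ 1 → G a (scale U V z w ω) σ ≠ 0)
    (hM : ∀ z w : ℂ, ‖z‖ ≤ 1 → ‖w‖ ≤ 1 → ‖G a (scale U V z w ω) σ‖ ≤ M)
    (hC : ‖G (cut U V 0 0 a) ω σ‖ ≤ C) :
    ‖G (cut U V 1 0 a) ω σ * G (cut U V 0 1 a) ω σ‖ ≤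
      C * ‖G (cut U V 1 1 a) ω σ‖ + 8 * (C ^ 2 * (Real.log M + 1) + C) := by
  set b : ℕ → ℂ := fun n => a n * mext ω n / (n : ℂ) ^ (σ : ℂ) with hb
  have hbn : ∀ n, ‖b n‖ ≤ 1 / (n : ℝ) ^ σ := fun n =>
    norm_term_le ha ha0 (by simp) (norm_mext_le hω n) n
  have hsum : ∀ P : ℕ → Prop, ∀ (_ : DecidablePred P), Summable fun n => if P n then b n else 0 := by
    intro P _
    refine Summable.of_norm_bounded (summable_rpow hσ) fun n => ?_
    split_ifs
    · exact hbn n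
    · rw [norm_zero]; positivity
  have hcut : ∀ i j, G (cut U V i j a) ω σ
      = ∑' n, if deg U n = i ∧ deg V n = j then b n else 0 := by
    intro i j
    unfold G
    refine tsum_congr fun n => ?_
    unfold cut
    split_ifs <;> simp [hb]
  -- restriction to the line `w = s z`
  have key : ∀ s : ℂ, ‖s‖ = 1 → ‖G (cut U V 0 0 a) ω σ * (2 * (G (cut U V 2 0 a) ω σ
      + s * G (cut U V 1 1 a) ω σ + s ^ 2 * G (cut U V 0 2 a) ω σ))
      - (G (cut U V 1 0 a) ω σ + s * G (cut U V 0 1 a) ω σ) ^ 2‖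
      ≤ 16 * (C ^ 2 * (Real.log M + 1) + C) := by
    intro s hs
    set c : ℕ → ℂ := fun n => b n * s ^ deg V n with hc
    have hcn : ∀ n, ‖c n‖ ≤ 1 / (n : ℝ) ^ σ := by
      intro n
      rw [hc]
      simp only [norm_mul, norm_pow, hs, one_pow, mul_one]
      exact hbn n
    set e : ℕ → ℕ := fun n => deg U n + deg V n with he
    obtain ⟨hd, hd1, hd2⟩ := power_derivs (summable_rpow hσ) hcn e
    set H : ℂ → ℂ := fun z => ∑' n, c n * z ^ e n with hH
    have hHG : ∀ z, H z = G a (scale U V z (s * z) ω) σ := by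
      intro z
      unfold G
      refine tsum_congr fun n => ?_
      rcases Nat.eq_zero_or_pos n with rfl | hn
      · simp [hc, hb, ha0]
      · rw [mext_scale hUV _ _ _ hn.ne', mul_pow]
        simp only [hc, hb, he, pow_add]
        ring
    have hsz : ∀ z ∈ Metric.ball (0 : ℂ) 1, ‖z‖ ≤ 1 ∧ ‖s * z‖ ≤ 1 := by
      intro z hz
      rw [mem_ball_zero_iff] at hz
      exact ⟨hz.le, by rw [norm_mul, hs, one_mul]; exact hz.le⟩
    have hH0 : H 0 = G (cut U V 0 0 a) ω σ := by
      rw [hcut]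
      refine tsum_congr fun n => ?_
      by_cases h : deg U n = 0 ∧ deg V n = 0
      · simp [hc, he, h]
      · simp [he, h]
    have hH1 : deriv H 0 = G (cut U V 1 0 a) ω σ + s * G (cut U V 0 1 a) ω σ := by
      rw [hd1, hcut, hcut, ← tsum_mul_left,
        ← (hsum _ _).tsum_add ((hsum _ _).mul_left s)]
      refine tsum_congr fun n => ?_
      simp only [he, hc]
      rcases hu : deg U n with _ | _ | i <;> rcases hv : deg V n with _ | _ | j <;> simp <;> try omega
      ring
    have hH2 : deriv (deriv H) 0 = 2 * (G (cut U V 2 0 a) ω σ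
      + s * G (cut U V 1 1 a) ω σ + s ^ 2 * G (cut U V 0 2 a) ω σ) := by
      rw [hd2, hcut, hcut, hcut, ← tsum_mul_left, ← tsum_mul_left,
        ← (hsum _ _).tsum_add ((hsum _ _).mul_left s),
        ← ((hsum _ _).add ((hsum _ _).mul_left s)).tsum_add ((hsum _ _).mul_left (s ^ 2)),
        ← tsum_mul_left]
      refine tsum_congr fun n => ?_
      simp only [he, hc]
      rcases hu : deg U n with _ | _ | _ | i <;> rcases hv : deg V n with _ | _ | _ | j <;>
        simp <;> try omega
      all_goals ring
    have := second_log_coeff hd (fun z hz => by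
        rw [hHG]; exact hne _ _ (hsz z hz).1 (hsz z hz).2) (M := M) (C := C)
      (fun z hz => by rw [hHG]; exact hM _ _ (hsz z hz).1 (hsz z hz).2) hM1 (by rw [hH0]; exact hC)
    rw [hH0, hH1, hH2] at this
    exact this
  have k1 := key 1 (by simp)
  have k2 := key (-1) (by simp)
  set A := G (cut U V 0 0 a) ω σ
  set h10 := G (cut U V 1 0 a) ω σ
  set h01 := G (cut U V 0 1 a) ω σ
  set h11 := G (cut U V 1 1 a) ω σ
  set h20 := G (cut U V 2 0 a) ω σ
  set h02 := G (cut U V 0 2 a) ω σ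
  set K := 16 * (C ^ 2 * (Real.log M + 1) + C) with hK
  -- the difference of the two bounds isolates the mixed terms
  have e1 : 4 * (h10 * h01) = 4 * (A * h11)
      - ((A * (2 * (h20 + 1 * h11 + 1 ^ 2 * h02)) - (h10 + 1 * h01) ^ 2)
        - (A * (2 * (h20 + -1 * h11 + (-1) ^ 2 * h02)) - (h10 + -1 * h01) ^ 2)) := by ring
  have e2 : 4 * ‖h10 * h01‖ ≤ 4 * ‖A * h11‖ + (K + K) := by
    have h4 : ∀ x : ℂ, ‖4 * x‖ = 4 * ‖x‖ := fun x => by rw [norm_mul]; norm_num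
    rw [← h4, e1, ← h4]
    refine (norm_sub_le _ _).trans ?_
    gcongr
    exact (norm_sub_le _ _).trans (add_le_add k1 k2)
  have e3 : ‖A * h11‖ ≤ C * ‖h11‖ := by
    rw [norm_mul]
    gcongr
  linarith

/-! ### The mixed coefficient and Euler products -/

lemma mext_eq_zero {ω : ℕ → ℂ} {p n : ℕ} (hp : p.Prime) (hn : n ≠ 0) (hpn : p ∣ n)
    (h : ω p = 0) : mext ω n = 0 := by
  obtain ⟨m, rfl⟩ := hpn
  rw [mext_mul _ hp.ne_zero (right_ne_zero_of_mul hn), mext_prime _ hp, h, zero_mul]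

lemma not_dvd_of_deg_eq_zero {U : Finset ℕ} {n : ℕ} (hn : n ≠ 0) (h : deg U n = 0) {p : ℕ}
    (hp : p.Prime) (hpn : p ∣ n) : p ∉ U := by
  intro hU
  have h1 := (Finset.sum_eq_zero_iff.mp h) p hU
  have := hp.factorization_pos_of_dvd hn hpn
  omega

/-- The mixed coefficient as a sum over `n = d p r` with `p ∈ U`, `r ∈ V` and `d` free of primes
from `U ∪ V`. -/
lemma G_cut_one_one {a : ℕ → ℂ} (ha : ∀ n, ‖a n‖ ≤ 1) (ha0 : a 0 = 0) {σ : ℝ} (hσ : 1 < σ)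
    {U V : Finset ℕ} (hUV : Disjoint U V) (hU : ∀ p ∈ U, p.Prime) (hV : ∀ p ∈ V, p.Prime)
    {ω : ℕ → ℂ} (hω : ∀ p, ‖ω p‖ ≤ 1) :
    G (cut U V 1 1 a) ω σ = ∑' d : ℕ, if d ≠ 0 ∧ deg U d = 0 ∧ deg V d = 0 then
      ∑ p ∈ U, ∑ r ∈ V, a (d * p * r) * mext ω (d * p * r) / ((d * p * r : ℕ) : ℂ) ^ (σ : ℂ)
      else 0 := by
  unfold G
  set f : ℕ → ℂ := fun n => cut U V 1 1 a n * mext ω n / (n : ℂ) ^ (σ : ℂ) with hf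
  have hfs : Summable f := Summable.of_norm_bounded (summable_rpow hσ) fun n =>
    norm_term_le (norm_cut_le ha) (cut_zero ha0) (by simp) (norm_mext_le hω n) n
  have hf0 : ∀ n, ¬ (deg U n = 1 ∧ deg V n = 1) → f n = 0 := by
    intro n hn
    simp [hf, cut, hn]
  set F : ℕ → ℕ → ℕ → ℂ := fun p r n => n.factorization p * (n.factorization r * f n) with hF
  have hFf : ∀ n, f n = ∑ p ∈ U, ∑ r ∈ V, F p r n := by
    intro n
    by_cases h : deg U n = 1 ∧ deg V n = 1
    · have h1 : (∑ p ∈ U, (n.factorization p : ℂ)) = 1 := by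
        exact_mod_cast congrArg (Nat.cast (R := ℂ)) h.1
      have h2 : (∑ p ∈ V, (n.factorization p : ℂ)) = 1 := by
        exact_mod_cast congrArg (Nat.cast (R := ℂ)) h.2
      simp only [hF]
      simp_rw [← Finset.mul_sum, ← Finset.sum_mul]
      rw [h1, h2, one_mul, one_mul]
    · simp [hF, hf0 n h]
  have hFval : ∀ p ∈ U, ∀ r ∈ V, ∀ d : ℕ, F p r (d * p * r) =
      if d ≠ 0 ∧ deg U d = 0 ∧ deg V d = 0 then
        a (d * p * r) * mext ω (d * p * r) / ((d * p * r : ℕ) : ℂ) ^ (σ : ℂ) else 0 := by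
    intro p hp r hr d
    have hpp := hU p hp
    have hrp := hV r hr
    have hpV : p ∉ V := Finset.disjoint_left.mp hUV hp
    have hrU : r ∉ U := Finset.disjoint_right.mp hUV hr
    have hpr : p ≠ r := fun h => hpV (h ▸ hr)
    rcases eq_or_ne d 0 with rfl | hd
    · simp [hF, hf, cut, ha0]
    have hU' : deg U (d * p * r) = deg U d + 1 := by
      rw [deg_mul _ (mul_ne_zero hd hpp.ne_zero) hrp.ne_zero, deg_mul _ hd hpp.ne_zero,
        deg_prime _ hpp, deg_prime _ hrp, if_pos hp, if_neg hrU]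
    have hV' : deg V (d * p * r) = deg V d + 1 := by
      rw [deg_mul _ (mul_ne_zero hd hpp.ne_zero) hrp.ne_zero, deg_mul _ hd hpp.ne_zero,
        deg_prime _ hpp, deg_prime _ hrp, if_pos hr, if_neg hpV]
    by_cases h : deg U d = 0 ∧ deg V d = 0
    · have h1 : d.factorization p = 0 := (Finset.sum_eq_zero_iff.mp h.1) p hp
      have h2 : d.factorization r = 0 := (Finset.sum_eq_zero_iff.mp h.2) r hr
      have h3 : (d * p * r).factorization p = 1 := by
        rw [Nat.factorization_mul (mul_ne_zero hd hpp.ne_zero) hrp.ne_zero,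
          Nat.factorization_mul hd hpp.ne_zero, hpp.factorization, hrp.factorization]
        simp [h1, hpr.symm]
      have h4 : (d * p * r).factorization r = 1 := by
        rw [Nat.factorization_mul (mul_ne_zero hd hpp.ne_zero) hrp.ne_zero,
          Nat.factorization_mul hd hpp.ne_zero, hpp.factorization, hrp.factorization]
        simp [h2, hpr]
      rw [if_pos ⟨hd, h⟩]
      simp only [hF, h3, h4, Nat.cast_one, one_mul, hf]
      unfold cut
      rw [hU', hV', h.1, h.2, if_pos ⟨rfl, rfl⟩]
    · rw [if_neg (fun h' => h h'.2)]
      have : f (d * p * r) = 0 := hf0 _ (by rw [hU', hV']; omega)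
      simp only [hF, this, mul_zero]
  have hFt : ∀ p ∈ U, ∀ r ∈ V, ∑' n, F p r n = ∑' d : ℕ, F p r (d * p * r) ∧
      Summable (F p r) ∧ Summable fun d : ℕ => F p r (d * p * r) := by
    intro p hp r hr
    have hpp := hU p hp
    have hrp := hV r hr
    have hpr : p ≠ r := fun h => Finset.disjoint_left.mp hUV hp (h ▸ hr)
    have hinj : Function.Injective fun d : ℕ => d * p * r := by
      intro d d' h
      exact Nat.eq_of_mul_eq_mul_right hpp.pos (Nat.eq_of_mul_eq_mul_right hrp.pos h)
    have hs : Summable (F p r) := by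
      refine Summable.of_norm_bounded hfs.norm fun n => ?_
      by_cases h : deg U n = 1 ∧ deg V n = 1
      · have h1 : n.factorization p ≤ 1 := h.1 ▸ Finset.single_le_sum
          (f := fun p => n.factorization p) (fun _ _ => Nat.zero_le _) hp
        have h2 : n.factorization r ≤ 1 := h.2 ▸ Finset.single_le_sum
          (f := fun p => n.factorization p) (fun _ _ => Nat.zero_le _) hr
        simp only [hF, norm_mul, Complex.norm_natCast]
        have h1' : (n.factorization p : ℝ) ≤ 1 := by exact_mod_cast h1
        have h2' : (n.factorization r : ℝ) ≤ 1 := by exact_mod_cast h2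
        exact (mul_le_of_le_one_left (by positivity) h1').trans
          (mul_le_of_le_one_left (norm_nonneg _) h2')
      · simp [hF, hf0 n h]
    refine ⟨(hinj.tsum_eq ?_).symm, hs, hs.comp_injective hinj⟩
    intro n hn
    have h1 : n.factorization p ≠ 0 := by
      intro h; simp [hF, h] at hn
    have h2 : n.factorization r ≠ 0 := by
      intro h; simp [hF, h] at hn
    have h3 : p * r ∣ n := ((Nat.coprime_primes hpp hrp).mpr hpr).mul_dvd_of_dvd_of_dvd
      (Nat.dvd_of_factorization_pos h1) (Nat.dvd_of_factorization_pos h2)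
    obtain ⟨d, rfl⟩ := h3
    exact ⟨d, by ring⟩
  calc ∑' n, f n = ∑' n, ∑ p ∈ U, ∑ r ∈ V, F p r n := tsum_congr hFf
    _ = ∑ p ∈ U, ∑ r ∈ V, ∑' n, F p r n := by
      rw [Summable.tsum_finsetSum fun p hp => summable_sum fun r hr => (hFt p hp r hr).2.1]
      exact Finset.sum_congr rfl fun p hp =>
        Summable.tsum_finsetSum fun r hr => (hFt p hp r hr).2.1
    _ = ∑ p ∈ U, ∑ r ∈ V, ∑' d : ℕ, F p r (d * p * r) :=
      Finset.sum_congr rfl fun p hp => Finset.sum_congr rfl fun r hr => (hFt p hp r hr).1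
    _ = ∑' d : ℕ, ∑ p ∈ U, ∑ r ∈ V, F p r (d * p * r) := by
      rw [Summable.tsum_finsetSum fun p hp => summable_sum fun r hr => (hFt p hp r hr).2.2]
      exact Finset.sum_congr rfl fun p hp =>
        (Summable.tsum_finsetSum fun r hr => (hFt p hp r hr).2.2).symm
    _ = _ := by
      refine tsum_congr fun d => ?_
      rw [Finset.sum_congr rfl fun p hp => Finset.sum_congr rfl fun r hr => hFval p hp r hr d]
      split_ifs <;> simp

/-- The reciprocal of `n` if all prime factors of `n` lie in `s`, zero otherwise. -/
noncomputable def frec (s : Finset ℕ) (n : ℕ) : ℝ :=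
  (Nat.factoredNumbers s).indicator (fun n => (n : ℝ)⁻¹) n

lemma frec_nonneg (s : Finset ℕ) (n : ℕ) : 0 ≤ frec s n :=
  Set.indicator_nonneg (fun _ _ => by positivity) _

lemma frec_of_mem {s : Finset ℕ} {n : ℕ} (h : ∀ p, p.Prime → p ∣ n → p ∈ s) :
    frec s n = (n : ℝ)⁻¹ :=
  Set.indicator_of_mem (Nat.mem_factoredNumbers'.mpr h) _

lemma hasSum_frec {s : Finset ℕ} (hs : ∀ p ∈ s, p.Prime) :
    HasSum (frec s) (∏ p ∈ s, (1 - (p : ℝ)⁻¹)⁻¹) := by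
  have h := (EulerProduct.summable_and_hasSum_factoredNumbers_prod_filter_prime_geometric
    (F := ℝ) (f := { toFun := fun n : ℕ => (n : ℝ)⁻¹, map_one' := by simp,
                     map_mul' := fun m n => by push_cast; rw [mul_inv] })
    (fun {p} hp => by
      have : (1 : ℝ) < p := by exact_mod_cast hp.one_lt
      simp only [MonoidHom.coe_mk, OneHom.coe_mk, norm_inv, Real.norm_natCast]
      exact inv_lt_one_of_one_lt₀ this) s).2
  rw [Finset.filter_true_of_mem hs] at h
  exact (hasSum_subtype_iff_indicator (f := fun n : ℕ => (n : ℝ)⁻¹)).mp h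

/-- A series whose twist vanishes at the primes relevant to the coefficients and outside `s` is
dominated by the Euler product over `s`. -/
lemma norm_G_le_prod {a : ℕ → ℂ} (ha : ∀ n, ‖a n‖ ≤ 1) (ha0 : a 0 = 0) {σ : ℝ} (hσ : 1 < σ)
    {ω : ℕ → ℂ} (hω : ∀ p, ‖ω p‖ ≤ 1) {s : Finset ℕ} (hs : ∀ p ∈ s, p.Prime)
    (hs' : ∀ n, n ≠ 0 → a n ≠ 0 → ∀ p, p.Prime → p ∣ n → p ∉ s → ω p = 0) :
    ‖G a ω σ‖ ≤ ∏ p ∈ s, (1 - (p : ℝ)⁻¹)⁻¹ := by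
  unfold G
  refine tsum_of_norm_bounded (hasSum_frec hs) fun n => ?_
  rcases eq_or_ne (a n) 0 with h | h
  · simp only [h, zero_mul, zero_div, norm_zero]
    exact frec_nonneg s n
  have hn : n ≠ 0 := fun h0 => h (h0 ▸ ha0)
  by_cases hf : ∀ p, p.Prime → p ∣ n → p ∈ s
  · rw [frec_of_mem hf]
    have := norm_term_le ha ha0 (c := σ) (s := (σ : ℂ)) (by simp) (norm_mext_le hω n) n
    refine this.trans ?_
    rw [one_div]
    have h1 : (1 : ℝ) ≤ n := by exact_mod_cast Nat.pos_of_ne_zero hn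
    gcongr
    calc (n : ℝ) = (n : ℝ) ^ (1 : ℝ) := (Real.rpow_one _).symm
      _ ≤ (n : ℝ) ^ σ := Real.rpow_le_rpow_of_exponent_le h1 hσ.le
  · push Not at hf
    obtain ⟨p, hp, hpn, hps⟩ := hf
    rw [mext_eq_zero hp hn hpn (hs' n hn h p hp hpn hps)]
    simp only [mul_zero, zero_div, norm_zero]
    exact frec_nonneg s n

lemma prod_le_exp {s : Finset ℕ} (hs : ∀ p ∈ s, p.Prime) :
    ∏ p ∈ s, (1 - (p : ℝ)⁻¹)⁻¹ ≤ Real.exp (2 * ∑ p ∈ s, 1 / (p : ℝ)) := by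
  rw [Finset.mul_sum, Real.exp_sum]
  have hp2 : ∀ p ∈ s, (p : ℝ)⁻¹ ≤ 1 / 2 := by
    intro p hp
    have : (2 : ℝ) ≤ p := by exact_mod_cast (hs p hp).two_le
    rw [← one_div]
    gcongr
  refine Finset.prod_le_prod (fun p hp => ?_) fun p hp => ?_
  · have := hp2 p hp
    rw [inv_nonneg]
    linarith
  · have h1 := hp2 p hp
    have h2 : 0 ≤ (p : ℝ)⁻¹ := by positivity
    rw [one_div]
    refine le_trans ?_ (Real.add_one_le_exp _)
    rw [inv_le_iff_one_le_mul₀ (by linarith)]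
    nlinarith

lemma one_le_prod {s : Finset ℕ} (hs : ∀ p ∈ s, p.Prime) :
    1 ≤ ∏ p ∈ s, (1 - (p : ℝ)⁻¹)⁻¹ := by
  refine (Finset.prod_const_one (s := s)).symm.trans_le
    (Finset.prod_le_prod (fun _ _ => zero_le_one) fun p hp => ?_)
  have h1 : (1 : ℝ) < p := by exact_mod_cast (hs p hp).one_lt
  have h2 : (p : ℝ)⁻¹ < 1 := inv_lt_one_of_one_lt₀ h1
  have h3 : 0 ≤ (p : ℝ)⁻¹ := by positivity
  rw [one_le_inv₀ (by linarith)]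
  linarith

/-! ### Smallness of the mixed coefficient -/

/-- The coefficients of the twisted Dirichlet series in a residue class. -/
noncomputable def coef {q : ℕ} (χ : DirichletCharacter ℂ q) (lam : ℝ) (m k n : ℕ) : ℂ :=
  if 1 ≤ n ∧ n % k = m % k then χ (n : ZMod q) * eTwist (lam * n) else 0

lemma norm_coef_le {q : ℕ} (χ : DirichletCharacter ℂ q) (lam : ℝ) (m k n : ℕ) :
    ‖coef χ lam m k n‖ ≤ 1 := by
  unfold coef
  split_ifs
  · rw [norm_mul, norm_eTwist, mul_one]
    exact χ.norm_le_one _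
  · simp

lemma coef_zero {q : ℕ} (χ : DirichletCharacter ℂ q) (lam : ℝ) (m k : ℕ) :
    coef χ lam m k 0 = 0 := by simp [coef]

lemma norm_coef_prime {q : ℕ} [NeZero q] (χ : DirichletCharacter ℂ q) (lam : ℝ) (m k : ℕ) {p : ℕ}
    (hp : p.Prime) (hpk : (p : ZMod k) = m) (hpq : q < p) : ‖coef χ lam m k p‖ = 1 := by
  unfold coef
  rw [if_pos ⟨hp.one_le, (ZMod.natCast_eq_natCast_iff' _ _ _).mp hpk⟩, norm_mul, norm_eTwist,
    mul_one]
  have : IsUnit (p : ZMod q) := by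
    rw [ZMod.isUnit_iff_coprime]
    exact Nat.coprime_of_lt_prime (NeZero.ne q) hpq hp
  exact χ.unit_norm_eq_one this.unit

/-- Bounds for the inner sums of the mixed coefficient: the trivial one, and the one coming from
the type II estimate when `d` is small. For `p, r ≡ m` the congruence condition on `d p r` is a
condition on `d` alone. -/
lemma norm_inner_le {q : ℕ} (χ : DirichletCharacter ℂ q) (lam : ℝ) (m k : ℕ) {y N : ℕ}
    {U V : Finset ℕ}
    (hU : ∀ p ∈ U, p.Prime ∧ (p : ZMod k) = m) (hV : ∀ p ∈ V, p.Prime ∧ (p : ZMod k) = m)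
    {ω : ℕ → ℂ} (hω : ∀ p, ‖ω p‖ ≤ 1)
    (hω0 : ∀ p, p.Prime → y < p → p ∉ U → p ∉ V → ω p = 0) {σ : ℝ} (hσ : 1 < σ) {δ : ℝ}
    (hII : ∀ n : ℕ, 1 ≤ n → n ≤ N → ∀ α β : ℕ → ℂ, (∀ p ∈ U, ‖α p‖ ≤ 1 / p) →
        (∀ p ∈ V, ‖β p‖ ≤ 1 / p) →
        ‖∑ p ∈ U, ∑ r ∈ V, α p * β r * eTwist (lam * n * p * r)‖ ≤ δ) {d : ℕ} (hd : d ≠ 0)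
    (hdU : deg U d = 0) (hdV : deg V d = 0) :
    ‖∑ p ∈ U, ∑ r ∈ V, coef χ lam m k (d * p * r) * mext ω (d * p * r)
        / ((d * p * r : ℕ) : ℂ) ^ (σ : ℂ)‖ ≤
      frec ((Finset.range (y + 1)).filter Nat.Prime) d *
        if d ≤ N then δ else (∑ p ∈ U, 1 / (p : ℝ)) * ∑ p ∈ V, 1 / (p : ℝ) := by
  by_cases hf : ∀ p, p.Prime → p ∣ d → p ∈ (Finset.range (y + 1)).filter Nat.Prime
  swap
  · push Not at hf
    obtain ⟨l, hl, hld, hls⟩ := hf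
    have hly : y < l := by
      by_contra! h
      exact hls (Finset.mem_filter.mpr ⟨Finset.mem_range.mpr (by omega), hl⟩)
    have hl0 := hω0 l hl hly (not_dvd_of_deg_eq_zero hd hdU hl hld)
      (not_dvd_of_deg_eq_zero hd hdV hl hld)
    have hz : ∑ p ∈ U, ∑ r ∈ V, coef χ lam m k (d * p * r) * mext ω (d * p * r)
        / ((d * p * r : ℕ) : ℂ) ^ (σ : ℂ) = 0 := by
      refine Finset.sum_eq_zero fun p hp => Finset.sum_eq_zero fun r hr => ?_
      rw [mext_eq_zero hl (mul_ne_zero (mul_ne_zero hd (hU p hp).1.ne_zero) (hV r hr).1.ne_zero)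
        ((hld.mul_right p).mul_right r) hl0, mul_zero, zero_div]
    have hz' : frec ((Finset.range (y + 1)).filter Nat.Prime) d = 0 := by
      refine Set.indicator_of_notMem (fun h => hls ?_) _
      exact Nat.mem_factoredNumbers'.mp h l hl hld
    rw [hz, hz', norm_zero, zero_mul]
  rw [frec_of_mem hf]
  set α : ℕ → ℂ := fun p => χ (p : ZMod q) * ω p / (p : ℂ) ^ (σ : ℂ) with hα
  have hpow : ∀ p : ℕ, p ≠ 0 → ‖((p : ℂ) ^ (σ : ℂ))⁻¹‖ ≤ 1 / p := by
    intro p hp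
    have h1 : (1 : ℝ) ≤ p := by exact_mod_cast Nat.pos_of_ne_zero hp
    rw [norm_inv, Complex.norm_natCast_cpow_of_pos (Nat.pos_of_ne_zero hp), Complex.ofReal_re,
      ← one_div]
    gcongr
    calc (p : ℝ) = (p : ℝ) ^ (1 : ℝ) := (Real.rpow_one _).symm
      _ ≤ (p : ℝ) ^ σ := Real.rpow_le_rpow_of_exponent_le h1 hσ.le
  have hαp : ∀ p : ℕ, p ≠ 0 → ‖α p‖ ≤ 1 / p := by
    intro p hp
    rw [hα]
    simp only [div_eq_mul_inv (_ * _), norm_mul]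
    refine (mul_le_of_le_one_left (norm_nonneg _) ?_).trans (hpow p hp)
    exact mul_le_one₀ (χ.norm_le_one _) (norm_nonneg _) (hω p)
  set B : ℂ := (if (d * m * m : ZMod k) = m then χ (d : ZMod q) else 0) * mext ω d
    * ((d : ℂ) ^ (σ : ℂ))⁻¹ with hB
  have hBd : ‖B‖ ≤ (d : ℝ)⁻¹ := by
    rw [hB, norm_mul, norm_mul]
    refine (mul_le_of_le_one_left (norm_nonneg _) ?_).trans ((hpow d hd).trans_eq (one_div _))
    refine mul_le_one₀ ?_ (norm_nonneg _) (norm_mext_le hω d)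
    split_ifs
    · exact χ.norm_le_one _
    · simp
  have hterm : ∀ p ∈ U, ∀ r ∈ V, coef χ lam m k (d * p * r) * mext ω (d * p * r)
        / ((d * p * r : ℕ) : ℂ) ^ (σ : ℂ) = B * (α p * α r * eTwist (lam * d * p * r)) := by
    intro p hp r hr
    have hp0 := (hU p hp).1.ne_zero
    have hr0 := (hV r hr).1.ne_zero
    have hdpr : d * p * r ≠ 0 := mul_ne_zero (mul_ne_zero hd hp0) hr0
    have hiff : (1 ≤ d * p * r ∧ d * p * r % k = m % k) ↔ (d * m * m : ZMod k) = m := by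
      rw [and_iff_right (Nat.one_le_iff_ne_zero.mpr hdpr), ← ZMod.natCast_eq_natCast_iff']
      push_cast
      rw [(hU p hp).2, (hV r hr).2]
    have h1 : ((d * p * r : ℕ) : ℂ) ^ (σ : ℂ)
        = (d : ℂ) ^ (σ : ℂ) * (p : ℂ) ^ (σ : ℂ) * (r : ℂ) ^ (σ : ℂ) := by
      rw [Nat.cast_mul (d * p), Complex.natCast_mul_natCast_cpow, Nat.cast_mul,
        Complex.natCast_mul_natCast_cpow]
    rw [h1, mext_mul _ (mul_ne_zero hd hp0) hr0, mext_mul _ hd hp0, mext_prime _ (hU p hp).1,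
      mext_prime _ (hV r hr).1, hB, hα]
    unfold coef
    simp only [hiff]
    split_ifs
    · push_cast
      rw [map_mul, map_mul, ← mul_assoc lam, ← mul_assoc lam]
      simp only [div_eq_mul_inv, mul_inv]
      ring
    · simp
  rw [Finset.sum_congr rfl fun p hp => Finset.sum_congr rfl fun r hr => hterm p hp r hr]
  simp_rw [← Finset.mul_sum]
  rw [norm_mul]
  refine mul_le_mul hBd ?_ (norm_nonneg _) (by positivity)
  split_ifs with hdN
  · exact hII d (Nat.pos_of_ne_zero hd) hdN α α (fun p hp => hαp p (hU p hp).1.ne_zero)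
      fun p hp => hαp p (hV p hp).1.ne_zero
  · rw [Finset.sum_mul_sum]
    refine (norm_sum_le _ _).trans (Finset.sum_le_sum fun p hp => ?_)
    refine (norm_sum_le _ _).trans (Finset.sum_le_sum fun r hr => ?_)
    rw [norm_mul, norm_mul, norm_eTwist, mul_one]
    exact mul_le_mul (hαp p (hU p hp).1.ne_zero) (hαp r (hV r hr).1.ne_zero) (norm_nonneg _)
      (by positivity)

/-- The mixed coefficient is negligible compared with the product of the reciprocal sums. -/
lemma norm_mixed_le {q : ℕ} (χ : DirichletCharacter ℂ q) (lam : ℝ) (m k : ℕ) {y N : ℕ}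
    {U V : Finset ℕ} (hUV : Disjoint U V)
    (hU : ∀ p ∈ U, p.Prime ∧ (p : ZMod k) = m) (hV : ∀ p ∈ V, p.Prime ∧ (p : ZMod k) = m)
    {ω : ℕ → ℂ} (hω : ∀ p, ‖ω p‖ ≤ 1)
    (hω0 : ∀ p, p.Prime → y < p → p ∉ U → p ∉ V → ω p = 0) {σ : ℝ} (hσ : 1 < σ) {δ δ' : ℝ}
    (hδ : 0 ≤ δ)
    (hII : ∀ n : ℕ, 1 ≤ n → n ≤ N → ∀ α β : ℕ → ℂ, (∀ p ∈ U, ‖α p‖ ≤ 1 / p) →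
        (∀ p ∈ V, ‖β p‖ ≤ 1 / p) →
        ‖∑ p ∈ U, ∑ r ∈ V, α p * β r * eTwist (lam * n * p * r)‖ ≤ δ)
    (hN : ∑' d, frec ((Finset.range (y + 1)).filter Nat.Prime) (d + (N + 1)) ≤ δ') :
    ‖G (cut U V 1 1 (coef χ lam m k)) ω σ‖ ≤
      (∏ p ∈ (Finset.range (y + 1)).filter Nat.Prime, (1 - (p : ℝ)⁻¹)⁻¹) * δ +
        δ' * ((∑ p ∈ U, 1 / (p : ℝ)) * ∑ p ∈ V, 1 / (p : ℝ)) := by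
  set s := (Finset.range (y + 1)).filter Nat.Prime with hs
  set T := (∑ p ∈ U, 1 / (p : ℝ)) * ∑ p ∈ V, 1 / (p : ℝ) with hT
  have hT0 : 0 ≤ T := mul_nonneg (Finset.sum_nonneg fun _ _ => by positivity)
    (Finset.sum_nonneg fun _ _ => by positivity)
  have hsp : ∀ p ∈ s, p.Prime := fun p hp => (Finset.mem_filter.mp hp).2
  have hfs := hasSum_frec hsp
  rw [G_cut_one_one (norm_coef_le χ lam m k) (coef_zero χ lam m k) hσ hUV (fun p hp => (hU p hp).1)
    (fun p hp => (hV p hp).1) hω]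
  set g : ℕ → ℂ := fun d => if d ≠ 0 ∧ deg U d = 0 ∧ deg V d = 0 then
      ∑ p ∈ U, ∑ r ∈ V, coef χ lam m k (d * p * r) * mext ω (d * p * r)
        / ((d * p * r : ℕ) : ℂ) ^ (σ : ℂ) else 0 with hg
  have hgd : ∀ d, ‖g d‖ ≤ frec s d * if d ≤ N then δ else T := by
    intro d
    rw [hg]
    dsimp only
    split_ifs with h h'
    · have := norm_inner_le χ lam m k hU hV hω hω0 hσ hII h.1 h.2.1 h.2.2
      rwa [if_pos h'] at this
    · have := norm_inner_le χ lam m k hU hV hω hω0 hσ hII h.1 h.2.1 h.2.2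
      rwa [if_neg h'] at this
    · rw [norm_zero]; exact mul_nonneg (frec_nonneg _ _) hδ
    · rw [norm_zero]; exact mul_nonneg (frec_nonneg _ _) hT0
  have hgs : Summable g := by
    refine Summable.of_norm_bounded (hfs.summable.mul_right (δ + T)) fun d => (hgd d).trans ?_
    refine mul_le_mul_of_nonneg_left ?_ (frec_nonneg _ _)
    split_ifs <;> linarith
  rw [← hgs.sum_add_tsum_nat_add (N + 1)]
  refine (norm_add_le _ _).trans (add_le_add ?_ ?_)
  · calc ‖∑ d ∈ Finset.range (N + 1), g d‖ ≤ ∑ d ∈ Finset.range (N + 1), frec s d * δ := by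
          refine (norm_sum_le _ _).trans (Finset.sum_le_sum fun d hd => ?_)
          have := hgd d
          rwa [if_pos (by have := Finset.mem_range.mp hd; omega)] at this
      _ = (∑ d ∈ Finset.range (N + 1), frec s d) * δ := by rw [Finset.sum_mul]
      _ ≤ _ := mul_le_mul_of_nonneg_right
        (sum_le_hasSum _ (fun d _ => frec_nonneg s d) hfs) hδ
  · have hs2 : Summable fun d => frec s (d + (N + 1)) := (summable_nat_add_iff (N + 1)).mpr
      hfs.summable
    refine (tsum_of_norm_bounded (hs2.hasSum.mul_right T) fun d => ?_).trans
      (mul_le_mul_of_nonneg_right hN hT0)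
    have := hgd (d + (N + 1))
    rwa [if_neg (by omega)] at this

/-! ### Existence of infinitely many zeros -/

/-- The linear coefficient when the twist is supported on `U ∪ V`. -/
lemma G_cut_one_zero {a : ℕ → ℂ} (ha0 : a 0 = 0) {σ : ℝ} {U V : Finset ℕ} (hUV : Disjoint U V)
    (hU : ∀ p ∈ U, p.Prime) {ω : ℕ → ℂ} (hω : ∀ p, p.Prime → p ∉ U → p ∉ V → ω p = 0) :
    G (cut U V 1 0 a) ω σ = ∑ p ∈ U, a p * ω p / (p : ℂ) ^ (σ : ℂ) := by
  unfold G
  rw [tsum_eq_sum (s := U)]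
  · refine Finset.sum_congr rfl fun p hp => ?_
    have hpV : p ∉ V := Finset.disjoint_left.mp hUV hp
    unfold cut
    rw [deg_prime _ (hU p hp), deg_prime _ (hU p hp), if_pos hp, if_neg hpV, if_pos ⟨rfl, rfl⟩,
      mext_prime _ (hU p hp)]
  · intro n hnU
    unfold cut
    split_ifs with h
    swap
    · simp
    rcases eq_or_ne n 0 with rfl | hn
    · simp [ha0]
    obtain ⟨p, hp, hpn⟩ : ∃ p ∈ U, n.factorization p ≠ 0 := by
      by_contra! hcon
      have : deg U n = 0 := Finset.sum_eq_zero hcon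
      omega
    obtain ⟨d, rfl⟩ := Nat.dvd_of_factorization_pos hpn
    have hd : d ≠ 0 := right_ne_zero_of_mul hn
    have hpp := hU p hp
    rw [deg_mul _ hpp.ne_zero hd, deg_mul _ hpp.ne_zero hd, deg_prime _ hpp, if_pos hp] at h
    have hd1 : d ≠ 1 := by
      rintro rfl
      exact hnU (by rwa [mul_one])
    obtain ⟨l, hl, hld⟩ := Nat.exists_prime_and_dvd hd1
    rw [mext_eq_zero hl hn (hld.mul_left p) (hω l hl
      (not_dvd_of_deg_eq_zero hd (by omega) hl hld) (not_dvd_of_deg_eq_zero hd (by omega) hl hld))]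
    simp

lemma cut_swap (U V : Finset ℕ) (i j : ℕ) (a : ℕ → ℂ) : cut U V i j a = cut V U j i a := by
  funext n
  simp only [cut, and_comm]

/-- The twist used in the main argument: `u` at the primes up to `y`, the value cancelling the
phase of `a p` at the primes of `U ∪ V`, and `0` elsewhere. -/
noncomputable def test (a : ℕ → ℂ) (y : ℕ) (U V : Finset ℕ) (u : ℂ) (p : ℕ) : ℂ :=
  if p ≤ y then u else if p ∈ U ∨ p ∈ V then (starRingEnd ℂ) (a p) else 0

lemma norm_test_le {a : ℕ → ℂ} (ha : ∀ n, ‖a n‖ ≤ 1) {y : ℕ} {U V : Finset ℕ} {u : ℂ}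
    (hu : ‖u‖ ≤ 1) (p : ℕ) : ‖test a y U V u p‖ ≤ 1 := by
  unfold test
  split_ifs
  · exact hu
  · rw [RCLike.norm_conj]; exact ha p
  · simp

lemma test_eq_zero {a : ℕ → ℂ} {y : ℕ} {U V : Finset ℕ} {u : ℂ} {p : ℕ} (hy : y < p)
    (hU : p ∉ U) (hV : p ∉ V) : test a y U V u p = 0 := by
  unfold test
  rw [if_neg (by omega), if_neg (by tauto)]

lemma diffContOnCl_test {a b : ℕ → ℂ} (ha : ∀ n, ‖a n‖ ≤ 1) (hb : ∀ n, ‖b n‖ ≤ 1) (hb0 : b 0 = 0)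
    {y : ℕ} {U V : Finset ℕ} {σ : ℝ} (hσ : 1 < σ) :
    DiffContOnCl ℂ (fun u => G b (test a y U V u) σ) (Metric.ball 0 1) := by
  constructor
  · refine differentiableOn_G hb hb0 hσ (S := fun _ => (σ : ℂ)) Metric.isOpen_ball (fun p => ?_)
      (differentiableOn_const _) (fun z hz => norm_test_le ha (mem_ball_zero_iff.mp hz).le)
      (fun z _ => by simp)
    unfold test
    split_ifs <;> fun_prop
  · rw [closure_ball _ one_ne_zero]
    have hcont : Continuous fun u : ℂ => (test a y U V u, (σ : ℂ)) := by
      refine (continuous_pi fun p => ?_).prodMk continuous_const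
      unfold test
      split_ifs <;> fun_prop
    exact ContinuousOn.comp (g := fun x : (ℕ → ℂ) × ℂ => G b x.1 x.2) (continuousOn_G hb hb0 hσ)
      hcont.continuousOn fun u hu =>
        ⟨norm_test_le ha (by simpa using hu), by simp⟩

/-- By the maximum principle in the variable `u`, some unimodular `u` makes the product of the two
linear coefficients at least as large as it is at `u = 0`, where it is explicit. -/
lemma exists_large_linear {a : ℕ → ℂ} (ha : ∀ n, ‖a n‖ ≤ 1) (ha0 : a 0 = 0) {y : ℕ}
    {U V : Finset ℕ} (hUV : Disjoint U V) (hU : ∀ p ∈ U, p.Prime ∧ y < p ∧ ‖a p‖ = 1)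
    (hV : ∀ p ∈ V, p.Prime ∧ y < p ∧ ‖a p‖ = 1) {σ : ℝ} (hσ : 1 < σ) :
    ∃ u : ℂ, ‖u‖ = 1 ∧ (∑ p ∈ U, 1 / (p : ℝ) ^ σ) * (∑ p ∈ V, 1 / (p : ℝ) ^ σ) ≤
      ‖G (cut U V 1 0 a) (test a y U V u) σ * G (cut U V 0 1 a) (test a y U V u) σ‖ := by
  have hd : DiffContOnCl ℂ (fun u => G (cut U V 1 0 a) (test a y U V u) σ *
      G (cut U V 0 1 a) (test a y U V u) σ) (Metric.ball 0 1) := by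
    have h1 := diffContOnCl_test (y := y) (U := U) (V := V) ha
      (norm_cut_le (U := U) (V := V) (i := 1) (j := 0) ha) (cut_zero ha0) hσ
    have h2 := diffContOnCl_test (y := y) (U := U) (V := V) ha
      (norm_cut_le (U := U) (V := V) (i := 0) (j := 1) ha) (cut_zero ha0) hσ
    exact ⟨h1.1.mul h2.1, h1.2.mul h2.2⟩
  obtain ⟨u, hu, hmax⟩ := Complex.exists_mem_frontier_isMaxOn_norm Metric.isBounded_ball
    ⟨0, Metric.mem_ball_self one_pos⟩ hd
  rw [frontier_ball _ one_ne_zero, mem_sphere_zero_iff_norm] at hu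
  refine ⟨u, hu, ?_⟩
  have h0 := hmax (subset_closure (Metric.mem_ball_self (one_pos : (0 : ℝ) < 1)))
  simp only [Set.mem_ofPred_eq, Function.comp_apply] at h0
  refine le_trans (le_of_eq ?_) h0
  have hz : ∀ p, p.Prime → p ∉ U → p ∉ V → test a y U V 0 p = 0 := by
    intro p _ h1 h2
    unfold test
    split_ifs <;> tauto
  have hterm : ∀ p, p.Prime ∧ y < p ∧ ‖a p‖ = 1 → p ∈ U ∨ p ∈ V →
      a p * test a y U V 0 p / (p : ℂ) ^ (σ : ℂ) = ((1 / (p : ℝ) ^ σ : ℝ) : ℂ) := by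
    intro p hp hp'
    unfold test
    rw [if_neg (by omega), if_pos hp', Complex.mul_conj', hp.2.2]
    push_cast
    rw [Complex.ofReal_cpow (by positivity)]
    simp
  rw [G_cut_one_zero ha0 hUV (fun p hp => (hU p hp).1) hz, cut_swap U V 0 1,
    G_cut_one_zero ha0 hUV.symm (fun p hp => (hV p hp).1) (fun p hp h1 h2 => hz p hp h2 h1),
    Finset.sum_congr rfl fun p hp => hterm p (hU p hp) (Or.inl hp),
    Finset.sum_congr rfl fun p hp => hterm p (hV p hp) (Or.inr hp),
    ← Complex.ofReal_sum, ← Complex.ofReal_sum, ← Complex.ofReal_mul, Complex.norm_real,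
    Real.norm_of_nonneg]
  exact mul_nonneg (Finset.sum_nonneg fun _ _ => by positivity)
    (Finset.sum_nonneg fun _ _ => by positivity)

/-- For `σ` close to `1`, the terms `p ^ (-σ)` over a finite set are at least half of `1 / p`. -/
lemma exists_exponent (P : Finset ℕ) (hP : ∀ p ∈ P, p.Prime) {σ0 : ℝ} (h0 : 1 < σ0) :
    ∃ σ ∈ Set.Ioc 1 σ0, ∀ p ∈ P, 1 / (p : ℝ) / 2 ≤ 1 / (p : ℝ) ^ σ := by
  have h1 : ∀ p ∈ P, ∀ᶠ σ in 𝓝[>] (1 : ℝ), 1 / (p : ℝ) / 2 ≤ 1 / (p : ℝ) ^ σ := by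
    intro p hp
    have hp0 : (0 : ℝ) < p := by exact_mod_cast (hP p hp).pos
    have hc : ContinuousAt (fun σ : ℝ => 1 / (p : ℝ) ^ σ) 1 :=
      continuousAt_const.div (Real.continuousAt_const_rpow hp0.ne') (by positivity)
    have hlt : 1 / (p : ℝ) / 2 < 1 / (p : ℝ) ^ (1 : ℝ) := by
      rw [Real.rpow_one]
      exact half_lt_self (by positivity)
    exact ((hc.eventually_const_lt hlt).filter_mono nhdsWithin_le_nhds).mono fun σ h => h.le
  have h2 : ∀ᶠ σ in 𝓝[>] (1 : ℝ), ∀ p ∈ P, 1 / (p : ℝ) / 2 ≤ 1 / (p : ℝ) ^ σ :=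
    (Finset.eventually_all P).mpr h1
  obtain ⟨σ, hσ, hσ'⟩ := (h2.and (Ioc_mem_nhdsGT h0)).exists
  exact ⟨σ, hσ', hσ⟩

/-- The numerical contradiction: a product of two large quantities cannot be bounded linearly in
terms of them. -/
lemma no_linear_bound {C x z T δ L : ℝ} (hC : 1 ≤ C) (hT : T = x * z) (hδ : C * δ = 1 / 16)
    (hx : 32 * (C ^ 2 + 8 * (C ^ 2 * (Real.log C + 1) + C) + 16 * C ^ 2) ≤ x)
    (hz : 32 * (C ^ 2 + 8 * (C ^ 2 * (Real.log C + 1) + C) + 16 * C ^ 2) ≤ z)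
    (hL : L ≤ Real.log C + 2 * (x + z))
    (h : T / 4 ≤ C * (C * 1 + δ * T) + 8 * (C ^ 2 * (L + 1) + C)) : False := by
  have hl := Real.log_nonneg hC
  set D := C ^ 2 + 8 * (C ^ 2 * (Real.log C + 1) + C) with hD
  have hC2 : 1 ≤ C ^ 2 := one_le_pow₀ hC
  have hCl : 0 ≤ C ^ 2 * (Real.log C + 1) := by positivity
  have hD1 : 1 ≤ D := by linarith
  have h1 : C ^ 2 * L ≤ C ^ 2 * (Real.log C + 2 * (x + z)) := by gcongr
  have h2 : C * (δ * T) = T / 16 := by rw [← mul_assoc, hδ]; ring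
  have h3 : 3 / 16 * T ≤ D + 16 * C ^ 2 * (x + z) := by
    rw [hD]
    nlinarith
  have hx1 : 1 ≤ x := by linarith
  have hz1 : 1 ≤ z := by linarith
  have h4 : 32 * (D + 16 * C ^ 2) * z ≤ T := by rw [hT]; gcongr
  have h5 : 32 * (D + 16 * C ^ 2) * x ≤ T := by
    rw [hT, mul_comm x]; gcongr
  have h6 : D * 1 ≤ D * (x + z) := by gcongr; linarith
  have h7 : 0 < (D + 16 * C ^ 2) * (x + z) := by positivity
  nlinarith

/-- The main result, for a character that need not be primitive. -/
theorem infinite_zeros {q : ℕ} [NeZero q] (χ : DirichletCharacter ℂ q) {lam : ℝ}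
    (hirr : Irrational lam) {m k : ℕ} (hm : 1 ≤ m) (hmk : m ≤ k) (hcop : Nat.Coprime m k) {η : ℝ}
    (hη : 0 < η) :
    {s : ℂ | 1 < s.re ∧ s.re < 1 + η ∧ G (coef χ lam m k) (fun _ => 1) s = 0}.Infinite := by
  by_contra hinf
  rw [Set.not_infinite] at hinf
  have : NeZero k := ⟨by omega⟩
  set a := coef χ lam m k with ha_def
  have ha : ∀ n, ‖a n‖ ≤ 1 := norm_coef_le χ lam m k
  have ha0 : a 0 = 0 := coef_zero χ lam m k
  have hunit : IsUnit (m : ZMod k) := (ZMod.isUnit_iff_coprime m k).mpr hcop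
  have hne : ∃ n, a n ≠ 0 := by
    obtain ⟨p, hpq, hp, hpm⟩ := Nat.forall_exists_prime_gt_and_modEq q (NeZero.ne k) hcop
    refine ⟨p, fun h => ?_⟩
    have := norm_coef_prime χ lam m k hp ((ZMod.natCast_eq_natCast_iff _ _ _).mpr hpm) hpq
    rw [← ha_def, h, norm_zero] at this
    exact zero_ne_one this
  have h0 : 1 < 1 + η / 2 := by linarith
  obtain ⟨y, hqy, hy⟩ := polydisc_ne_zero ha ha0 h0 (fun ω hω σ hσ =>
    torus_ne_zero ha ha0 hne hinf hω hσ.1 (by linarith [hσ.2])) q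
  set s := (Finset.range (y + 1)).filter Nat.Prime with hs
  have hsp : ∀ p ∈ s, p.Prime := fun p hp => (Finset.mem_filter.mp hp).2
  have hsy : ∀ p ∈ s, p ≤ y := fun p hp => by
    have := Finset.mem_range.mp (Finset.mem_filter.mp hp).1
    omega
  set C := ∏ p ∈ s, (1 - (p : ℝ)⁻¹)⁻¹ with hC
  have hC1 : 1 ≤ C := one_le_prod hsp
  set δ := 1 / (16 * C) with hδ
  have hδ0 : 0 < δ := by positivity
  -- the `y`-smooth numbers beyond `N` contribute at most `δ`
  obtain ⟨N, hN⟩ : ∃ N, ∑' d, frec s (d + (N + 1)) ≤ δ := by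
    obtain ⟨N, hN⟩ := ((((tendsto_add_atTop_iff_nat 1).mpr
      (tendsto_sum_nat_add (frec s)))).eventually_lt_const hδ0).exists
    exact ⟨N, hN.le⟩
  set R := 32 * (C ^ 2 + 8 * (C ^ 2 * (Real.log C + 1) + C) + 16 * C ^ 2) with hR
  obtain ⟨U, V, hU, hV, hUV, hRU, hRV, hII⟩ :=
    exists_prime_sets hirr hunit N y R one_pos
  have hUVp : ∀ p ∈ U ∪ V, p.Prime ∧ y < p := by
    intro p hp
    rcases Finset.mem_union.mp hp with h | h
    · exact ⟨(hU p h).1, (hU p h).2.2⟩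
    · exact ⟨(hV p h).1, (hV p h).2.2⟩
  obtain ⟨σ, hσ, hσp⟩ := exists_exponent (U ∪ V) (fun p hp => (hUVp p hp).1) h0
  have hnorm1 : ∀ p : ℕ, p.Prime ∧ (p : ZMod k) = m ∧ y < p → p.Prime ∧ y < p ∧ ‖a p‖ = 1 :=
    fun p hp => ⟨hp.1, hp.2.2, norm_coef_prime χ lam m k hp.1 hp.2.1 (by omega)⟩
  obtain ⟨u, hu, hlarge⟩ := exists_large_linear ha ha0 hUV (fun p hp => hnorm1 p (hU p hp))
    (fun p hp => hnorm1 p (hV p hp)) hσ.1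
  set ω := test a y U V u with hω_def
  have hω : ∀ p, ‖ω p‖ ≤ 1 := norm_test_le ha hu.le
  have hω0 : ∀ p, p.Prime → y < p → p ∉ U → p ∉ V → ω p = 0 :=
    fun p _ h1 h2 h3 => test_eq_zero h1 h2 h3
  have hmem_s : ∀ {p}, p.Prime → p ∉ s → y < p := by
    intro p hp hps
    by_contra! hle
    exact hps (Finset.mem_filter.mpr ⟨Finset.mem_range.mpr (by omega), hp⟩)
  have hPs : ∀ p ∈ s ∪ (U ∪ V), p.Prime := by
    intro p hp
    rcases Finset.mem_union.mp hp with h | h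
    · exact hsp p h
    · exact (hUVp p h).1
  set x := ∑ p ∈ U, 1 / (p : ℝ) with hx
  set z := ∑ p ∈ V, 1 / (p : ℝ) with hz
  have hmixed := mixed_bound ha ha0 hσ.1 hUV hω (C := C) (one_le_prod hPs) (by
      intro z w hz hw
      refine hy _ (fun p => ?_) σ hσ
      refine ⟨norm_scale_le hz hw hω p, fun hp => ?_⟩
      have h1 : p ∉ U := fun h => by have := (hU p h).2.2; omega
      have h2 : p ∉ V := fun h => by have := (hV p h).2.2; omega
      rw [scale, if_neg h1, if_neg h2, hω_def, test, if_pos hp, hu]) (by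
      intro z w hz hw
      refine norm_G_le_prod ha ha0 hσ.1 (norm_scale_le hz hw hω) hPs fun n _ _ p hp _ hps => ?_
      simp only [Finset.mem_union, not_or] at hps
      rw [scale, if_neg hps.2.1, if_neg hps.2.2]
      exact hω0 p hp (hmem_s hp hps.1) hps.2.1 hps.2.2) (by
      refine norm_G_le_prod (norm_cut_le ha) (cut_zero ha0) hσ.1 hω hsp
        fun n hn hcut p hp hpn hps => ?_
      have hdeg : deg U n = 0 ∧ deg V n = 0 := by
        by_contra hcon
        exact hcut (if_neg hcon)
      exact hω0 p hp (hmem_s hp hps) (not_dvd_of_deg_eq_zero hn hdeg.1 hp hpn)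
        (not_dvd_of_deg_eq_zero hn hdeg.2 hp hpn))
  have h11 := norm_mixed_le χ lam m k hUV (fun p hp => ⟨(hU p hp).1, (hU p hp).2.1⟩)
    (fun p hp => ⟨(hV p hp).1, (hV p hp).2.1⟩) hω hω0 hσ.1 zero_le_one hII hN
  have hhalf : ∀ W ⊆ U ∪ V, (∑ p ∈ W, 1 / (p : ℝ)) / 2 ≤ ∑ p ∈ W, 1 / (p : ℝ) ^ σ := by
    intro W hW
    rw [Finset.sum_div]
    exact Finset.sum_le_sum fun p hp => hσp p (hW hp)
  have hx0 : 0 ≤ x := Finset.sum_nonneg fun _ _ => by positivity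
  have hz0 : 0 ≤ z := Finset.sum_nonneg fun _ _ => by positivity
  have hlow : x * z / 4 ≤ (∑ p ∈ U, 1 / (p : ℝ) ^ σ) * ∑ p ∈ V, 1 / (p : ℝ) ^ σ := by
    calc x * z / 4 = (x / 2) * (z / 2) := by ring
      _ ≤ _ := mul_le_mul (hhalf U Finset.subset_union_left) (hhalf V Finset.subset_union_right)
        (by positivity) (Finset.sum_nonneg fun _ _ => by positivity)
  have hlogM : Real.log (∏ p ∈ s ∪ (U ∪ V), (1 - (p : ℝ)⁻¹)⁻¹) ≤ Real.log C + 2 * (x + z) := by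
    have hdisj : Disjoint s (U ∪ V) := by
      rw [Finset.disjoint_left]
      intro p hp hp'
      have := hsy p hp
      have := (hUVp p hp').2
      omega
    have h1 := one_le_prod fun p hp => (hUVp p hp).1
    rw [Finset.prod_union hdisj, Real.log_mul (by positivity) (by positivity)]
    gcongr
    have h2 := Real.log_le_log (by positivity) (prod_le_exp fun p hp => (hUVp p hp).1)
    rwa [Real.log_exp, Finset.sum_union hUV] at h2
  refine no_linear_bound (x := x) (z := z) (T := x * z) (δ := δ) hC1 rfl
    (by rw [hδ]; field_simp) hRU hRV hlogM
    ((hlow.trans hlarge).trans (hmixed.trans ?_))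
  gcongr

lemma G_one_coef {q : ℕ} (χ : DirichletCharacter ℂ q) (lam : ℝ) (m k : ℕ) (s : ℂ) :
    G (coef χ lam m k) (fun _ => 1) s = ∑' n : ℕ, if 1 ≤ n ∧ n % k = m % k then
          χ (n : ZMod q) * eTwist (lam * n) / (n : ℂ) ^ s else 0 := by
  unfold G
  refine tsum_congr fun n => ?_
  have : mext (fun _ => 1) n = 1 := by simp [mext, Finsupp.prod]
  rw [this, mul_one]
  unfold coef
  split_ifs <;> simp

end TZ

/-- For a primitive Dirichlet character `χ` mod `q₀ ≥ 1`, an irrational `0 < λ < 1`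
and `1 ≤ m ≤ k` with `gcd(m,k) = 1`, the twisted series
`∑_{n ≥ 1, n ≡ m (k)} χ(n) e(λn) n^{-s}` has, for every `η > 0`, infinitely many
zeros with `1 < Re s < 1 + η`; in particular, so does `∑_{n ≥ 1, n ≡ m (k)} e(λn) n^{-s}`. -/
theorem twisted_dirichlet_L_infinitely_many_zeros
    (q₀ : ℕ) (hq₀ : 1 ≤ q₀) (χ : DirichletCharacter ℂ q₀) (hχ : χ.IsPrimitive)
    (lam : ℝ) (hlam0 : 0 < lam) (hlam1 : lam < 1) (hirr : Irrational lam)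
    (m k : ℕ) (hm : 1 ≤ m) (hmk : m ≤ k) (hcop : Nat.Coprime m k) :
    (∀ η : ℝ, 0 < η →
      {s : ℂ | 1 < s.re ∧ s.re < 1 + η ∧
        (∑' n : ℕ, if 1 ≤ n ∧ n % k = m % k then
          χ (n : ZMod q₀) * eTwist (lam * n) / (n : ℂ) ^ s else 0) = 0}.Infinite)
    ∧ (∀ η : ℝ, 0 < η →
      {s : ℂ | 1 < s.re ∧ s.re < 1 + η ∧
        (∑' n : ℕ, if 1 ≤ n ∧ n % k = m % k then
          eTwist (lam * n) / (n : ℂ) ^ s else 0) = 0}.Infinite) := by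
  have : NeZero q₀ := ⟨by omega⟩
  refine ⟨fun η hη => ?_, fun η hη => ?_⟩
  · have h := TZ.infinite_zeros χ hirr hm hmk hcop hη
    simp only [TZ.G_one_coef] at h
    exact h
  · have h := TZ.infinite_zeros (1 : DirichletCharacter ℂ 1) hirr hm hmk hcop hη
    have h1 : ∀ x : ZMod 1, (1 : DirichletCharacter ℂ 1) x = 1 := fun x =>
      MulChar.one_apply (isUnit_of_subsingleton x)
    simp only [TZ.G_one_coef, h1, one_mul] at h
    exact h
end

section
/- Let f : ℕ → ℂ be a multiplicative arithmetic function with f(1) = 1 whose Dirichlet series ∑_{n≥1} f(n)n^{−s} converges absolutely for Re s > 1, and for 0 < x ≤ 1 define σ*(F,x) = inf{σ₀ : F(x,1,1,s) ≠ 0 for all s with Re s > σ₀}, where F(x,1,1,s) = ∑_{n≥1} f(n)e(xn)n^{−s}. Let 0 < λ ≤ 1 and suppose σ*(F,λ) is finite with σ*(F,λ) ≥ 1. Then for every ε > 0 there exists δ > 0 such that for every x ∈ (0,1] with |x − λ| < δ one has σ*(F,x) ≤ σ*(F,λ) + ε. -/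
/-- The linear twist `F(x,1,1,s) = ∑_{n ≥ 1} f(n) e(xn) n^{-s}`. -/
noncomputable def Ftwist (f : ℕ → ℂ) (x : ℝ) (s : ℂ) : ℂ :=
  ∑' n : ℕ, if 1 ≤ n then f n * eTwist (x * n) / (n : ℂ) ^ s else 0

/-- The zero-free abscissa set `{σ₀ : F(x,1,1,s) ≠ 0 for all Re s > σ₀}`. -/
def zeroFreeSet (f : ℕ → ℂ) (x : ℝ) : Set ℝ :=
  {σ₀ : ℝ | ∀ s : ℂ, σ₀ < s.re → Ftwist f x s ≠ 0}

/-- `σ*(F,x) = inf {σ₀ : F(x,1,1,s) ≠ 0 for all s with Re s > σ₀}`. -/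
noncomputable def sigmaStar (f : ℕ → ℂ) (x : ℝ) : ℝ := sInf (zeroFreeSet f x)

open Filter Topology Set

/-! ### Hurwitz' theorem -/

/-- **Hurwitz' theorem**: if holomorphic functions converge uniformly on a preconnected open set to
a limit that has a zero but is not identically zero, they eventually have a zero too. -/
lemma hurwitz_eventually_exists_zero {U : Set ℂ} (hU : IsOpen U) (hUc : IsPreconnected U)
    {F : ℕ → ℂ → ℂ} {g : ℂ → ℂ} (hF : ∀ k, DifferentiableOn ℂ (F k) U)
    (hg : DifferentiableOn ℂ g U) (hlim : TendstoUniformlyOn F g atTop U)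
    {z₀ z₁ : ℂ} (hz₀ : z₀ ∈ U) (hgz₀ : g z₀ = 0) (hz₁ : z₁ ∈ U) (hgz₁ : g z₁ ≠ 0) :
    ∀ᶠ k in atTop, ∃ z ∈ U, F k z = 0 := by
  have hga : AnalyticOnNhd ℂ g U := hg.analyticOnNhd hU
  have hne : ∀ᶠ z in 𝓝[≠] z₀, g z ≠ 0 := by
    rcases (hga z₀ hz₀).eventually_eq_zero_or_eventually_ne_zero with h | h
    · exact absurd (hga.eqOn_zero_of_preconnected_of_eventuallyEq_zero hUc hz₀ h hz₁) hgz₁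
    · exact h
  rw [eventually_nhdsWithin_iff] at hne
  obtain ⟨r, hr, hball⟩ := Metric.eventually_nhds_iff_ball.1 (hne.and (hU.mem_nhds hz₀))
  have hr2 : 0 < r / 2 := half_pos hr
  have hsub : Metric.closedBall z₀ (r / 2) ⊆ Metric.ball z₀ r :=
    Metric.closedBall_subset_ball (by linarith)
  have hsubU : Metric.closedBall z₀ (r / 2) ⊆ U := fun z hz => (hball z (hsub hz)).2
  have hsph : Metric.sphere z₀ (r / 2) ⊆ Metric.closedBall z₀ (r / 2) :=
    Metric.sphere_subset_closedBall
  obtain ⟨y, hy, hmin⟩ := (isCompact_sphere z₀ (r / 2)).exists_isMinOn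
    (NormedSpace.sphere_nonempty.2 hr2.le) ((hg.continuousOn.mono (hsph.trans hsubU)).norm)
  have hm : 0 < ‖g y‖ :=
    norm_pos_iff.2 ((hball y (hsub (hsph hy))).1 (ne_of_mem_of_not_mem hy (by simp [hr2.ne])))
  -- With `m = min ‖g‖` on the circle, uniform error `m / 8` leaves
  -- `‖F k z - F k z₀‖ ≥ m - 2 * (m / 8)` there, while `‖F k z₀‖ < m / 8`.
  filter_upwards [Metric.tendstoUniformlyOn_iff.1 hlim (‖g y‖ / 8) (by positivity)] with k hk
  have h0 : ‖F k z₀‖ < ‖g y‖ / 8 := by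
    have := hk z₀ hz₀
    rwa [hgz₀, dist_zero_left] at this
  have hdiff : DiffContOnCl ℂ (F k) (Metric.ball z₀ (r / 2)) :=
    ((hF k).mono hsubU).diffContOnCl_ball le_rfl
  have hbound : ∀ z ∈ Metric.sphere z₀ (r / 2), ‖g y‖ / 2 ≤ ‖F k z - F k z₀‖ := by
    intro z hz
    have h1 := hk z (hsubU (hsph hz))
    have h2 : ‖g y‖ ≤ ‖g z‖ := hmin hz
    rw [dist_eq_norm] at h1
    have h3 : ‖g z‖ ≤ ‖g z - F k z‖ + ‖F k z - F k z₀‖ + ‖F k z₀‖ := by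
      calc ‖g z‖ = ‖(g z - F k z) + (F k z - F k z₀) + F k z₀‖ := by ring_nf
        _ ≤ _ := norm_add₃_le
    linarith
  have hnc : ∃ᶠ z in 𝓝 z₀, F k z ≠ F k z₀ := by
    intro hev
    have hev' : ∀ᶠ z in 𝓝 z₀, F k z = F k z₀ := by simpa using hev
    have hE := ((hF k).analyticOnNhd hU).eqOn_of_preconnected_of_eventuallyEq
      (analyticOnNhd_const (v := F k z₀)) hUc hz₀ hev'
    have := hbound y hy
    rw [hE (hsubU (hsph hy))] at this
    rw [sub_self, norm_zero] at this
    linarith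
  have h0mem : (0 : ℂ) ∈ Metric.ball (F k z₀) (‖g y‖ / 2 / 2) := by
    rw [Metric.mem_ball, dist_zero_left]
    linarith
  obtain ⟨z, hz, hz0⟩ := hdiff.ball_subset_image_closedBall hr2 hbound hnc h0mem
  exact ⟨z, hsubU hz, hz0⟩

/-! ### Dirichlet series with bounded weights -/

/-- The weighted Dirichlet series `∑_{n ≥ 1} f(n) w(n) n^{-s}`. -/
noncomputable def wSeries (f w : ℕ → ℂ) (s : ℂ) : ℂ :=
  ∑' n : ℕ, if 1 ≤ n then f n * w n / (n : ℂ) ^ s else 0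

/-- The dominating sequence `|f(n)| n^{-σ}`, set to `0` at `n = 0`. -/
noncomputable def majorant (f : ℕ → ℂ) (σ : ℝ) (n : ℕ) : ℝ :=
  if 1 ≤ n then ‖f n‖ / (n : ℝ) ^ σ else 0

/-- The weights `n^{-it}`, written with an exponential so that they are unimodular at `n = 0` too. -/
noncomputable def vertPhase (t : ℝ) (n : ℕ) : ℂ := Complex.exp ((-(t * Real.log n) : ℝ) * Complex.I)

lemma norm_vertPhase (t : ℝ) (n : ℕ) : ‖vertPhase t n‖ = 1 := Complex.norm_exp_ofReal_mul_I _

lemma norm_eTwist (x : ℝ) : ‖eTwist x‖ = 1 := by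
  have : (2 * Real.pi * Complex.I * x : ℂ) = ((2 * Real.pi * x : ℝ) : ℂ) * Complex.I := by
    push_cast; ring
  rw [eTwist, this, Complex.norm_exp_ofReal_mul_I]

lemma continuous_eTwist : Continuous eTwist := by
  unfold eTwist
  fun_prop

lemma majorant_nonneg (f : ℕ → ℂ) (σ : ℝ) (n : ℕ) : 0 ≤ majorant f σ n := by
  unfold majorant
  split_ifs <;> positivity

lemma summable_majorant {f : ℕ → ℂ} {σ : ℝ} (hσ : 1 < σ)
    (habs : ∀ s : ℂ, 1 < s.re →
      Summable (fun n : ℕ => ‖if 1 ≤ n then f n / (n : ℂ) ^ s else 0‖)) :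
    Summable (majorant f σ) := by
  refine (habs (σ : ℂ) (by simpa using hσ)).congr fun n => ?_
  unfold majorant
  split_ifs with h
  · rw [norm_div, Complex.norm_natCast_cpow_of_pos h, Complex.ofReal_re]
  · simp

lemma norm_term_le (f : ℕ → ℂ) (v : ℂ) {σ : ℝ} {s : ℂ} (hs : σ ≤ s.re) (n : ℕ) :
    ‖if 1 ≤ n then f n * v / (n : ℂ) ^ s else 0‖ ≤ majorant f σ n * ‖v‖ := by
  unfold majorant
  split_ifs with h
  · have hn : (1 : ℝ) ≤ n := by exact_mod_cast h
    rw [norm_div, norm_mul, Complex.norm_natCast_cpow_of_pos h, mul_div_right_comm]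
    gcongr
  · simp

lemma summable_term {f w : ℕ → ℂ} (hw : ∀ n, ‖w n‖ ≤ 1) {σ : ℝ} (hc : Summable (majorant f σ))
    {s : ℂ} (hs : σ ≤ s.re) :
    Summable (fun n : ℕ => if 1 ≤ n then f n * w n / (n : ℂ) ^ s else 0) :=
  Summable.of_norm_bounded hc fun n => (norm_term_le f (w n) hs n).trans
    (mul_le_of_le_one_right (majorant_nonneg f σ n) (hw n))

lemma differentiableOn_wSeries {f w : ℕ → ℂ} (hw : ∀ n, ‖w n‖ ≤ 1) {σ : ℝ}
    (hc : Summable (majorant f σ)) : DifferentiableOn ℂ (wSeries f w) {s | σ < s.re} := by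
  refine Complex.differentiableOn_tsum_of_summable_norm hc (fun n => ?_)
    (isOpen_lt continuous_const Complex.continuous_re) fun n s hs =>
      (norm_term_le f (w n) (le_of_lt hs) n).trans
        (mul_le_of_le_one_right (majorant_nonneg f σ n) (hw n))
  split_ifs with h
  · have hn : (n : ℂ) ≠ 0 := by exact_mod_cast (by omega : n ≠ 0)
    intro s _
    refine DifferentiableAt.differentiableWithinAt ?_
    exact (differentiableAt_const _).div (differentiableAt_id.const_cpow (Or.inl hn))
      (by simp [Complex.cpow_eq_zero_iff, hn])
  · exact differentiableOn_const _

lemma norm_wSeries_sub_le {f w w' : ℕ → ℂ} (hw : ∀ n, ‖w n‖ ≤ 1) (hw' : ∀ n, ‖w' n‖ ≤ 1) {σ : ℝ}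
    (hc : Summable (majorant f σ)) {s : ℂ} (hs : σ ≤ s.re) :
    ‖wSeries f w s - wSeries f w' s‖ ≤ ∑' n, majorant f σ n * ‖w n - w' n‖ := by
  unfold wSeries
  rw [← (summable_term hw hc hs).tsum_sub (summable_term hw' hc hs)]
  have hsum : Summable fun n => majorant f σ n * ‖w n - w' n‖ := by
    refine Summable.of_nonneg_of_le
      (fun n => mul_nonneg (majorant_nonneg f σ n) (norm_nonneg _)) (fun n => ?_) (hc.mul_right 2)
    refine mul_le_mul_of_nonneg_left ?_ (majorant_nonneg f σ n)
    linarith [norm_sub_le (w n) (w' n), hw n, hw' n]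
  refine tsum_of_norm_bounded hsum.hasSum fun n => ?_
  refine le_trans (le_of_eq ?_) (norm_term_le f (w n - w' n) hs n)
  split_ifs
  · ring_nf
  · simp

/-- Pointwise convergence of bounded weights gives uniform convergence on closed half-planes, by
dominated convergence. -/
lemma tendstoUniformlyOn_wSeries {f : ℕ → ℂ} {W : ℕ → ℕ → ℂ} {w : ℕ → ℂ}
    (hW : ∀ k n, ‖W k n‖ ≤ 1) (hw : ∀ n, ‖w n‖ ≤ 1)
    (hlim : ∀ n, Tendsto (fun k => W k n) atTop (𝓝 (w n))) {σ : ℝ}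
    (hc : Summable (majorant f σ)) :
    TendstoUniformlyOn (fun k => wSeries f (W k)) (wSeries f w) atTop {s | σ ≤ s.re} := by
  have h0 : Tendsto (fun k => ∑' n, majorant f σ n * ‖w n - W k n‖) atTop (𝓝 0) := by
    have := tendsto_tsum_of_dominated_convergence (𝓕 := atTop)
      (f := fun k n => majorant f σ n * ‖w n - W k n‖) (g := fun _ => (0 : ℝ))
      (bound := fun n => majorant f σ n * 2) (hc.mul_right 2) (fun n => ?_)
      (Eventually.of_forall fun k n => ?_)
    · simpa using this
    · simpa using ((tendsto_const_nhds (x := w n)).sub (hlim n)).norm.const_mul (majorant f σ n)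
    · rw [Real.norm_of_nonneg (mul_nonneg (majorant_nonneg f σ n) (norm_nonneg _))]
      refine mul_le_mul_of_nonneg_left ?_ (majorant_nonneg f σ n)
      linarith [norm_sub_le (w n) (W k n), hw n, hW k n]
  rw [Metric.tendstoUniformlyOn_iff]
  intro ε hε
  filter_upwards [h0.eventually (gt_mem_nhds hε)] with k hk s hs
  rw [dist_eq_norm]
  exact (norm_wSeries_sub_le hw (hW k) hc hs).trans_lt hk

/-- All weighted series whose first weight is unimodular are zero-free in a common half-plane,
because the terms with `n ≥ 2` decay at least like `2^{-Re s}`. -/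
lemma exists_forall_wSeries_ne_zero {f : ℕ → ℂ} (hf : f 1 = 1) {σ : ℝ}
    (hc : Summable (majorant f σ)) :
    ∃ M : ℝ, σ ≤ M ∧ ∀ w : ℕ → ℂ, (∀ n, ‖w n‖ ≤ 1) → ‖w 1‖ = 1 → ∀ s : ℂ, M ≤ s.re →
      wSeries f w s ≠ 0 := by
  obtain ⟨N, hN⟩ := pow_unbounded_of_one_lt (∑' n, majorant f σ n) (one_lt_two (α := ℝ))
  refine ⟨σ + N, by simp, fun w hw hw1 s hs h0 => ?_⟩
  have hσs : σ ≤ s.re := le_trans (by simp) hs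
  have hsum := summable_term hw hc hσs
  have hone : HasSum (fun n : ℕ => if n = 1 then w 1 else 0) (w 1) := hasSum_ite_eq 1 (w 1)
  have hsub : ‖∑' n : ℕ, ((if 1 ≤ n then f n * w n / (n : ℂ) ^ s else 0) -
      if n = 1 then w 1 else 0)‖ ≤ (∑' n, majorant f σ n) * (2 ^ N)⁻¹ := by
    refine tsum_of_norm_bounded (hc.hasSum.mul_right _) fun n => ?_
    rcases Nat.lt_or_ge n 2 with h | h
    · have hR : 0 ≤ majorant f σ n * ((2 : ℝ) ^ N)⁻¹ :=
        mul_nonneg (majorant_nonneg f σ n) (by positivity)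
      interval_cases n
      · simpa using hR
      · simpa [hf] using hR
    · have hn : (2 : ℝ) ≤ n := by exact_mod_cast h
      have h1 : 1 ≤ n := by omega
      rw [if_neg (by omega : n ≠ 1), sub_zero]
      refine (norm_term_le f (w n) hs n).trans ?_
      refine (mul_le_of_le_one_right (majorant_nonneg f _ n) (hw n)).trans ?_
      simp only [majorant, if_pos h1]
      rw [Real.rpow_add (by linarith), Real.rpow_natCast, ← div_div, div_eq_mul_inv (_ / _)]
      gcongr
  rw [hsum.tsum_sub hone.summable, hone.tsum_eq] at hsub
  change ‖wSeries f w s - w 1‖ ≤ _ at hsub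
  rw [h0, zero_sub, norm_neg, hw1, ← div_eq_mul_inv, le_div_iff₀ (by positivity)] at hsub
  linarith

/-! ### Linear twists and the zero-free abscissa -/

/-- A vertical shift of the linear twist by `t` multiplies the weights by `n^{-it}`. -/
lemma Ftwist_add_mul_I (f : ℕ → ℂ) (x t : ℝ) (s : ℂ) :
    Ftwist f x (s + t * Complex.I) = wSeries f (fun n => eTwist (x * n) * vertPhase t n) s := by
  unfold Ftwist wSeries
  refine tsum_congr fun n => ?_
  split_ifs with h
  · have hn : (n : ℂ) ≠ 0 := by exact_mod_cast (by omega : n ≠ 0)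
    have hrot : vertPhase t n = ((n : ℂ) ^ (t * Complex.I))⁻¹ := by
      rw [vertPhase, Complex.cpow_def_of_ne_zero hn, ← Complex.exp_neg, Complex.natCast_log.symm]
      congr 1
      push_cast
      ring
    simp only [Complex.cpow_add _ _ hn, hrot]
    field_simp
  · rfl

/-- The real infimum of an unbounded set is `0`, so a nonnegative member bounds the infimum. -/
lemma sigmaStar_le_of_mem {f : ℕ → ℂ} {x σ : ℝ} (hσ : 0 ≤ σ) (h : σ ∈ zeroFreeSet f x) :
    sigmaStar f x ≤ σ := by
  by_cases hb : BddBelow (zeroFreeSet f x)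
  · exact csInf_le hb h
  · rwa [sigmaStar, Real.sInf_of_not_bddBelow hb]

/-- Upper semicontinuity of `σ*` in the twisting parameter: if `σ*(F,λ)` is finite
and `≥ 1`, then for every `ε > 0` there is `δ > 0` such that `|x - λ| < δ` and
`x ∈ (0,1]` imply `σ*(F,x) ≤ σ*(F,λ) + ε`. -/
theorem sigmaStar_upper_semicontinuous
    (f : ℕ → ℂ) (hmul1 : f 1 = 1)
    (hmul : ∀ a b : ℕ, Nat.Coprime a b → f (a * b) = f a * f b)
    (habs : ∀ s : ℂ, 1 < s.re →
      Summable (fun n : ℕ => ‖if 1 ≤ n then f n / (n : ℂ) ^ s else 0‖))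
    (lam : ℝ) (hlam0 : 0 < lam) (hlam1 : lam ≤ 1)
    -- `σ*(F,λ)` is finite ...
    (hne : (zeroFreeSet f lam).Nonempty) (hbd : BddBelow (zeroFreeSet f lam))
    -- ... with `σ*(F,λ) ≥ 1`
    (hge : 1 ≤ sigmaStar f lam) :
    ∀ ε : ℝ, 0 < ε → ∃ δ : ℝ, 0 < δ ∧ ∀ x : ℝ, 0 < x → x ≤ 1 → |x - lam| < δ →
      sigmaStar f x ≤ sigmaStar f lam + ε := by
  intro ε hε
  by_contra! hcon
  set L := sigmaStar f lam with hL
  have hzero : ∀ k : ℕ, ∃ x : ℝ, ∃ s : ℂ, |x - lam| < 1 / ((k : ℝ) + 1) ∧ L + ε < s.re ∧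
      Ftwist f x s = 0 := by
    intro k
    obtain ⟨x, -, -, hx, hlt⟩ := hcon (1 / ((k : ℝ) + 1)) (by positivity)
    have hnot : L + ε ∉ zeroFreeSet f x := fun h =>
      absurd (sigmaStar_le_of_mem (by linarith) h) (not_le.2 hlt)
    simp only [zeroFreeSet, mem_ofPred_eq, not_forall, not_not] at hnot
    obtain ⟨s, hs, hs0⟩ := hnot
    exact ⟨x, s, hx, hs, hs0⟩
  choose x s hx hs hs0 using hzero
  have hfree : ∀ z : ℂ, L < z.re → Ftwist f lam z ≠ 0 := by
    intro z hz
    obtain ⟨σ, hσ, hlt⟩ := exists_lt_of_csInf_lt hne hz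
    exact hσ z hlt
  have hxlim : Tendsto x atTop (𝓝 lam) := by
    rw [tendsto_iff_dist_tendsto_zero]
    exact squeeze_zero (fun _ => dist_nonneg) (fun k => (hx k).le)
      tendsto_one_div_add_atTop_nhds_zero_nat
  have hc : Summable (majorant f (L + ε / 2)) := summable_majorant (by linarith) habs
  obtain ⟨M, hM, hMne⟩ := exists_forall_wSeries_ne_zero hmul1 hc
  have hnorm : ∀ y t : ℝ, ∀ n : ℕ, ‖eTwist (y * n) * vertPhase t n‖ = 1 := fun y t n => by
    rw [norm_mul, norm_eTwist, norm_vertPhase, one_mul]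
  have hser0 : ∀ k, wSeries f (fun n => eTwist (x k * n) * vertPhase (s k).im n)
      ((s k).re : ℂ) = 0 := fun k => by
    rw [← Ftwist_add_mul_I, Complex.re_add_im, hs0]
  have hre : ∀ k, (s k).re ∈ Icc (L + ε) M := fun k => ⟨(hs k).le, by
    by_contra! h
    exact hMne _ (fun n => (hnorm _ _ n).le) (hnorm _ _ 1) _ (by simpa using h.le) (hser0 k)⟩
  -- Extract a common convergent subsequence of the phases and of the real parts.
  have hK : IsCompact ((univ.pi fun _ : ℕ => Metric.sphere (0 : ℂ) 1) ×ˢ Icc (L + ε) M) :=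
    (isCompact_univ_pi fun _ => isCompact_sphere _ _).prod isCompact_Icc
  obtain ⟨⟨χ, σ⟩, hmem, φ, hφ, hlim⟩ := hK.tendsto_subseq
    (x := fun k => (vertPhase (s k).im, (s k).re))
    (fun k => ⟨fun n _ => by simp [norm_vertPhase], hre k⟩)
  have hχ : ∀ n, ‖χ n‖ = 1 := fun n => by simpa using hmem.1 n (mem_univ n)
  have hσ : L + ε ≤ σ := hmem.2.1
  have hlimχ : ∀ n, Tendsto (fun k => vertPhase (s (φ k)).im n) atTop (𝓝 (χ n)) :=
    tendsto_pi_nhds.1 ((continuous_fst.tendsto _).comp hlim)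
  have hlimσ : Tendsto (fun k => (s (φ k)).re) atTop (𝓝 σ) :=
    (continuous_snd.tendsto _).comp hlim
  set w : ℕ → ℂ := fun n => eTwist (lam * n) * χ n with hw_def
  have hw : ∀ n, ‖w n‖ = 1 := fun n => by rw [hw_def]; simp [norm_eTwist, hχ]
  have hdiff := differentiableOn_wSeries (fun n => (hw n).le) hc
  have hopen : IsOpen {z : ℂ | L + ε / 2 < z.re} :=
    isOpen_lt continuous_const Complex.continuous_re
  have hσU : (σ : ℂ) ∈ {z : ℂ | L + ε / 2 < z.re} := by
    simp only [mem_ofPred_eq, Complex.ofReal_re]; linarith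
  have hGσ : wSeries f w σ = 0 := by
    have hU := tendstoUniformlyOn_wSeries
      (W := fun k n => eTwist (x (φ k) * n) * vertPhase (s (φ k)).im n) (w := w)
      (fun k n => (hnorm _ _ n).le) (fun n => (hw n).le)
      (fun n => ((continuous_eTwist.tendsto _).comp
        ((hxlim.comp hφ.tendsto_atTop).mul_const (n : ℝ))).mul (hlimχ n)) hc
    have hlim' : Tendsto (fun k => ((s (φ k)).re : ℂ)) atTop
        (𝓝[{z : ℂ | L + ε / 2 ≤ z.re}] (σ : ℂ)) := by
      refine tendsto_nhdsWithin_iff.2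
        ⟨(Complex.continuous_ofReal.tendsto _).comp hlimσ, Eventually.of_forall fun k => ?_⟩
      simp only [mem_ofPred_eq, Complex.ofReal_re]
      linarith [hs (φ k)]
    have := hU.tendsto_comp
      ((hdiff.continuousOn.continuousAt (hopen.mem_nhds hσU)).continuousWithinAt) hlim'
    simp only [hser0] at this
    exact tendsto_nhds_unique this tendsto_const_nhds |>.symm ▸ rfl
  have hev := hurwitz_eventually_exists_zero hopen
    (convex_halfSpace_re_gt _).isPreconnected
    (F := fun k => wSeries f (fun n => eTwist (lam * n) * vertPhase (s (φ k)).im n))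
    (fun k => differentiableOn_wSeries (fun n => (hnorm _ _ n).le) hc) hdiff
    ((tendstoUniformlyOn_wSeries (fun k n => (hnorm _ _ n).le) (fun n => (hw n).le)
      (fun n => (hlimχ n).const_mul _) hc).mono fun z (hz : L + ε / 2 < z.re) => hz.le)
    hσU hGσ (z₁ := ((M + 1 : ℝ) : ℂ))
    (by simp only [mem_ofPred_eq, Complex.ofReal_re]; linarith)
    (hMne w (fun n => (hw n).le) (hw 1) _ (by simp))
  obtain ⟨k, z, hz, hz0⟩ := hev.exists
  rw [← Ftwist_add_mul_I] at hz0
  have hz' : L + ε / 2 < z.re := hz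
  exact hfree _ (by simp; linarith) hz0
end
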